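/- arXiv:math/0306218 — 4 statements merged into one kernel-verified Lean document; each statement's English description precedes it below -/
import Mathlib

section
/- Assume Q_k = k + O(1) and Q_k > (k − 1/2)·θ/π for all k. Let P be a sequence of positive reals with φ_j(P,P) = Q_j for all j and ln P_k = α_θ·ln k + o(1). Fix 0 < ε < 2, and let (X^{(n)})_{n≥0} be a sequence of sequences of positive reals with ln X^{(0)}_k = ln P_k + O(k^{−ε}) and φ_j(X^{(n)}, X^{(n+1)}) = Q_j for all j ≥ 1 and n ≥ 0. Then there exist C > 0 and λ ∈ (0,1) such that sup_{k≥1} k^{ε}·|ln X^{(n)}_k − ln P_k| ≤ C·λ^n for all n ≥ 0. -/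
open Filter Asymptotics MeasureTheory
open scoped ENNReal Topology

/-- `Theta θ E' E` is the argument of the complex number `E' + E·e^{iθ}`;
for `0 < θ < π` and `E', E > 0` it lies in `(0, θ)` and equals
`arctan (sin θ / (E'/E + cos θ))` with the branch taken in `(0, θ)`. -/
noncomputable def Theta (θ E' E : ℝ) : ℝ :=
  Complex.arg ((E' : ℂ) + (E : ℂ) * Complex.exp (θ * Complex.I))

/-- `phi θ X Y j = (1/π) · ∑_{k ≥ 1} Θ(X_k, Y_j) ∈ (0, ∞]`, where sequences are
indexed by `ℕ` and only the values at indices `k ≥ 1` are used. -/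
noncomputable def phi (θ : ℝ) (X Y : ℕ → ℝ) (j : ℕ) : ℝ≥0∞ :=
  ENNReal.ofReal (1 / Real.pi) * ∑' k : ℕ, ENNReal.ofReal (Theta θ (X (k + 1)) (Y j))

/-- `Pker θ E E' = E·E' / (E² + 2·cos θ·E·E' + E'²)`. -/
noncomputable def Pker (θ E E' : ℝ) : ℝ :=
  E * E' / (E ^ 2 + 2 * Real.cos θ * E * E' + E' ^ 2)

/-- The drift `D_α = (1/π) ∫_0^∞ Θ(s^α, 1) ds`. -/
noncomputable def Drift (θ α : ℝ) : ℝ :=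
  (1 / Real.pi) * ∫ s in Set.Ioi (0 : ℝ), Theta θ (s ^ α) 1

/-- `S_ε = ∫_0^∞ s^{-ε} / (s^{α_θ} + 2 cos θ + s^{-α_θ}) ds` with `α_θ = 1 + θ/π`. -/
noncomputable def Sfun (θ ε : ℝ) : ℝ :=
  ∫ s in Set.Ioi (0 : ℝ), s ^ (-ε) /
    (s ^ (1 + θ / Real.pi) + 2 * Real.cos θ + s ^ (-(1 + θ / Real.pi)))

/-!
In logarithmic coordinates `x = log X`, `p = log P` the equations read
`∑ₖ g (x' j - x k) = ∑ₖ g (p j - p k)`, where `g` is increasing and its derivative `w` is even,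
positive, exponentially decaying and log-Lipschitz with rate `B`. If `|x k - p k| ≤ δ k` for all
`k`, then by the mean value theorem and the log-Lipschitz bound `|x' j - p j| ≤ b` as soon as
`∑ₖ w (p j - p k) * (b - δ k) * exp (-B * (b - δ k)) ≥ 0`.

Take `δ = T * h` with the barrier `h k = min 1 ((N / (k + 1)) ^ ε)`. For `j + 1 ≥ N` and
`b = T * h j` the sum is at least `b` times the difference of the sums
`∑ₖ w (p j - p k) * r ^ (-a)`, `r = (k + 1) / (j + 1)`, at `a = ε * B * T` and at
`a = ε + ε * B * T`. Since `p k - α * log (k + 1)` converges, these are asymptotic to `j + 1` times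
the moments `∫₀^∞ w (α log s) s ^ (-a) ds`, which are symmetric under `a ↦ 2 - a` (substitute
`s ↦ 1 / s`) and strictly convex in `a`. The difference is therefore positive for large `j` when the
two exponents have sum less than `2`, that is, when `ε * (1 + 2 * B * T) < 2`. This leaves room to
replace `b` by `(1 - μ) * T * h j` with `μ > 0` independent of `j`, hence geometric decay.
-/

section Damping

open Real

/-- The displacement `d` damped by the factor `exp (-A * d)`. If `B` bounds the logarithmic
derivative of a positive kernel `w` with primitive `g`, then `w u * damped B x` is a lower bound for
the increment `g (u + x) - g u` whatever the sign of `x`. -/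
noncomputable def damped (A d : ℝ) : ℝ :=
  d * exp (-(A * d))

lemma damped_nonneg (A : ℝ) {d : ℝ} (hd : 0 ≤ d) : 0 ≤ damped A d :=
  mul_nonneg hd (exp_pos _).le

lemma damped_mul (B T d : ℝ) : damped B (T * d) = T * damped (B * T) d := by
  simp only [damped, mul_assoc]

lemma damped_antitone_left (d : ℝ) : Antitone fun A => damped A d := by
  intro A A' hA
  rcases le_total 0 d with hd | hd
  · exact mul_le_mul_of_nonneg_left (exp_le_exp.2 (by nlinarith)) hd
  · exact mul_le_mul_of_nonpos_left (exp_le_exp.2 (by nlinarith)) hd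

lemma hasDerivAt_damped (A d : ℝ) :
    HasDerivAt (damped A) ((1 - A * d) * exp (-(A * d))) d := by
  have hexp : HasDerivAt (fun t => exp (-(A * t))) (exp (-(A * d)) * -(A * 1)) d :=
    (((hasDerivAt_id d).const_mul A).neg).exp
  exact ((hasDerivAt_id d).mul hexp).congr_deriv (by simp only [id]; ring)

lemma continuous_damped (A : ℝ) : Continuous (damped A) := by
  unfold damped
  fun_prop

lemma exp_neg_mul_le_exp {A d T : ℝ} (hA : 0 ≤ A) (hd : |d| ≤ T) :
    exp (-(A * d)) ≤ exp (A * T) :=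
  exp_le_exp.2 (by nlinarith [neg_abs_le d])

lemma abs_damped_le {A d T : ℝ} (hA : 0 ≤ A) (hd : |d| ≤ T) : |damped A d| ≤ T * exp (A * T) := by
  rw [damped, abs_mul, abs_exp]
  exact mul_le_mul hd (exp_neg_mul_le_exp hA hd) (exp_pos _).le ((abs_nonneg d).trans hd)

lemma damped_sub_le_damped {A d η : ℝ} (hA : 0 ≤ A) (hη : 0 ≤ η) (hd : |d| ≤ 1)
    (hdη : |d - η| ≤ 1) :
    damped A d - (1 + A) * exp A * η ≤ damped A (d - η) := by
  have hderiv : ∀ t ∈ interior (Set.Icc (-1 : ℝ) 1), deriv (damped A) t ≤ (1 + A) * exp A := by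
    intro t ht
    have ht' : t ∈ Set.Icc (-1 : ℝ) 1 := interior_subset ht
    rw [(hasDerivAt_damped A t).deriv]
    refine mul_le_mul (by nlinarith [ht'.1]) ?_ (exp_pos _).le (by positivity)
    simpa only [mul_one] using exp_neg_mul_le_exp hA (abs_le.2 ht')
  have hmean := (convex_Icc (-1 : ℝ) 1).image_sub_le_mul_sub_of_deriv_le
    (continuous_damped A).continuousOn
    (fun t _ => (hasDerivAt_damped A t).differentiableAt.differentiableWithinAt) hderiv
    (d - η) (abs_le.1 hdη) d (abs_le.1 hd) (by linarith)
  rw [sub_sub_cancel] at hmean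
  linarith

lemma sub_exp_mul_le_damped {B T b h : ℝ} (hB : 0 ≤ B) (hb : 0 ≤ b) (hbT : b ≤ T) (hh : 0 ≤ h)
    (hhT : h ≤ T) :
    exp (-(B * T)) * b - exp (B * T) * h ≤ damped B (b - h) := by
  have hBT : 0 ≤ B * T := mul_nonneg hB (hb.trans hbT)
  have hexp : exp (-(B * T)) ≤ exp (B * T) := exp_le_exp.2 (by linarith)
  rcases le_total h b with hle | hle
  · calc exp (-(B * T)) * b - exp (B * T) * h ≤ (b - h) * exp (-(B * T)) := by nlinarith
      _ ≤ damped B (b - h) :=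
        mul_le_mul_of_nonneg_left (exp_le_exp.2 (by nlinarith)) (sub_nonneg.2 hle)
  · calc exp (-(B * T)) * b - exp (B * T) * h ≤ (b - h) * exp (B * T) := by nlinarith
      _ ≤ damped B (b - h) :=
        mul_le_mul_of_nonpos_left (exp_le_exp.2 (by nlinarith)) (sub_nonpos.2 hle)

lemma mul_damped_sub_le_damped {B T T' h h' μ : ℝ} (hB : 0 ≤ B) (hT' : 0 ≤ T') (hT : T' ≤ T)
    (hh : 0 ≤ h) (hh1 : h ≤ 1) (hh' : 0 ≤ h') (hh1' : h' ≤ 1) (hμ : 0 ≤ μ) (hμ1 : μ ≤ 1) :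
    T' * (damped (B * T) (h - h') - (1 + B * T) * exp (B * T) * (μ * h)) ≤
      damped B ((1 - μ) * T' * h - T' * h') := by
  have hμh : μ * h ≤ h := mul_le_of_le_one_left hh hμ1
  have hμh0 : 0 ≤ μ * h := mul_nonneg hμ hh
  calc T' * (damped (B * T) (h - h') - (1 + B * T) * exp (B * T) * (μ * h))
      ≤ T' * damped (B * T) (h - h' - μ * h) := by
        refine mul_le_mul_of_nonneg_left (damped_sub_le_damped (mul_nonneg hB (hT'.trans hT))
          hμh0 ?_ ?_) hT' <;> rw [abs_le] <;> constructor <;> linarith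
    _ ≤ T' * damped (B * T') (h - h' - μ * h) :=
        mul_le_mul_of_nonneg_left
          (damped_antitone_left _ (mul_le_mul_of_nonneg_left hT hB)) hT'
    _ = damped B ((1 - μ) * T' * h - T' * h') := by rw [← damped_mul]; ring_nf

end Damping

section Comparison

open Real

/-- A positive even kernel `w` whose logarithm is Lipschitz with constant `B` and which decays at
least as fast as `exp (-|u|)`. -/
structure IsLogLipschitzKernel (w : ℝ → ℝ) (B : ℝ) : Prop where
  rate_pos : 0 < B
  pos : ∀ u, 0 < w u
  even : ∀ u, w (-u) = w u
  le_exp_mul : ∀ u x, w (u + x) ≤ exp (B * |x|) * w u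
  exists_le_exp : ∃ D, ∀ u, w u ≤ D * exp (-|u|)

namespace IsLogLipschitzKernel

variable {w g : ℝ → ℝ} {B : ℝ}

lemma exp_neg_mul_le (hw : IsLogLipschitzKernel w B) (u x : ℝ) :
    exp (-(B * |x|)) * w u ≤ w (u + x) := by
  have h := hw.le_exp_mul (u + x) (-x)
  rw [add_neg_cancel_right, abs_neg] at h
  rw [exp_neg]
  exact (inv_mul_le_iff₀ (exp_pos _)).2 h

lemma continuous (hw : IsLogLipschitzKernel w B) : Continuous w := by
  refine continuous_iff_continuousAt.2 fun u => ?_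
  have hlow : Tendsto (fun v => exp (-(B * |v - u|)) * w u) (𝓝 u) (𝓝 (w u)) := by
    have : Continuous fun v => exp (-(B * |v - u|)) * w u := by fun_prop
    simpa using this.tendsto u
  have hhigh : Tendsto (fun v => exp (B * |v - u|) * w u) (𝓝 u) (𝓝 (w u)) := by
    have : Continuous fun v => exp (B * |v - u|) * w u := by fun_prop
    simpa using this.tendsto u
  refine tendsto_of_tendsto_of_tendsto_of_le_of_le hlow hhigh (fun v => ?_) (fun v => ?_)
  · simpa using hw.exp_neg_mul_le u (v - u)
  · simpa using hw.le_exp_mul u (v - u)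

lemma strictMono_of_hasDerivAt (hw : IsLogLipschitzKernel w B)
    (hg : ∀ u, HasDerivAt g (w u) u) : StrictMono g :=
  strictMono_of_deriv_pos fun u => by rw [(hg u).deriv]; exact hw.pos u

lemma add_mul_damped_le (hw : IsLogLipschitzKernel w B) (hg : ∀ u, HasDerivAt g (w u) u)
    (u x : ℝ) : g u + w u * damped B x ≤ g (u + x) := by
  have hcont : Continuous g := continuous_iff_continuousAt.2 fun t => (hg t).continuousAt
  have hdiff : Differentiable ℝ g := fun t => (hg t).differentiableAt
  have hB := hw.rate_pos
  have hu := hw.pos u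
  rcases le_total 0 x with hx | hx
  · have hmean := (convex_Icc u (u + x)).mul_sub_le_image_sub_of_le_deriv hcont.continuousOn
      hdiff.differentiableOn (C := exp (-(B * x)) * w u) (fun t ht => by
        have ht' := interior_subset ht
        rw [(hg t).deriv]
        refine le_trans ?_ (by simpa using hw.exp_neg_mul_le u (t - u))
        gcongr
        rw [abs_le]; constructor <;> linarith [ht'.1, ht'.2])
      u (Set.left_mem_Icc.2 (by linarith)) (u + x) (Set.right_mem_Icc.2 (by linarith))
      (by linarith)
    rw [damped]
    linarith
  · have hmean := (convex_Icc (u + x) u).image_sub_le_mul_sub_of_deriv_le hcont.continuousOn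
      hdiff.differentiableOn (C := exp (-(B * x)) * w u) (fun t ht => by
        have ht' := interior_subset ht
        rw [(hg t).deriv]
        refine le_trans (by simpa using hw.le_exp_mul u (t - u)) ?_
        gcongr
        rw [← mul_neg]
        gcongr
        rw [abs_le]; constructor <;> linarith [ht'.1, ht'.2])
      (u + x) (Set.left_mem_Icc.2 (by linarith)) u (Set.right_mem_Icc.2 (by linarith))
      (by linarith)
    rw [damped]
    linarith

variable {ι : Type*} [Nonempty ι] {p x δ : ι → ℝ} {a b y s t : ℝ}

lemma le_add_of_hasSum (hw : IsLogLipschitzKernel w B) (hg : ∀ u, HasDerivAt g (w u) u)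
    (hp : HasSum (fun k => g (a - p k)) s) (hx : HasSum (fun k => g (y - x k)) s)
    (hxp : ∀ k, x k - p k ≤ δ k)
    (hδ : HasSum (fun k => w (a - p k) * damped B (b - δ k)) t) (ht : 0 ≤ t) :
    y ≤ a + b := by
  by_contra! hlt
  have hterm : ∀ k, g (a - p k) + w (a - p k) * damped B (b - δ k) < g (y - x k) := fun k =>
    (hw.add_mul_damped_le hg _ _).trans_lt
      (hw.strictMono_of_hasDerivAt hg (by linarith [hxp k]))
  have hsum : s + t < s :=
    hasSum_lt (fun k => (hterm k).le) (hterm (Classical.arbitrary ι)) (hp.add hδ) hx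
  linarith

lemma abs_sub_le_of_hasSum (hw : IsLogLipschitzKernel w B) (hg : ∀ u, HasDerivAt g (w u) u)
    (hp : HasSum (fun k => g (a - p k)) s) (hx : HasSum (fun k => g (y - x k)) s)
    (hxp : ∀ k, |x k - p k| ≤ δ k)
    (hδ : HasSum (fun k => w (a - p k) * damped B (b - δ k)) t) (ht : 0 ≤ t) :
    |y - a| ≤ b := by
  have hupper : y ≤ a + b :=
    hw.le_add_of_hasSum hg hp hx (fun k => (le_abs_self _).trans (hxp k)) hδ ht
  -- The lower bound is the upper bound for the reflected primitive `u ↦ -g (-u)`.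
  have hg' : ∀ u, HasDerivAt (fun v => -g (-v)) (w u) u := fun u =>
    ((hg (-u)).comp u (hasDerivAt_neg u)).neg.congr_deriv (by rw [hw.even]; ring)
  have hlower : -y ≤ -a + b := by
    refine hw.le_add_of_hasSum hg' (p := fun k => -p k) (x := fun k => -x k) (δ := δ) (s := -s)
      (t := t) ?_ ?_ (fun k => ?_) ?_ ht
    · simpa only [neg_sub, neg_sub_neg] using hp.neg
    · simpa only [neg_sub, neg_sub_neg] using hx.neg
    · linarith [neg_abs_le (x k - p k), hxp k]
    · refine hδ.congr_fun fun k => ?_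
      rw [neg_sub_neg, ← neg_sub, hw.even]
  rw [abs_le]
  constructor <;> linarith

end IsLogLipschitzKernel

end Comparison

section RiemannSum

open Real

lemma map_floor_restrict_Ioi :
    (volume.restrict (Set.Ioi (0 : ℝ))).map Nat.floor = Measure.count := by
  refine Measure.ext_of_singleton fun k => ?_
  have hpre : Nat.floor ⁻¹' {k} ∩ Set.Ici (0 : ℝ) = Set.Ico (k : ℝ) (k + 1) := by
    ext s
    simp only [Set.mem_inter_iff, Set.mem_preimage, Set.mem_singleton_iff, Set.mem_Ici,
      Set.mem_Ico]
    exact ⟨fun h => (Nat.floor_eq_iff h.2).1 h.1,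
      fun h => have hs := (Nat.cast_nonneg k).trans h.1; ⟨(Nat.floor_eq_iff hs).2 h, hs⟩⟩
  rw [Measure.map_apply Nat.measurable_floor (measurableSet_singleton k),
    restrict_Ioi_eq_restrict_Ici, Measure.restrict_apply (Nat.measurable_floor
      (measurableSet_singleton k)), hpre]
  simp

lemma integrableOn_floor_iff_summable {F : ℕ → ℝ} :
    IntegrableOn (fun s : ℝ => F ⌊s⌋₊) (Set.Ioi 0) ↔ Summable F := by
  rw [← summable_norm_iff, ← integrable_count_iff, ← map_floor_restrict_Ioi,
    integrable_map_measure (by fun_prop) Nat.measurable_floor.aemeasurable]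
  rfl

lemma setIntegral_floor_eq_tsum {F : ℕ → ℝ} (hF : Summable F) :
    ∫ s in Set.Ioi (0 : ℝ), F ⌊s⌋₊ = ∑' k, F k := by
  rw [← integral_map (f := F) Nat.measurable_floor.aemeasurable (by fun_prop),
    map_floor_restrict_Ioi,
    integral_countable (integrable_count_iff.2 hF.norm)]
  simp

variable {F : ℕ → ℝ} {e : ℝ → ℝ} {n : ℝ}

lemma abs_floor_mul_le (he : AntitoneOn e (Set.Ioi 0)) (hn : 0 < n)
    (hF : ∀ k : ℕ, |F k| ≤ e ((k + 1) / n)) {s : ℝ} (hs : 0 < s) : |F ⌊n * s⌋₊| ≤ e s :=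
  (hF _).trans <| he hs (Set.mem_Ioi.2 (by positivity)) <|
    (le_div_iff₀ hn).2 (by linarith [Nat.lt_floor_add_one (n * s)])

lemma integrableOn_floor_mul (he : AntitoneOn e (Set.Ioi 0)) (he' : IntegrableOn e (Set.Ioi 0))
    (hn : 0 < n) (hF : ∀ k : ℕ, |F k| ≤ e ((k + 1) / n)) :
    IntegrableOn (fun s : ℝ => F ⌊n * s⌋₊) (Set.Ioi 0) :=
  he'.mono' ((measurable_of_countable F).comp (Nat.measurable_floor.comp
    (measurable_const_mul n))).aestronglyMeasurable <|
    (ae_restrict_mem measurableSet_Ioi).mono fun _ hs => abs_floor_mul_le he hn hF hs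

lemma summable_of_abs_le_envelope (he : AntitoneOn e (Set.Ioi 0))
    (he' : IntegrableOn e (Set.Ioi 0)) (hn : 0 < n) (hF : ∀ k : ℕ, |F k| ≤ e ((k + 1) / n)) :
    Summable F := by
  have hint := integrableOn_floor_mul he he' hn hF
  rwa [integrableOn_Ioi_comp_mul_left_iff (fun s => F ⌊s⌋₊) 0 hn, mul_zero,
    integrableOn_floor_iff_summable] at hint

lemma setIntegral_floor_mul (hF : Summable F) (hn : 0 < n) :
    ∫ s in Set.Ioi (0 : ℝ), F ⌊n * s⌋₊ = (∑' k, F k) / n := by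
  rw [integral_comp_mul_left_Ioi (fun s => F ⌊s⌋₊) 0 hn, mul_zero, setIntegral_floor_eq_tsum hF,
    smul_eq_mul, inv_mul_eq_div]

lemma tendsto_tsum_div_of_abs_le_envelope {F : ℕ → ℕ → ℝ} {f : ℝ → ℝ}
    (he : AntitoneOn e (Set.Ioi 0)) (he' : IntegrableOn e (Set.Ioi 0))
    (hF : ∀ j k : ℕ, |F j k| ≤ e ((k + 1) / (j + 1)))
    (hlim : ∀ s : ℝ, 0 < s → Tendsto (fun j : ℕ => F j ⌊((j : ℝ) + 1) * s⌋₊) atTop (𝓝 (f s))) :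
    Tendsto (fun j : ℕ => (∑' k, F j k) / ((j : ℝ) + 1)) atTop (𝓝 (∫ s in Set.Ioi 0, f s)) := by
  have hn : ∀ j : ℕ, (0 : ℝ) < j + 1 := fun j => by positivity
  have hsum : ∀ j, ∫ s in Set.Ioi (0 : ℝ), F j ⌊((j : ℝ) + 1) * s⌋₊ = (∑' k, F j k) / (j + 1) :=
    fun j => setIntegral_floor_mul (summable_of_abs_le_envelope he he' (hn j) (hF j)) (hn j)
  simp only [← hsum]
  exact tendsto_integral_of_dominated_convergence e
    (fun j => (integrableOn_floor_mul he he' (hn j) (hF j)).aestronglyMeasurable) he'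
    (fun j => (ae_restrict_mem measurableSet_Ioi).mono fun _ hs =>
      abs_floor_mul_le he (hn j) (hF j) hs)
    ((ae_restrict_mem measurableSet_Ioi).mono fun s hs => hlim s hs)

/-- The power envelope `min (s ^ (q - 1)) (s ^ (-q - 1))`, decreasing and integrable on `(0, ∞)` for
`0 < q < 1`. -/
noncomputable def powerEnvelope (q s : ℝ) : ℝ :=
  min (s ^ (q - 1)) (s ^ (-q - 1))

lemma powerEnvelope_nonneg (q : ℝ) {s : ℝ} (hs : 0 ≤ s) : 0 ≤ powerEnvelope q s :=
  le_min (rpow_nonneg hs _) (rpow_nonneg hs _)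

lemma antitoneOn_powerEnvelope {q : ℝ} (hq : 0 ≤ q) (hq1 : q ≤ 1) :
    AntitoneOn (powerEnvelope q) (Set.Ioi 0) := fun _ hs _ _ hst =>
  min_le_min (rpow_le_rpow_of_nonpos hs hst (by linarith))
    (rpow_le_rpow_of_nonpos hs hst (by linarith))

lemma integrableOn_powerEnvelope {q : ℝ} (hq : 0 < q) :
    IntegrableOn (powerEnvelope q) (Set.Ioi 0) := by
  have hmeas : Measurable (powerEnvelope q) := by unfold powerEnvelope; fun_prop
  have hsmall : IntegrableOn (fun s : ℝ => s ^ (q - 1)) (Set.Ioc 0 1) := by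
    rw [← intervalIntegrable_iff_integrableOn_Ioc_of_le zero_le_one]
    exact intervalIntegral.intervalIntegrable_rpow' (by linarith)
  have hlarge : IntegrableOn (fun s : ℝ => s ^ (-q - 1)) (Set.Ioi 1) :=
    integrableOn_Ioi_rpow_of_lt (by linarith) one_pos
  rw [← Set.Ioc_union_Ioi_eq_Ioi zero_le_one]
  refine IntegrableOn.union (hsmall.mono' hmeas.aestronglyMeasurable ?_)
    (hlarge.mono' hmeas.aestronglyMeasurable ?_)
  · filter_upwards [ae_restrict_mem measurableSet_Ioc] with s hs
    rw [norm_of_nonneg (powerEnvelope_nonneg q hs.1.le)]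
    exact min_le_left _ _
  · filter_upwards [ae_restrict_mem measurableSet_Ioi] with s hs
    rw [norm_of_nonneg (powerEnvelope_nonneg q (zero_le_one.trans (Set.mem_Ioi.1 hs).le))]
    exact min_le_right _ _

lemma exp_neg_mul_rpow_le_powerEnvelope {α a q r : ℝ} (hr : 0 < r) (hq : 0 ≤ q)
    (hqa : q ≤ α - a + 1) (hqa' : q ≤ α + a - 1) :
    exp (-(α * |log r|)) * r ^ (-a) ≤ powerEnvelope q r := by
  simp only [powerEnvelope, rpow_def_of_pos hr, ← exp_add]
  refine le_min (exp_le_exp.2 ?_) (exp_le_exp.2 ?_) <;>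
    rcases abs_cases (log r) with ⟨h, h0⟩ | ⟨h, h0⟩ <;> rw [h] <;> nlinarith

end RiemannSum

section Moments

open Real

/-- The moment `∫₀^∞ w (α log s) s ^ (-a) ds`. For the kernel of the phase function and `α = α_θ` it
is `sin θ * Sfun θ a`. -/
noncomputable def kernelMoment (w : ℝ → ℝ) (α a : ℝ) : ℝ :=
  ∫ s in Set.Ioi (0 : ℝ), w (α * log s) * s ^ (-a)

variable {w : ℝ → ℝ} {B α a b : ℝ}

lemma exists_mem_Ioo_le_of_lt (ha : 1 - α < a) (ha' : a < 1 + α) :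
    ∃ q : ℝ, 0 < q ∧ q < 1 ∧ q ≤ α - a + 1 ∧ q ≤ α + a - 1 := by
  refine ⟨min (1 / 2) (min (α - a + 1) (α + a - 1)), ?_, ?_, ?_, ?_⟩
  · exact lt_min (by norm_num) (lt_min (by linarith) (by linarith))
  · exact (min_le_left _ _).trans_lt (by norm_num)
  · exact (min_le_right _ _).trans (min_le_left _ _)
  · exact (min_le_right _ _).trans (min_le_right _ _)

lemma integral_lt_integral_of_ae_lt {X : Type*} [MeasurableSpace X] {μ : Measure X} [NeZero μ]
    {f g : X → ℝ} (hf : Integrable f μ) (hg : Integrable g μ) (hfg : ∀ᵐ x ∂μ, f x < g x) :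
    ∫ x, f x ∂μ < ∫ x, g x ∂μ := by
  have hle : f ≤ᵐ[μ] g := hfg.mono fun _ h => h.le
  refine (integral_mono_ae hf hg hle).lt_of_ne fun heq => ?_
  obtain ⟨x, hlt, hx⟩ := (hfg.and ((integral_eq_iff_of_ae_le hf hg hle).1 heq)).exists
  exact hlt.ne hx

instance neZero_restrict_Ioi_zero : NeZero (volume.restrict (Set.Ioi (0 : ℝ))) :=
  ⟨by simp [Measure.restrict_eq_zero]⟩

namespace IsLogLipschitzKernel

lemma integrableOn_moment (hw : IsLogLipschitzKernel w B) (ha : 1 - α < a)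
    (ha' : a < 1 + α) : IntegrableOn (fun s => w (α * log s) * s ^ (-a)) (Set.Ioi 0) := by
  obtain ⟨q, hq, -, hqa, hqa'⟩ := exists_mem_Ioo_le_of_lt ha ha'
  obtain ⟨D, hD⟩ := hw.exists_le_exp
  have hmeas : Measurable fun s : ℝ => w (α * log s) * s ^ (-a) :=
    (hw.continuous.measurable.comp (measurable_log.const_mul α)).mul (by fun_prop)
  have hD0 : 0 ≤ D := by simpa using (hw.pos 0).le.trans (hD 0)
  refine ((integrableOn_powerEnvelope hq).const_mul D).mono' hmeas.aestronglyMeasurable ?_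
  filter_upwards [ae_restrict_mem measurableSet_Ioi] with s hs
  have hs0 : 0 ≤ s ^ (-a) := rpow_nonneg (Set.mem_Ioi.1 hs).le _
  rw [norm_of_nonneg (mul_nonneg (hw.pos _).le hs0)]
  calc w (α * log s) * s ^ (-a) ≤ D * exp (-(α * |log s|)) * s ^ (-a) := by
        refine mul_le_mul_of_nonneg_right ((hD _).trans_eq ?_) hs0
        rw [abs_mul, abs_of_pos (by linarith)]
    _ ≤ D * powerEnvelope q s := by
        rw [mul_assoc]
        exact mul_le_mul_of_nonneg_left (exp_neg_mul_rpow_le_powerEnvelope hs hq.le hqa hqa') hD0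

lemma kernelMoment_pos (hw : IsLogLipschitzKernel w B) (ha : 1 - α < a)
    (ha' : a < 1 + α) : 0 < kernelMoment w α a := by
  have h := integral_lt_integral_of_ae_lt (integrable_zero _ ℝ _) (hw.integrableOn_moment ha ha')
    ((ae_restrict_mem measurableSet_Ioi).mono fun s hs =>
      mul_pos (hw.pos _) (rpow_pos_of_pos hs _))
  simpa only [kernelMoment, Pi.zero_apply, integral_zero] using h

lemma kernelMoment_two_sub (hw : IsLogLipschitzKernel w B) (α a : ℝ) :
    kernelMoment w α (2 - a) = kernelMoment w α a := by
  rw [kernelMoment, kernelMoment,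
    ← integral_comp_rpow_Ioi (fun s => w (α * log s) * s ^ (-a)) (neg_ne_zero.2 one_ne_zero)]
  refine setIntegral_congr_fun measurableSet_Ioi fun s (hs : 0 < s) => ?_
  simp only [abs_neg, abs_one, one_mul, smul_eq_mul]
  rw [log_rpow hs, ← rpow_mul hs.le, mul_left_comm, ← rpow_add hs, neg_one_mul, mul_neg, hw.even]
  ring_nf

end IsLogLipschitzKernel

lemma rpow_neg_add_rpow_sub_two {s : ℝ} (hs : 0 < s) (a b : ℝ) :
    s ^ (-a) + s ^ (-(2 - a)) - (s ^ (-b) + s ^ (-(2 - b))) =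
      s ^ (-a) * ((1 - s ^ (a - b)) * (1 - s ^ (a + b - 2))) := by
  have h₁ : s ^ (-b) = s ^ (-a) * s ^ (a - b) := by rw [← rpow_add hs]; ring_nf
  have h₂ : s ^ (-(2 - b)) = s ^ (-a) * s ^ (a + b - 2) := by rw [← rpow_add hs]; ring_nf
  have h₃ : s ^ (-(2 - a)) = s ^ (-a) * s ^ (a - b) * s ^ (a + b - 2) := by
    rw [← rpow_add hs, ← rpow_add hs]; ring_nf
  rw [h₁, h₂, h₃]
  ring

lemma one_sub_rpow_mul_one_sub_rpow_pos {s x y : ℝ} (hs : 0 < s) (hs1 : s ≠ 1) (hx : x < 0)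
    (hy : y < 0) : 0 < (1 - s ^ x) * (1 - s ^ y) := by
  rcases hs1.lt_or_gt with hlt | hgt
  · exact mul_pos_of_neg_of_neg (sub_neg.2 (one_lt_rpow_of_pos_of_lt_one_of_neg hs hlt hx))
      (sub_neg.2 (one_lt_rpow_of_pos_of_lt_one_of_neg hs hlt hy))
  · exact mul_pos (sub_pos.2 (rpow_lt_one_of_one_lt_of_neg hgt hx))
      (sub_pos.2 (rpow_lt_one_of_one_lt_of_neg hgt hy))

namespace IsLogLipschitzKernel

-- By the symmetry `a ↦ 2 - a`, twice the difference of the moments is the integral of the kernel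
-- against `s ^ (-a) + s ^ (a - 2) - s ^ (-b) - s ^ (b - 2)`, which is positive off `s = 1`.
lemma kernelMoment_lt (hw : IsLogLipschitzKernel w B) (ha : 1 - α < a) (hab : a < b)
    (hab2 : a + b < 2) : kernelMoment w α b < kernelMoment w α a := by
  have hia := hw.integrableOn_moment ha (by linarith)
  have hia' := hw.integrableOn_moment (α := α) (a := 2 - a) (by linarith) (by linarith)
  have hib := hw.integrableOn_moment (α := α) (a := b) (by linarith) (by linarith)
  have hib' := hw.integrableOn_moment (α := α) (a := 2 - b) (by linarith) (by linarith)
  have hne : ∀ᵐ s ∂volume.restrict (Set.Ioi (0 : ℝ)), s ≠ 1 :=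
    ae_restrict_of_ae (compl_mem_ae_iff.2 (measure_singleton 1))
  have hlt := integral_lt_integral_of_ae_lt (hib.add hib') (hia.add hia')
    (((ae_restrict_mem measurableSet_Ioi).and hne).mono fun s ⟨hs, hs1⟩ => by
      simp only [Pi.add_apply, ← mul_add]
      refine mul_lt_mul_of_pos_left (sub_pos.1 ?_) (hw.pos _)
      rw [rpow_neg_add_rpow_sub_two hs]
      exact mul_pos (rpow_pos_of_pos hs _)
        (one_sub_rpow_mul_one_sub_rpow_pos hs hs1 (by linarith) (by linarith)))
  simp only [Pi.add_apply] at hlt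
  rw [integral_add hib hib', integral_add hia hia', ← kernelMoment, ← kernelMoment,
    ← kernelMoment, ← kernelMoment, hw.kernelMoment_two_sub, hw.kernelMoment_two_sub] at hlt
  linarith

end IsLogLipschitzKernel

end Moments

section KernelSums

open Real

/-- The position of the grid point `k` relative to the grid point `j`, where the grid is
`1, 2, 3, …` indexed from zero. -/
noncomputable def gridRatio (j k : ℕ) : ℝ :=
  ((k : ℝ) + 1) / ((j : ℝ) + 1)

lemma gridRatio_pos (j k : ℕ) : 0 < gridRatio j k := by
  unfold gridRatio
  positivity

lemma log_gridRatio (j k : ℕ) : log (gridRatio j k) = log (k + 1) - log (j + 1) :=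
  log_div (by positivity) (by positivity)

lemma tendsto_floor_mul_atTop {s : ℝ} (hs : 0 < s) :
    Tendsto (fun j : ℕ => ⌊((j : ℝ) + 1) * s⌋₊) atTop atTop :=
  tendsto_nat_floor_atTop.comp
    ((tendsto_natCast_atTop_atTop.atTop_add tendsto_const_nhds).atTop_mul_const hs)

lemma tendsto_gridRatio_floor {s : ℝ} (hs : 0 < s) :
    Tendsto (fun j : ℕ => gridRatio j ⌊((j : ℝ) + 1) * s⌋₊) atTop (𝓝 s) := by
  have hn : Tendsto (fun j : ℕ => (j : ℝ) + 1) atTop atTop :=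
    tendsto_natCast_atTop_atTop.atTop_add tendsto_const_nhds
  have hfloor : Tendsto (fun j : ℕ => (⌊s * ((j : ℝ) + 1)⌋₊ : ℝ) / (j + 1)) atTop (𝓝 s) :=
    (tendsto_nat_floor_mul_div_atTop hs.le).comp hn
  simpa [gridRatio, add_div, mul_comm s] using hfloor.add (tendsto_inv_atTop_zero.comp hn)

/-- The sum `∑ₖ w (p j - p k) r ^ (-a)`, where `r` is the position of `k` relative to `j`: the
discrete counterpart of `(j + 1) * kernelMoment w α a`. -/
noncomputable def kernelSum (w : ℝ → ℝ) (p : ℕ → ℝ) (a : ℝ) (j : ℕ) : ℝ :=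
  ∑' k, w (p j - p k) * gridRatio j k ^ (-a)

namespace IsLogLipschitzKernel

variable {w : ℝ → ℝ} {B α a c : ℝ} {p : ℕ → ℝ}

lemma exists_le_exp_log_gridRatio (hw : IsLogLipschitzKernel w B) (hα : 0 ≤ α)
    (hp : Tendsto (fun k : ℕ => p k - α * log (k + 1)) atTop (𝓝 c)) :
    ∃ D, 0 ≤ D ∧ ∀ j k, w (p j - p k) ≤ D * exp (-(α * |log (gridRatio j k)|)) := by
  obtain ⟨D, hD⟩ := hw.exists_le_exp
  obtain ⟨R, hR⟩ := (Metric.isBounded_range_of_tendsto _ hp).exists_norm_le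
  have hD0 : 0 ≤ D := by simpa using (hw.pos 0).le.trans (hD 0)
  refine ⟨D * exp (2 * R), by positivity, fun j k => (hD _).trans ?_⟩
  rw [mul_assoc, ← exp_add]
  gcongr
  have hj := hR _ (Set.mem_range_self j)
  have hk := hR _ (Set.mem_range_self k)
  rw [norm_eq_abs] at hj hk
  have hlog : α * log (gridRatio j k) = (p j - α * log (j + 1)) - (p k - α * log (k + 1)) -
      (p j - p k) := by
    rw [log_gridRatio]; ring
  calc -|p j - p k| ≤ |p j - α * log (j + 1)| + |p k - α * log (k + 1)| -
        |α * log (gridRatio j k)| := by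
        rw [hlog]
        linarith [abs_sub ((p j - α * log (j + 1)) - (p k - α * log (k + 1))) (p j - p k),
          abs_sub (p j - α * log (j + 1)) (p k - α * log (k + 1))]
    _ ≤ 2 * R + -(α * |log (gridRatio j k)|) := by
        rw [abs_mul, abs_of_nonneg hα]; linarith

lemma exists_abs_le_envelope (hw : IsLogLipschitzKernel w B)
    (hp : Tendsto (fun k : ℕ => p k - α * log (k + 1)) atTop (𝓝 c)) (ha : 1 - α < a)
    (ha' : a < 1 + α) :
    ∃ e : ℝ → ℝ, AntitoneOn e (Set.Ioi 0) ∧ IntegrableOn e (Set.Ioi 0) ∧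
      ∀ j k : ℕ, |w (p j - p k) * gridRatio j k ^ (-a)| ≤ e ((k + 1) / (j + 1)) := by
  obtain ⟨q, hq, hq1, hqa, hqa'⟩ := exists_mem_Ioo_le_of_lt ha ha'
  obtain ⟨D, hD0, hD⟩ := hw.exists_le_exp_log_gridRatio (by linarith) hp
  refine ⟨fun s => D * powerEnvelope q s,
    fun s hs t ht hst => mul_le_mul_of_nonneg_left
      (antitoneOn_powerEnvelope hq.le hq1.le hs ht hst) hD0,
    (integrableOn_powerEnvelope hq).const_mul D, fun j k => ?_⟩
  have hr := gridRatio_pos j k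
  rw [abs_of_pos (mul_pos (hw.pos _) (rpow_pos_of_pos hr _))]
  calc w (p j - p k) * gridRatio j k ^ (-a)
      ≤ D * exp (-(α * |log (gridRatio j k)|)) * gridRatio j k ^ (-a) :=
        mul_le_mul_of_nonneg_right (hD j k) (rpow_nonneg hr.le _)
    _ ≤ D * powerEnvelope q (gridRatio j k) := by
        rw [mul_assoc]
        exact mul_le_mul_of_nonneg_left (exp_neg_mul_rpow_le_powerEnvelope hr hq.le hqa hqa') hD0

lemma summable_mul_gridRatio_rpow (hw : IsLogLipschitzKernel w B)
    (hp : Tendsto (fun k : ℕ => p k - α * log (k + 1)) atTop (𝓝 c)) (ha : 1 - α < a)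
    (ha' : a < 1 + α) (j : ℕ) : Summable fun k => w (p j - p k) * gridRatio j k ^ (-a) := by
  obtain ⟨e, he, he', hF⟩ := hw.exists_abs_le_envelope hp ha ha'
  exact summable_of_abs_le_envelope he he' (by positivity) (hF j)

lemma tendsto_kernelSum_div (hw : IsLogLipschitzKernel w B)
    (hp : Tendsto (fun k : ℕ => p k - α * log (k + 1)) atTop (𝓝 c)) (ha : 1 - α < a)
    (ha' : a < 1 + α) :
    Tendsto (fun j : ℕ => kernelSum w p a j / ((j : ℝ) + 1)) atTop (𝓝 (kernelMoment w α a)) := by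
  obtain ⟨e, he, he', hF⟩ := hw.exists_abs_le_envelope hp ha ha'
  refine tendsto_tsum_div_of_abs_le_envelope he he' hF fun s hs => ?_
  have hratio := tendsto_gridRatio_floor hs
  have hdiff : Tendsto (fun j : ℕ => p j - p ⌊((j : ℝ) + 1) * s⌋₊) atTop
      (𝓝 (-(α * log s))) := by
    have h := (hp.sub (hp.comp (tendsto_floor_mul_atTop hs))).sub
      ((hratio.log hs.ne').const_mul α)
    rw [sub_self, zero_sub] at h
    refine h.congr fun j => ?_
    rw [log_gridRatio, Function.comp_apply]
    ring
  rw [← hw.even]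
  exact ((hw.continuous.tendsto _).comp hdiff).mul (hratio.rpow_const (Or.inl hs.ne'))

lemma hasSum_weight (hw : IsLogLipschitzKernel w B) (hα : 1 < α)
    (hp : Tendsto (fun k : ℕ => p k - α * log (k + 1)) atTop (𝓝 c)) (j : ℕ) :
    HasSum (fun k => w (p j - p k)) (kernelSum w p 0 j) := by
  simpa [kernelSum] using
    (hw.summable_mul_gridRatio_rpow (a := 0) hp (by linarith) (by linarith) j).hasSum

lemma kernelSum_pos (hw : IsLogLipschitzKernel w B)
    (hp : Tendsto (fun k : ℕ => p k - α * log (k + 1)) atTop (𝓝 c)) (ha : 1 - α < a)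
    (ha' : a < 1 + α) (j : ℕ) : 0 < kernelSum w p a j := by
  have hpos : ∀ k, 0 < w (p j - p k) * gridRatio j k ^ (-a) := fun k =>
    mul_pos (hw.pos _) (rpow_pos_of_pos (gridRatio_pos j k) _)
  exact (hw.summable_mul_gridRatio_rpow hp ha ha' j).tsum_pos (fun k => (hpos k).le) 0 (hpos 0)

lemma summable_weight_mul (hw : IsLogLipschitzKernel w B) (hα : 1 < α)
    (hp : Tendsto (fun k : ℕ => p k - α * log (k + 1)) atTop (𝓝 c)) (j : ℕ) {f : ℕ → ℝ} {R : ℝ}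
    (hf : ∀ k, |f k| ≤ R) : Summable fun k => w (p j - p k) * f k :=
  ((hw.hasSum_weight hα hp j).summable.mul_right R).of_norm_bounded fun k => by
    rw [norm_eq_abs, abs_mul, abs_of_pos (hw.pos _)]
    exact mul_le_mul_of_nonneg_left (hf k) (hw.pos _).le

lemma exists_kernelSum_le_mul (hw : IsLogLipschitzKernel w B) (hα : 1 < α)
    (hp : Tendsto (fun k : ℕ => p k - α * log (k + 1)) atTop (𝓝 c)) (ha : 1 - α < a)
    (ha' : a < 1 + α) : ∃ R, 1 ≤ R ∧ ∀ j, kernelSum w p a j ≤ R * kernelSum w p 0 j := by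
  have h0 : 1 - α < 0 := by linarith
  have h0' : 0 < 1 + α := by linarith
  have hlim : Tendsto (fun j => kernelSum w p a j / kernelSum w p 0 j) atTop
      (𝓝 (kernelMoment w α a / kernelMoment w α 0)) := by
    refine ((hw.tendsto_kernelSum_div hp ha ha').div (hw.tendsto_kernelSum_div hp h0 h0')
      (hw.kernelMoment_pos h0 h0').ne').congr fun j => ?_
    exact div_div_div_cancel_right₀ (by positivity) _ _
  obtain ⟨R, hR⟩ := (Metric.isBounded_range_of_tendsto _ hlim).exists_norm_le
  refine ⟨max 1 R, le_max_left _ _, fun j => (div_le_iff₀ (hw.kernelSum_pos hp h0 h0' j)).1 ?_⟩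
  exact (le_abs_self _).trans ((hR _ (Set.mem_range_self j)).trans (le_max_right _ _))

end IsLogLipschitzKernel

end KernelSums

section Barrier

open Real

/-- The barrier profile `min 1 ((N / (k + 1)) ^ ε)`: constant up to the scale `N`, then decaying
with the prescribed power. -/
noncomputable def barrier (ε : ℝ) (N k : ℕ) : ℝ :=
  min 1 (((N : ℝ) / ((k : ℝ) + 1)) ^ ε)

variable {ε : ℝ} {N j k : ℕ}

lemma barrier_le_one (ε : ℝ) (N k : ℕ) : barrier ε N k ≤ 1 :=
  min_le_left _ _

lemma barrier_nonneg (ε : ℝ) (N k : ℕ) : 0 ≤ barrier ε N k :=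
  le_min zero_le_one (by positivity)

lemma abs_barrier_sub_barrier_le_one (ε : ℝ) (N j k : ℕ) :
    |barrier ε N j - barrier ε N k| ≤ 1 :=
  abs_sub_le_of_nonneg_of_le (barrier_nonneg ε N j) (barrier_le_one ε N j) (barrier_nonneg ε N k)
    (barrier_le_one ε N k)

lemma barrier_le_rpow_mul (ε : ℝ) (N k : ℕ) :
    barrier ε N k ≤ (N : ℝ) ^ ε * ((k : ℝ) + 1) ^ (-ε) := by
  rw [rpow_neg (by positivity), ← div_eq_mul_inv, ← div_rpow (by positivity) (by positivity)]
  exact min_le_right _ _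

lemma barrier_eq_one (hε : 0 ≤ ε) (hkN : k + 1 ≤ N) : barrier ε N k = 1 :=
  min_eq_left (one_le_rpow ((one_le_div (by positivity)).2 (by exact_mod_cast hkN)) hε)

lemma barrier_lt_one (hε : 0 < ε) (hNk : N ≤ k) : barrier ε N k < 1 := by
  have hlt : (N : ℝ) < k + 1 := by exact_mod_cast Nat.lt_succ_of_le hNk
  exact (min_le_right _ _).trans_lt
    (rpow_lt_one (by positivity) ((div_lt_one (by positivity)).2 hlt) hε)

lemma barrier_eq_min_mul_gridRatio (hε : 0 ≤ ε) (hNj : N ≤ j + 1) (k : ℕ) :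
    barrier ε N k = min 1 (barrier ε N j * gridRatio j k ^ (-ε)) := by
  have hle : ((N : ℝ) / (j + 1)) ^ ε ≤ 1 := rpow_le_one (by positivity)
    ((div_le_one (by positivity)).2 (by exact_mod_cast hNj)) hε
  have hj : barrier ε N j = ((N : ℝ) / (j + 1)) ^ ε := min_eq_right hle
  rw [hj, rpow_neg (gridRatio_pos j k).le, ← div_eq_mul_inv,
    ← div_rpow (by positivity) (gridRatio_pos j k).le, gridRatio,
    div_div_div_cancel_right₀ (by positivity), barrier]

lemma mul_one_sub_mul_rpow_le_damped {A H t : ℝ} (hA : 0 ≤ A) (hH : 0 ≤ H) (hH1 : H ≤ 1)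
    (ht : 0 < t) : H * (1 - t) * t ^ A ≤ damped A (H - min 1 (H * t)) := by
  rw [damped, rpow_def_of_pos ht]
  rcases le_total t 1 with ht1 | ht1
  · have hmin : min 1 (H * t) = H * t := min_eq_right (mul_le_one₀ hH1 ht.le ht1)
    have hd : H * (1 - t) ≤ -log t := by nlinarith [log_le_sub_one_of_pos ht]
    rw [hmin, ← mul_one_sub]
    exact mul_le_mul_of_nonneg_left (exp_le_exp.2 (by nlinarith))
      (mul_nonneg hH (sub_nonneg.2 ht1))
  · have hHK : H ≤ min 1 (H * t) := le_min hH1 (le_mul_of_one_le_right hH ht1)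
    have hd : min 1 (H * t) - H ≤ log t := by
      have hinv : t⁻¹ ≤ 1 := inv_le_one_of_one_le₀ ht1
      have hKH : min 1 (H * t) * t⁻¹ ≤ H := by
        rw [← div_eq_mul_inv, div_le_iff₀ ht]
        exact min_le_right _ _
      nlinarith [one_sub_inv_le_log_of_pos ht, min_le_left 1 (H * t)]
    calc H * (1 - t) * exp (log t * A) ≤ (H - min 1 (H * t)) * exp (log t * A) :=
          mul_le_mul_of_nonneg_right (by linarith [min_le_right 1 (H * t)]) (exp_pos _).le
      _ ≤ (H - min 1 (H * t)) * exp (-(A * (H - min 1 (H * t)))) :=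
          mul_le_mul_of_nonpos_left (exp_le_exp.2 (by nlinarith)) (sub_nonpos.2 hHK)

lemma barrier_mul_gridRatio_rpow_sub_le_damped {A : ℝ} (hA : 0 ≤ A) (hε : 0 ≤ ε)
    (hNj : N ≤ j + 1) (k : ℕ) :
    barrier ε N j * (gridRatio j k ^ (-(A * ε)) - gridRatio j k ^ (-(ε + A * ε))) ≤
      damped A (barrier ε N j - barrier ε N k) := by
  have hr := gridRatio_pos j k
  have hpow : (gridRatio j k ^ (-ε)) ^ A = gridRatio j k ^ (-(A * ε)) := by
    rw [← rpow_mul hr.le]; ring_nf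
  have hpow' : gridRatio j k ^ (-(ε + A * ε)) =
      gridRatio j k ^ (-ε) * gridRatio j k ^ (-(A * ε)) := by
    rw [neg_add, rpow_add hr]
  have h := mul_one_sub_mul_rpow_le_damped hA (barrier_nonneg ε N j) (barrier_le_one ε N j)
    (rpow_pos_of_pos hr (-ε))
  rw [← barrier_eq_min_mul_gridRatio hε hNj, hpow] at h
  rw [hpow']
  linarith

namespace IsLogLipschitzKernel

variable {w : ℝ → ℝ} {A B α c : ℝ} {p : ℕ → ℝ}

lemma eventually_mul_kernelSum_le_sub (hw : IsLogLipschitzKernel w B) (hα : 1 < α)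
    (hp : Tendsto (fun k : ℕ => p k - α * log (k + 1)) atTop (𝓝 c)) {a b : ℝ} (ha : 1 - α < a)
    (hab : a < b) (hab2 : a + b < 2) :
    ∃ κ > 0, ∀ᶠ j in atTop, κ * kernelSum w p 0 j ≤ kernelSum w p a j - kernelSum w p b j := by
  have hm0 : 0 < kernelMoment w α 0 := hw.kernelMoment_pos (by linarith) (by linarith)
  have hm : 0 < kernelMoment w α a - kernelMoment w α b :=
    sub_pos.2 (hw.kernelMoment_lt ha hab hab2)
  obtain ⟨κ, hκ, hκm⟩ := exists_between (div_pos hm hm0)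
  have hlim₀ := (hw.tendsto_kernelSum_div hp (a := 0) (by linarith) (by linarith)).const_mul κ
  have hlim := (hw.tendsto_kernelSum_div hp ha (by linarith)).sub
    (hw.tendsto_kernelSum_div hp (a := b) (by linarith) (by linarith))
  refine ⟨κ, hκ, (hlim₀.eventually_lt hlim ((lt_div_iff₀ hm0).1 hκm)).mono fun j hj => ?_⟩
  rw [← mul_div_assoc, ← sub_div] at hj
  exact ((div_lt_div_iff_of_pos_right (by positivity)).1 hj).le

lemma summable_mul_damped_barrier (hw : IsLogLipschitzKernel w B) (hα : 1 < α)
    (hp : Tendsto (fun k : ℕ => p k - α * log (k + 1)) atTop (𝓝 c)) (hA : 0 ≤ A) (ε : ℝ)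
    (N j : ℕ) :
    Summable fun k => w (p j - p k) * damped A (barrier ε N j - barrier ε N k) :=
  hw.summable_weight_mul hα hp j fun k => abs_damped_le hA (abs_barrier_sub_barrier_le_one ε N j k)

lemma barrier_mul_kernelSum_sub_le (hw : IsLogLipschitzKernel w B) (hα : 1 < α)
    (hp : Tendsto (fun k : ℕ => p k - α * log (k + 1)) atTop (𝓝 c)) (hA : 0 ≤ A) (hε : 0 ≤ ε)
    (hεα : ε + A * ε < 1 + α) (hNj : N ≤ j + 1) :
    barrier ε N j * (kernelSum w p (A * ε) j - kernelSum w p (ε + A * ε) j) ≤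
      ∑' k, w (p j - p k) * damped A (barrier ε N j - barrier ε N k) := by
  have hAε : 0 ≤ A * ε := mul_nonneg hA hε
  have hs := hw.summable_mul_gridRatio_rpow hp (a := A * ε) (by linarith) (by linarith) j
  have hs' := hw.summable_mul_gridRatio_rpow hp (a := ε + A * ε) (by linarith) (by linarith) j
  rw [kernelSum, kernelSum, ← hs.tsum_sub hs', ← tsum_mul_left]
  refine ((hs.sub hs').mul_left _).tsum_le_tsum (fun k => ?_)
    (hw.summable_mul_damped_barrier hα hp hA ε N j)
  rw [← mul_sub, mul_left_comm]
  exact mul_le_mul_of_nonneg_left (barrier_mul_gridRatio_rpow_sub_le_damped hA hε hNj k)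
    (hw.pos _).le

lemma tsum_mul_damped_barrier_pos (hw : IsLogLipschitzKernel w B) (hα : 1 < α)
    (hp : Tendsto (fun k : ℕ => p k - α * log (k + 1)) atTop (𝓝 c)) (hA : 0 ≤ A) (hε : 0 < ε)
    (hjN : j + 1 ≤ N) :
    0 < ∑' k, w (p j - p k) * damped A (barrier ε N j - barrier ε N k) := by
  refine (hw.summable_mul_damped_barrier hα hp hA ε N j).tsum_pos (fun k => ?_) N ?_
  · rw [barrier_eq_one hε.le hjN]
    exact mul_nonneg (hw.pos _).le (damped_nonneg A (sub_nonneg.2 (barrier_le_one ε N k)))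
  · rw [barrier_eq_one hε.le hjN]
    exact mul_pos (hw.pos _)
      (mul_pos (sub_pos.2 (barrier_lt_one hε le_rfl)) (exp_pos _))

lemma exists_barrier_gain (hw : IsLogLipschitzKernel w B) (hα : 1 < α)
    (hp : Tendsto (fun k : ℕ => p k - α * log (k + 1)) atTop (𝓝 c)) (hA : 0 ≤ A) (hε : 0 < ε)
    (hεA : ε * (1 + 2 * A) < 2) :
    ∃ N₀, ∀ N ≥ N₀, ∃ κ > 0, ∀ j, κ * (barrier ε N j * kernelSum w p 0 j) ≤
      ∑' k, w (p j - p k) * damped A (barrier ε N j - barrier ε N k) := by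
  have hAε : 0 ≤ A * ε := mul_nonneg hA hε.le
  obtain ⟨κ₁, hκ₁, hfar⟩ := hw.eventually_mul_kernelSum_le_sub hα hp (a := A * ε)
    (b := ε + A * ε) (by linarith) (by linarith) (by linarith)
  obtain ⟨N₀, hN₀⟩ := eventually_atTop.1 hfar
  refine ⟨N₀, fun N hN => ?_⟩
  have hK : ∀ j, 0 ≤ barrier ε N j * kernelSum w p 0 j := fun j =>
    mul_nonneg (barrier_nonneg ε N j) (hw.kernelSum_pos hp (by linarith) (by linarith) j).le
  have hnear : ∀ᶠ κ in 𝓝[>] (0 : ℝ), ∀ j ∈ Set.Iio N, κ * (barrier ε N j * kernelSum w p 0 j) ≤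
      ∑' k, w (p j - p k) * damped A (barrier ε N j - barrier ε N k) := by
    refine (eventually_all_finite (Set.finite_Iio N)).2 fun j hj => ?_
    have hlim : Tendsto (fun κ : ℝ => κ * (barrier ε N j * kernelSum w p 0 j)) (𝓝[>] 0) (𝓝 0) :=
      tendsto_nhdsWithin_of_tendsto_nhds (Continuous.tendsto' (by fun_prop) _ _ (zero_mul _))
    exact hlim.eventually_le_const (hw.tsum_mul_damped_barrier_pos hα hp hA hε hj)
  have hle : ∀ᶠ κ in 𝓝[>] (0 : ℝ), κ ≤ κ₁ := nhdsWithin_le_nhds (eventually_le_nhds hκ₁)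
  obtain ⟨κ, ⟨hκnear, hκle⟩, hκ⟩ := ((hnear.and hle).and self_mem_nhdsWithin).exists
  refine ⟨κ, hκ, fun j => ?_⟩
  rcases lt_or_ge j N with hjN | hNj
  · exact hκnear j hjN
  · calc κ * (barrier ε N j * kernelSum w p 0 j)
        ≤ κ₁ * (barrier ε N j * kernelSum w p 0 j) := mul_le_mul_of_nonneg_right hκle (hK j)
      _ ≤ barrier ε N j * (kernelSum w p (A * ε) j - kernelSum w p (ε + A * ε) j) := by
          rw [mul_left_comm]
          exact mul_le_mul_of_nonneg_left (hN₀ j (hN.trans hNj)) (barrier_nonneg ε N j)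
      _ ≤ _ := hw.barrier_mul_kernelSum_sub_le hα hp hA hε.le (by linarith) (by omega)

end IsLogLipschitzKernel

end Barrier

section Iteration

open Real

/-- The sequence `y` solves the equations `∑ₖ g (y j - x k) = s j`: one step of the iteration, in
logarithmic coordinates and with response function `g`. -/
def IsUpdate (g : ℝ → ℝ) (s x y : ℕ → ℝ) : Prop :=
  ∀ j, HasSum (fun k => g (y j - x k)) (s j)

namespace IsLogLipschitzKernel

variable {w g : ℝ → ℝ} {B : ℝ} {s p : ℕ → ℝ}

lemma abs_sub_le_of_isUpdate (hw : IsLogLipschitzKernel w B) (hg : ∀ u, HasDerivAt g (w u) u)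
    (hfix : IsUpdate g s p p) {x y : ℕ → ℝ} (hxy : IsUpdate g s x y) {T : ℝ}
    (hx : ∀ k, |x k - p k| ≤ T) (j : ℕ) : |y j - p j| ≤ T :=
  hw.abs_sub_le_of_hasSum hg (hfix j) (hxy j) hx (t := 0) (by simp [damped, hasSum_zero]) le_rfl

variable {α c : ℝ} (hw : IsLogLipschitzKernel w B) (hα : 1 < α)
  (hp : Tendsto (fun k : ℕ => p k - α * log (k + 1)) atTop (𝓝 c))
  (hg : ∀ u, HasDerivAt g (w u) u) (hfix : IsUpdate g s p p)

include hw hα hp hg hfix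

lemma abs_sub_le_of_isUpdate_of_hasSum {x y δ f : ℕ → ℝ} {b t R : ℝ} {j : ℕ}
    (hxy : IsUpdate g s x y) (hx : ∀ k, |x k - p k| ≤ δ k) (hR : ∀ k, |b - δ k| ≤ R)
    (hfδ : ∀ k, f k ≤ damped B (b - δ k)) (hf : HasSum (fun k => w (p j - p k) * f k) t)
    (ht : 0 ≤ t) : |y j - p j| ≤ b := by
  have hsum := hw.summable_weight_mul hα hp j fun k => abs_damped_le hw.rate_pos.le (hR k)
  exact hw.abs_sub_le_of_hasSum hg (hfix j) (hxy j) hx hsum.hasSum <|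
    ht.trans <| hasSum_le (fun k => mul_le_mul_of_nonneg_left (hfδ k) (hw.pos _).le) hf hsum.hasSum

lemma abs_sub_le_mul_barrier_of_isUpdate {ε T T' κ μ : ℝ} {N : ℕ} {x y : ℕ → ℝ}
    (hT' : 0 ≤ T') (hT : T' ≤ T) (hμ : 0 ≤ μ) (hμ1 : μ ≤ 1)
    (hμκ : (1 + B * T) * exp (B * T) * μ ≤ κ)
    (hgain : ∀ j, κ * (barrier ε N j * kernelSum w p 0 j) ≤
      ∑' k, w (p j - p k) * damped (B * T) (barrier ε N j - barrier ε N k))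
    (hxy : IsUpdate g s x y) (hx : ∀ k, |x k - p k| ≤ T' * barrier ε N k) (j : ℕ) :
    |y j - p j| ≤ (1 - μ) * T' * barrier ε N j := by
  have hB := hw.rate_pos.le
  have hh := barrier_nonneg ε N
  have hh1 := barrier_le_one ε N
  have hK := (hw.kernelSum_pos hp (a := 0) (by linarith) (by linarith) j).le
  have hsum := ((((hw.summable_mul_damped_barrier hα hp (mul_nonneg hB (hT'.trans hT)) ε N j).hasSum
    ).sub ((hw.hasSum_weight hα hp j).mul_right
      ((1 + B * T) * exp (B * T) * (μ * barrier ε N j)))).mul_left T')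
  refine hw.abs_sub_le_of_isUpdate_of_hasSum hα hp hg hfix hxy hx (R := T') (fun k => ?_)
    (fun k => mul_damped_sub_le_damped hB hT' hT (hh j) (hh1 j) (hh k) (hh1 k) hμ hμ1)
    (hsum.congr_fun fun k => by ring) (mul_nonneg hT' (sub_nonneg.2 ?_))
  · refine abs_sub_le_of_nonneg_of_le (mul_nonneg (mul_nonneg (sub_nonneg.2 hμ1) hT') (hh j)) ?_
      (mul_nonneg hT' (hh k)) (mul_le_of_le_one_right hT' (hh1 k))
    exact (mul_le_of_le_one_right (mul_nonneg (sub_nonneg.2 hμ1) hT') (hh1 j)).trans (by nlinarith)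
  · refine le_trans ?_ (hgain j)
    calc kernelSum w p 0 j * ((1 + B * T) * exp (B * T) * (μ * barrier ε N j))
        = (1 + B * T) * exp (B * T) * μ * (barrier ε N j * kernelSum w p 0 j) := by ring
      _ ≤ κ * (barrier ε N j * kernelSum w p 0 j) :=
          mul_le_mul_of_nonneg_right hμκ (mul_nonneg (hh j) hK)

-- `L = R * exp (2 * B * T)` makes `exp (-B T) * b` dominate `exp (B T) * C * (j + 1) ^ (-ε) * R`
-- for the bound `b = L * C * (j + 1) ^ (-ε)`.
lemma exists_abs_sub_le_mul_rpow_of_isUpdate {ε T : ℝ} (hε : 0 ≤ ε) (hεα : ε < 1 + α)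
    (hT : 0 ≤ T) :
    ∃ L, 1 ≤ L ∧ ∀ x y, IsUpdate g s x y → (∀ k, |x k - p k| ≤ T) → ∀ C,
      (∀ k : ℕ, |x k - p k| ≤ C * ((k : ℝ) + 1) ^ (-ε)) →
      ∀ j : ℕ, |y j - p j| ≤ L * C * ((j : ℝ) + 1) ^ (-ε) := by
  obtain ⟨R, hR, hRK⟩ := hw.exists_kernelSum_le_mul hα hp (a := ε) (by linarith) hεα
  have hB := hw.rate_pos.le
  refine ⟨R * exp (2 * (B * T)), one_le_mul_of_one_le_of_one_le hR (one_le_exp (by positivity)),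
    fun x y hxy hxT C hxC j => ?_⟩
  have hC : 0 ≤ C := by simpa using (abs_nonneg _).trans (hxC 0)
  set b := R * exp (2 * (B * T)) * C * ((j : ℝ) + 1) ^ (-ε) with hb
  rcases le_total T b with hTb | hbT
  · exact (hw.abs_sub_le_of_isUpdate hg hfix hxy hxT j).trans hTb
  have hb0 : 0 ≤ b := by positivity
  have hδ0 : ∀ k : ℕ, 0 ≤ min T (C * ((k : ℝ) + 1) ^ (-ε)) := fun k => le_min hT (by positivity)
  have hsum := ((hw.hasSum_weight hα hp j).mul_right (exp (-(B * T)) * b)).sub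
    ((hw.summable_mul_gridRatio_rpow hp (a := ε) (by linarith) hεα j).hasSum.mul_right
      (exp (B * T) * C * ((j : ℝ) + 1) ^ (-ε)))
  refine hw.abs_sub_le_of_isUpdate_of_hasSum hα hp hg hfix hxy
    (fun k => le_min (hxT k) (hxC k)) (R := T)
    (fun k => abs_sub_le_of_nonneg_of_le hb0 hbT (hδ0 k) (min_le_left _ _))
    (f := fun k => exp (-(B * T)) * b - exp (B * T) * (C * ((k : ℝ) + 1) ^ (-ε)))
    (fun k => ?_) (hsum.congr_fun fun k => ?_) ?_
  · exact (sub_le_sub_left (mul_le_mul_of_nonneg_left (min_le_right _ _) (exp_pos _).le) _).trans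
      (sub_exp_mul_le_damped hB hb0 hbT (hδ0 k) (min_le_left _ _))
  · rw [gridRatio, div_rpow (by positivity) (by positivity)]
    field_simp
  · have hexp : exp (-(B * T)) * exp (2 * (B * T)) = exp (B * T) := by rw [← exp_add]; ring_nf
    refine sub_nonneg.2 ?_
    calc kernelSum w p ε j * (exp (B * T) * C * ((j : ℝ) + 1) ^ (-ε))
        ≤ R * kernelSum w p 0 j * (exp (B * T) * C * ((j : ℝ) + 1) ^ (-ε)) :=
          mul_le_mul_of_nonneg_right (hRK j) (by positivity)
      _ = kernelSum w p 0 j * (exp (-(B * T)) * b) := by rw [hb, ← hexp]; ring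

variable {x : ℕ → ℕ → ℝ} (hiter : ∀ n, IsUpdate g s (x n) (x (n + 1)))

include hiter

lemma exists_abs_sub_le_pow_mul_barrier {ε T M : ℝ} (hε : 0 < ε) (hT : 0 < T)
    (hεT : ε * (1 + 2 * (B * T)) < 2) (hxT : ∀ k, |x 0 k - p k| ≤ T)
    (hxM : ∀ k : ℕ, |x 0 k - p k| ≤ M * ((k : ℝ) + 1) ^ (-ε)) :
    ∃ N : ℕ, ∃ ρ : ℝ, 0 < ρ ∧ ρ < 1 ∧ ∀ n k, |x n k - p k| ≤ ρ ^ n * T * barrier ε N k := by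
  have hBT : 0 ≤ B * T := mul_nonneg hw.rate_pos.le hT.le
  obtain ⟨N₀, hN₀⟩ := hw.exists_barrier_gain hα hp hBT hε hεT
  have hlarge : ∀ᶠ N : ℕ in atTop, M / T ≤ (N : ℝ) ^ ε :=
    ((tendsto_rpow_atTop hε).comp tendsto_natCast_atTop_atTop).eventually_ge_atTop _
  obtain ⟨N, hN, hMN⟩ := ((eventually_ge_atTop N₀).and hlarge).exists
  obtain ⟨κ, hκ, hgain⟩ := hN₀ N hN
  have hD : 0 < (1 + B * T) * exp (B * T) := by positivity
  obtain ⟨μ, hμ, hμ'⟩ := exists_between (lt_min one_pos (div_pos hκ hD))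
  have hμ1 : μ < 1 := hμ'.trans_le (min_le_left _ _)
  have hμκ : (1 + B * T) * exp (B * T) * μ ≤ κ :=
    ((lt_div_iff₀' hD).1 (hμ'.trans_le (min_le_right _ _))).le
  refine ⟨N, 1 - μ, sub_pos.2 hμ1, by linarith, fun n => ?_⟩
  induction n with
  | zero =>
    intro k
    rw [pow_zero, one_mul, barrier, mul_min_of_nonneg _ _ hT.le, mul_one]
    refine le_min (hxT k) ((hxM k).trans ?_)
    rw [div_rpow (by positivity) (by positivity), div_eq_mul_inv,
      ← rpow_neg (by positivity), ← mul_assoc]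
    exact mul_le_mul_of_nonneg_right ((div_le_iff₀' hT).1 hMN) (by positivity)
  | succ n ih =>
    have hpow : (1 - μ) ^ n ≤ 1 := pow_le_one₀ (by linarith) (by linarith)
    have hpow0 : 0 ≤ (1 - μ) ^ n := pow_nonneg (by linarith) n
    have hstep := hw.abs_sub_le_mul_barrier_of_isUpdate hα hp hg hfix (mul_nonneg hpow0 hT.le)
      (mul_le_of_le_one_left hT.le hpow) hμ.le hμ1.le hμκ hgain (hiter n) ih
    simpa only [pow_succ', mul_assoc] using hstep

lemma exists_abs_sub_le_of_rpow_bound {ε M t : ℝ} (hε : 0 < ε) (hM : 0 < M)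
    (hxM : ∀ k : ℕ, |x 0 k - p k| ≤ M * ((k : ℝ) + 1) ^ (-ε)) (ht : 0 < t) :
    ∃ n, ∀ k, |x n k - p k| ≤ t := by
  have hBM : 0 < 1 + 2 * (B * M) := by have := hw.rate_pos; positivity
  obtain ⟨ε', hε', hlt⟩ := exists_between (lt_min hε (div_pos two_pos hBM))
  have hM' : ∀ k : ℕ, |x 0 k - p k| ≤ M * ((k : ℝ) + 1) ^ (-ε') := fun k =>
    (hxM k).trans <| mul_le_mul_of_nonneg_left (rpow_le_rpow_of_exponent_le (by simp)
      (neg_le_neg (hlt.le.trans (min_le_left _ _)))) hM.le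
  have hsup : ∀ k, |x 0 k - p k| ≤ M := fun k =>
    (hM' k).trans <| mul_le_of_le_one_right hM.le
      (rpow_le_one_of_one_le_of_nonpos (by simp) (by linarith))
  obtain ⟨N, ρ, hρ, hρ1, hx⟩ := hw.exists_abs_sub_le_pow_mul_barrier hα hp hg hfix hiter hε' hM
    ((lt_div_iff₀ hBM).1 (hlt.trans_le (min_le_right _ _))) hsup hM'
  have hlim : Tendsto (fun n => ρ ^ n * M) atTop (𝓝 0) := by
    simpa using (tendsto_pow_atTop_nhds_zero_of_lt_one hρ.le hρ1).mul_const M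
  obtain ⟨n, hn⟩ := (hlim.eventually_le_const ht).exists
  exact ⟨n, fun k => (hx n k).trans <| (mul_le_of_le_one_right (by positivity)
    (barrier_le_one ε' N k)).trans hn⟩

lemma exists_abs_sub_le_pow_mul_rpow {ε M : ℝ} (hε : 0 ≤ ε) (hεα : ε < 1 + α)
    (hxM : ∀ k : ℕ, |x 0 k - p k| ≤ M * ((k : ℝ) + 1) ^ (-ε)) :
    ∃ L, 1 ≤ L ∧ ∀ n k : ℕ, |x n k - p k| ≤ L ^ n * M * ((k : ℝ) + 1) ^ (-ε) := by
  have hM : 0 ≤ M := by simpa using (abs_nonneg _).trans (hxM 0)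
  obtain ⟨L, hL, hstep⟩ := hw.exists_abs_sub_le_mul_rpow_of_isUpdate hα hp hg hfix hε hεα hM
  have hsup : ∀ n k, |x n k - p k| ≤ M := by
    intro n
    induction n with
    | zero =>
      exact fun k => (hxM k).trans (mul_le_of_le_one_right hM
        (rpow_le_one_of_one_le_of_nonpos (by simp) (by linarith)))
    | succ n ih => exact hw.abs_sub_le_of_isUpdate hg hfix (hiter n) ih
  refine ⟨L, hL, fun n => ?_⟩
  induction n with
  | zero => simpa using hxM
  | succ n ih => simpa only [pow_succ', mul_assoc] using hstep _ _ (hiter n) (hsup n) _ ih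

-- The condition `ε * (1 + 2 * B * T) < 2` of the contraction is met twice: first with a small
-- exponent, to make the error uniformly small, then with the given exponent and small `T`.
theorem exists_geometric_decay {ε M : ℝ} (hε : 0 < ε) (hε2 : ε < 2) (hM : 0 < M)
    (hxM : ∀ k : ℕ, |x 0 k - p k| ≤ M * ((k : ℝ) + 1) ^ (-ε)) :
    ∃ C > 0, ∃ ρ > 0, ρ < 1 ∧ ∀ n k : ℕ, |x n k - p k| ≤ C * ρ ^ n * ((k : ℝ) + 1) ^ (-ε) := by
  have hB := hw.rate_pos
  obtain ⟨t, ht, htε⟩ : ∃ t > 0, ε * (1 + 2 * (B * t)) < 2 :=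
    ⟨(2 - ε) / (4 * ε * B), div_pos (by linarith) (by positivity), by field_simp; linarith⟩
  obtain ⟨n₀, hn₀⟩ := hw.exists_abs_sub_le_of_rpow_bound hα hp hg hfix hiter hε hM hxM ht
  obtain ⟨L, hL, hLx⟩ :=
    hw.exists_abs_sub_le_pow_mul_rpow hα hp hg hfix hiter hε.le (by linarith) hxM
  obtain ⟨N, ρ, hρ, hρ1, hx⟩ := hw.exists_abs_sub_le_pow_mul_barrier hα hp hg hfix
    (x := fun n => x (n₀ + n)) (fun n => hiter (n₀ + n)) hε ht htε hn₀ (hLx n₀)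
  refine ⟨(L ^ n₀ * M + t * (N : ℝ) ^ ε) / ρ ^ n₀, by positivity, ρ, hρ, hρ1, fun n k => ?_⟩
  rcases le_total n n₀ with hn | hn
  · refine (hLx n k).trans (mul_le_mul_of_nonneg_right ?_ (by positivity))
    calc L ^ n * M ≤ L ^ n₀ * M := by gcongr
      _ ≤ L ^ n₀ * M + t * (N : ℝ) ^ ε := le_add_of_nonneg_right (by positivity)
      _ ≤ (L ^ n₀ * M + t * (N : ℝ) ^ ε) / ρ ^ n₀ * ρ ^ n := by
          rw [div_mul_eq_mul_div, le_div_iff₀ (by positivity)]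
          exact mul_le_mul_of_nonneg_left (pow_le_pow_of_le_one hρ.le hρ1.le hn) (by positivity)
  · obtain ⟨m, rfl⟩ := Nat.exists_eq_add_of_le hn
    calc |x (n₀ + m) k - p k| ≤ ρ ^ m * t * ((N : ℝ) ^ ε * ((k : ℝ) + 1) ^ (-ε)) :=
          (hx m k).trans (mul_le_mul_of_nonneg_left (barrier_le_rpow_mul ε N k) (by positivity))
      _ ≤ (L ^ n₀ * M + t * (N : ℝ) ^ ε) * ρ ^ m * ((k : ℝ) + 1) ^ (-ε) := by
          rw [← mul_assoc]
          refine mul_le_mul_of_nonneg_right ?_ (by positivity)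
          nlinarith [show 0 ≤ L ^ n₀ * M * ρ ^ m by positivity]
      _ = (L ^ n₀ * M + t * (N : ℝ) ^ ε) / ρ ^ n₀ * ρ ^ (n₀ + m) * ((k : ℝ) + 1) ^ (-ε) := by
          rw [pow_add]; field_simp

end IsLogLipschitzKernel

end Iteration

section PhaseKernel

open Real

/-- The angle `Theta θ 1 (e ^ u)`, that is, `Theta` as a function of the logarithm `u` of the ratio
of its two arguments. -/
noncomputable def phase (θ u : ℝ) : ℝ :=
  Theta θ 1 (exp u)

/-- The derivative of `phase θ`; it is `sin θ * Pker θ 1 (e ^ u)`. -/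
noncomputable def phaseKernel (θ u : ℝ) : ℝ :=
  sin θ / (2 * cosh u + 2 * cos θ)

variable {θ : ℝ}

lemma Theta_exp_exp (θ a b : ℝ) : Theta θ (exp a) (exp b) = phase θ (b - a) := by
  have hfactor : ((exp a : ℝ) : ℂ) + (exp b : ℝ) * Complex.exp (θ * Complex.I) =
      (exp a : ℝ) * (((1 : ℝ) : ℂ) + (exp (b - a) : ℝ) * Complex.exp (θ * Complex.I)) := by
    rw [mul_add, ← mul_assoc, ← Complex.ofReal_mul, ← Complex.ofReal_mul, ← exp_add, mul_one,
      add_sub_cancel]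
  rw [phase, Theta, hfactor, Complex.arg_real_mul _ (exp_pos a), Theta]

lemma phase_eq_im_log (θ u : ℝ) :
    phase θ u = (Complex.log (1 + Complex.exp (u + θ * Complex.I))).im := by
  rw [phase, Theta, Complex.log_im, Complex.exp_add, Complex.ofReal_one, Complex.ofReal_exp]

lemma im_one_add_exp (θ u : ℝ) : (1 + Complex.exp (u + θ * Complex.I)).im = exp u * sin θ := by
  simp [Complex.exp_im]

lemma re_one_add_exp (θ u : ℝ) :
    (1 + Complex.exp (u + θ * Complex.I)).re = 1 + exp u * cos θ := by
  simp [Complex.exp_re]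

lemma normSq_one_add_exp (θ u : ℝ) :
    Complex.normSq (1 + Complex.exp (u + θ * Complex.I)) =
      exp u * (2 * cosh u + 2 * cos θ) := by
  rw [Complex.normSq_apply, im_one_add_exp, re_one_add_exp, cosh_eq, exp_neg]
  field_simp
  linear_combination exp u ^ 2 * sin_sq_add_cos_sq θ

lemma abs_cos_lt_one (hθ : 0 < θ) (hθπ : θ < π) : |cos θ| < 1 :=
  (sq_lt_one_iff_abs_lt_one _).1 <| by
    nlinarith [sin_sq_add_cos_sq θ, sin_pos_of_pos_of_lt_pi hθ hθπ]

lemma phase_nonneg (hθ : 0 < θ) (hθπ : θ < π) (u : ℝ) : 0 ≤ phase θ u := by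
  rw [phase_eq_im_log, Complex.log_im, Complex.arg_nonneg_iff, im_one_add_exp]
  exact mul_nonneg (exp_pos u).le (sin_pos_of_pos_of_lt_pi hθ hθπ).le

lemma hasDerivAt_phase (hθ : 0 < θ) (hθπ : θ < π) (u : ℝ) :
    HasDerivAt (phase θ) (phaseKernel θ u) u := by
  have him : (1 + Complex.exp (u + θ * Complex.I)).im ≠ 0 := by
    rw [im_one_add_exp]
    exact (mul_pos (exp_pos u) (sin_pos_of_pos_of_lt_pi hθ hθπ)).ne'
  have hexp : HasDerivAt (fun t : ℝ => 1 + Complex.exp (t + θ * Complex.I))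
      (Complex.exp (u + θ * Complex.I)) u := by
    simpa using
      ((Complex.ofRealCLM.hasDerivAt (x := u)).add_const (θ * Complex.I)).cexp.const_add 1
  have hlog := Complex.imCLM.hasFDerivAt.comp_hasDerivAt u (hexp.clog_real (Or.inr him))
  rw [funext (phase_eq_im_log θ)]
  refine hlog.congr_deriv ?_
  rw [Complex.imCLM_apply, Complex.div_im, normSq_one_add_exp, im_one_add_exp, re_one_add_exp,
    phaseKernel]
  simp only [Complex.exp_im, Complex.exp_re, Complex.add_re, Complex.add_im, Complex.ofReal_re,
    Complex.ofReal_im, Complex.re_ofReal_mul, Complex.im_ofReal_mul, Complex.I_re, Complex.I_im,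
    mul_zero, mul_one, add_zero, zero_add]
  field_simp
  ring

lemma one_sub_abs_cos_mul_cosh_le (θ u : ℝ) : (1 - |cos θ|) * cosh u ≤ cosh u + cos θ := by
  nlinarith [one_le_cosh u, neg_abs_le (cos θ), abs_nonneg (cos θ)]

lemma cosh_add_cos_pos (hθ : 0 < θ) (hθπ : θ < π) (u : ℝ) : 0 < 2 * cosh u + 2 * cos θ := by
  have hpos : 0 < (1 - |cos θ|) * cosh u :=
    mul_pos (sub_pos.2 (abs_cos_lt_one hθ hθπ)) (cosh_pos u)
  linarith [one_sub_abs_cos_mul_cosh_le θ u]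

lemma abs_sub_log_cosh_add_cos_le (hθ : 0 < θ) (hθπ : θ < π) (u v : ℝ) :
    |log (2 * cosh v + 2 * cos θ) - log (2 * cosh u + 2 * cos θ)| ≤
      1 / (1 - |cos θ|) * |v - u| := by
  have hcos := sub_pos.2 (abs_cos_lt_one hθ hθπ)
  refine convex_univ.norm_image_sub_le_of_norm_hasDerivWithin_le
    (f := fun t => log (2 * cosh t + 2 * cos θ))
    (f' := fun t => 2 * sinh t / (2 * cosh t + 2 * cos θ)) (fun t _ => ?_) (fun t _ => ?_)
    (Set.mem_univ u) (Set.mem_univ v)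
  · exact ((((hasDerivAt_cosh t).const_mul 2).add_const _).log
      (cosh_add_cos_pos hθ hθπ t).ne').hasDerivWithinAt
  · have hsinh : |sinh t| ≤ cosh t := by
      rw [abs_sinh, ← cosh_abs]
      exact (sinh_lt_cosh _).le
    rw [norm_eq_abs, abs_div, abs_of_pos (cosh_add_cos_pos hθ hθπ t), abs_mul, abs_two,
      div_le_div_iff₀ (cosh_add_cos_pos hθ hθπ t) hcos]
    nlinarith [one_sub_abs_cos_mul_cosh_le θ t]

lemma phaseKernel_le (hθ : 0 < θ) (hθπ : θ < π) (u : ℝ) :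
    phaseKernel θ u ≤ sin θ / (1 - |cos θ|) * exp (-|u|) := by
  have hcos := sub_pos.2 (abs_cos_lt_one hθ hθπ)
  have hcosh : exp |u| ≤ 2 * cosh u := by
    rw [← cosh_abs, cosh_eq]
    linarith [exp_pos (-|u|)]
  rw [exp_neg, ← div_eq_mul_inv, div_div, phaseKernel]
  refine div_le_div_of_nonneg_left (sin_pos_of_pos_of_lt_pi hθ hθπ).le (by positivity) ?_
  linarith [mul_le_mul_of_nonneg_left hcosh hcos.le, one_sub_abs_cos_mul_cosh_le θ u]

lemma isLogLipschitzKernel_phaseKernel (hθ : 0 < θ) (hθπ : θ < π) :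
    IsLogLipschitzKernel (phaseKernel θ) (1 / (1 - |cos θ|)) where
  rate_pos := one_div_pos.2 (sub_pos.2 (abs_cos_lt_one hθ hθπ))
  pos u := div_pos (sin_pos_of_pos_of_lt_pi hθ hθπ) (cosh_add_cos_pos hθ hθπ u)
  even u := by simp only [phaseKernel, cosh_neg]
  le_exp_mul u x := by
    have hlog := (abs_le.1 (abs_sub_log_cosh_add_cos_le hθ hθπ (u + x) u)).2
    rw [sub_add_cancel_left, abs_neg, ← log_div (cosh_add_cos_pos hθ hθπ _).ne'
      (cosh_add_cos_pos hθ hθπ _).ne', log_le_iff_le_exp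
      (div_pos (cosh_add_cos_pos hθ hθπ _) (cosh_add_cos_pos hθ hθπ _)),
      div_le_iff₀ (cosh_add_cos_pos hθ hθπ _)] at hlog
    rw [phaseKernel, phaseKernel, ← mul_div_assoc,
      div_le_div_iff₀ (cosh_add_cos_pos hθ hθπ _) (cosh_add_cos_pos hθ hθπ _)]
    nlinarith [mul_le_mul_of_nonneg_left hlog (sin_pos_of_pos_of_lt_pi hθ hθπ).le]
  exists_le_exp := ⟨_, phaseKernel_le hθ hθπ⟩

lemma hasSum_phase (hθ : 0 < θ) (hθπ : θ < π) {X Y : ℕ → ℝ} {j : ℕ}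
    (hX : ∀ k, 1 ≤ k → 0 < X k) (hY : 0 < Y j) (hfin : phi θ X Y j ≠ ∞) :
    HasSum (fun k => phase θ (log (Y j) - log (X (k + 1)))) (π * (phi θ X Y j).toReal) := by
  have hterm : ∀ k, Theta θ (X (k + 1)) (Y j) = phase θ (log (Y j) - log (X (k + 1))) :=
    fun k => by rw [← Theta_exp_exp, exp_log hY, exp_log (hX _ k.succ_pos)]
  have htoReal : ∀ u, (ENNReal.ofReal (phase θ u)).toReal = phase θ u :=
    fun u => ENNReal.toReal_ofReal (phase_nonneg hθ hθπ u)
  have hpi : ENNReal.ofReal (1 / π) ≠ 0 := (ENNReal.ofReal_pos.2 (one_div_pos.2 pi_pos)).ne'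
  simp only [phi, hterm] at hfin ⊢
  have hsum : ∑' k, ENNReal.ofReal (phase θ (log (Y j) - log (X (k + 1)))) ≠ ∞ :=
    fun htop => hfin (by rw [htop, ENNReal.mul_top hpi])
  rw [ENNReal.toReal_mul, ENNReal.toReal_ofReal (one_div_pos.2 pi_pos).le, ← mul_assoc,
    mul_one_div_cancel pi_ne_zero, one_mul, ENNReal.tsum_toReal_eq fun _ => ENNReal.ofReal_ne_top]
  simpa only [htoReal] using ENNReal.hasSum_toReal hsum

lemma exists_abs_le_mul_rpow_of_isBigO {f : ℕ → ℝ} {a : ℝ}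
    (hf : f =O[atTop] fun k : ℕ => (k : ℝ) ^ a) :
    ∃ M > 0, ∀ k : ℕ, |f (k + 1)| ≤ M * ((k : ℝ) + 1) ^ a := by
  obtain ⟨M, hM, hfM⟩ := bound_of_isBigO_nat_atTop hf
  refine ⟨M, hM, fun k => ?_⟩
  have hk : 0 < ((k : ℝ) + 1) ^ a := by positivity
  simpa [abs_of_pos hk] using hfM (x := k + 1) (by simpa using hk.ne')

end PhaseKernel

theorem stmt_4_general {θ α c ε : ℝ} (hθ : 0 < θ) (hθπ : θ < Real.pi) (hα : 1 < α)
    {P : ℕ → ℝ} (hPpos : ∀ k, 1 ≤ k → 0 < P k) (hPfin : ∀ j, 1 ≤ j → phi θ P P j ≠ ∞)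
    (hPlim : Tendsto (fun k : ℕ => Real.log (P k) - α * Real.log k) atTop (𝓝 c))
    (hε0 : 0 < ε) (hε2 : ε < 2)
    {X : ℕ → ℕ → ℝ} (hXpos : ∀ n k, 1 ≤ k → 0 < X n k)
    (hX0 : (fun k : ℕ => Real.log (X 0 k) - Real.log (P k)) =O[atTop]
      fun k : ℕ => (k : ℝ) ^ (-ε))
    (hiter : ∀ n j, 1 ≤ j → phi θ (X n) (X (n + 1)) j = phi θ P P j) :
    ∃ C : ℝ, 0 < C ∧ ∃ lam : ℝ, 0 < lam ∧ lam < 1 ∧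
      ∀ n k : ℕ, 1 ≤ k →
        (k : ℝ) ^ ε * |Real.log (X n k) - Real.log (P k)| ≤ C * lam ^ n := by
  have hp : Tendsto (fun k : ℕ => Real.log (P (k + 1)) - α * Real.log (k + 1)) atTop (𝓝 c) := by
    simpa only [Function.comp_def, Nat.cast_add_one] using hPlim.comp (tendsto_add_atTop_nat 1)
  have hfix : IsUpdate (phase θ) (fun j => Real.pi * (phi θ P P (j + 1)).toReal)
      (fun k => Real.log (P (k + 1))) fun k => Real.log (P (k + 1)) := fun j =>
    hasSum_phase hθ hθπ hPpos (hPpos _ j.succ_pos) (hPfin _ j.succ_pos)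
  have hupdate : ∀ n, IsUpdate (phase θ) (fun j => Real.pi * (phi θ P P (j + 1)).toReal)
      (fun k => Real.log (X n (k + 1))) fun k => Real.log (X (n + 1) (k + 1)) := fun n j => by
    have hj := hiter n (j + 1) j.succ_pos
    simpa only [hj] using
      hasSum_phase hθ hθπ (hXpos n) (hXpos (n + 1) _ j.succ_pos) (hj ▸ hPfin _ j.succ_pos)
  obtain ⟨M, hM, hXM⟩ := exists_abs_le_mul_rpow_of_isBigO hX0
  obtain ⟨C, hC, lam, hlam, hlam1, hdecay⟩ :=
    (isLogLipschitzKernel_phaseKernel hθ hθπ).exists_geometric_decay hα hp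
      (hasDerivAt_phase hθ hθπ) hfix (x := fun n k => Real.log (X n (k + 1))) hupdate
      hε0 hε2 hM hXM
  refine ⟨C, hC, lam, hlam, hlam1, fun n k hk => ?_⟩
  obtain ⟨k, rfl⟩ := Nat.exists_eq_add_of_le' hk
  have hk0 : 0 < ((k : ℝ) + 1) ^ ε := by positivity
  have hbound := hdecay n k
  rw [Real.rpow_neg (by positivity), ← div_eq_mul_inv, le_div_iff₀' hk0] at hbound
  exact_mod_cast hbound

theorem stmt_4 (θ : ℝ) (hθ : 0 < θ) (hθπ : θ < Real.pi)
    (Q : ℕ → ℝ) (hQpos : ∀ k, 1 ≤ k → 0 < Q k)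
    (hQ : (fun k : ℕ => Q k - (k : ℝ)) =O[atTop] fun _ : ℕ => (1 : ℝ))
    (hQ' : ∀ k : ℕ, 1 ≤ k → ((k : ℝ) - 1 / 2) * θ / Real.pi < Q k)
    (P : ℕ → ℝ) (hPpos : ∀ k, 1 ≤ k → 0 < P k)
    (hfix : ∀ j, 1 ≤ j → phi θ P P j = ENNReal.ofReal (Q j))
    (hPasymp : (fun k : ℕ => Real.log (P k) - (1 + θ / Real.pi) * Real.log k)
      =o[atTop] fun _ : ℕ => (1 : ℝ))
    (ε : ℝ) (hε0 : 0 < ε) (hε2 : ε < 2)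
    (X : ℕ → ℕ → ℝ) (hXpos : ∀ n, ∀ k, 1 ≤ k → 0 < X n k)
    (hX0 : (fun k : ℕ => Real.log (X 0 k) - Real.log (P k)) =O[atTop]
      fun k : ℕ => (k : ℝ) ^ (-ε))
    (hiter : ∀ n : ℕ, ∀ j, 1 ≤ j → phi θ (X n) (X (n + 1)) j = ENNReal.ofReal (Q j)) :
    ∃ C : ℝ, 0 < C ∧ ∃ lam : ℝ, 0 < lam ∧ lam < 1 ∧
      ∀ n : ℕ, ∀ k : ℕ, 1 ≤ k →
        (k : ℝ) ^ ε * |Real.log (X n k) - Real.log (P k)| ≤ C * lam ^ n :=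
  stmt_4_general hθ hθπ (lt_add_of_pos_right 1 (div_pos hθ Real.pi_pos)) hPpos
    (fun j hj => by simp [hfix j hj]) ((isLittleO_one_iff ℝ).1 hPasymp) hε0 hε2 hXpos hX0
    (fun n j hj => (hiter n j hj).trans (hfix j hj).symm)
end

section
/- Assume Q_k = k + O(1). If X and Y are sequences of positive reals with ln X_k = α_θ·ln k + o(1) as k → ∞ and φ_j(X,Y) = Q_j for all j ≥ 1, then ln Y_j = α_θ·ln j + o(1) as j → ∞. -/
open Filter Asymptotics MeasureTheory
open scoped ENNReal Topology

/-!
For a sequence `X`, `(1/π) ∑ Θ(X_k, E)` is a smoothed count of the `X_k` below `E`. When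
`X_k = b k ^ α` exactly, the sum differs by at most `1` from its integral, which by scaling is
`D_α (E / b) ^ (1/α)`. If only `e ^ (-ε) k ^ α ≤ X_k ≤ e ^ ε k ^ α` for large `k`, the finitely many
exceptional terms add `O(1)`, so `φ_j = Q_j` gives
`D_α (Y_j e ^ (-ε)) ^ (1/α) - O(1) ≤ Q_j ≤ D_α (Y_j e ^ ε) ^ (1/α) + O(1)`; taking logarithms, it
determines `ln Y_j` up to `ε + o(1)`.

To compute `D_α`, write `Θ(s ^ α, 1) = arg (s ^ α + w)` with `w = e ^ (iθ)` as the integral of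
`-Im (1 / (u + w))` over `u > s ^ α`. Exchanging integrals gives `π D_α = Im (w S)`, where
`S = ∫ u ^ (a - 1) / (u + w) du = π w ^ (a - 1) / sin (π a)` is a Stieltjes transform and `a = 1/α`.
Hence `D_α = sin (θ/α) / sin (π/α)`, which is `1` for `α = 1 + θ/π`. The Stieltjes transform itself
comes from the Laplace transform of `t ^ (a - 1)`, used twice.
-/

section Laplace

/-- The measure `t ^ (a - 1) dt` on `(0, ∞)`: integrating against it is taking a Mellin transform
at `a`, and its Laplace transform is `z ↦ Γ(a) z ^ (-a)`. -/
noncomputable def rpowMeasure (a : ℝ) : Measure ℝ :=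
  (volume.restrict (Set.Ioi 0)).withDensity fun t => ENNReal.ofReal (t ^ (a - 1))

instance (a : ℝ) : SFinite (rpowMeasure a) := by
  unfold rpowMeasure
  infer_instance

variable {F : Type*} [NormedAddCommGroup F] [NormedSpace ℝ F] {a b r : ℝ} {z : ℂ}

lemma ae_rpowMeasure_of_forall_pos {p : ℝ → Prop} (h : ∀ t, 0 < t → p t) :
    ∀ᵐ t ∂rpowMeasure a, p t :=
  (withDensity_absolutelyContinuous _ _).ae_le (ae_restrict_of_forall_mem measurableSet_Ioi h)

lemma toReal_ofReal_rpow_smul_ae_eq (a : ℝ) (f : ℝ → F) :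
    (fun t : ℝ => (ENNReal.ofReal (t ^ (a - 1))).toReal • f t) =ᵐ[volume.restrict (Set.Ioi 0)]
      fun t => t ^ (a - 1) • f t := by
  filter_upwards [ae_restrict_mem measurableSet_Ioi] with t (ht : 0 < t)
  rw [ENNReal.toReal_ofReal (by positivity)]

lemma integral_rpowMeasure (a : ℝ) (f : ℝ → F) :
    ∫ t, f t ∂rpowMeasure a = ∫ t in Set.Ioi (0 : ℝ), t ^ (a - 1) • f t := by
  rw [rpowMeasure, integral_withDensity_eq_integral_toReal_smul (by fun_prop) (by simp)]
  exact integral_congr_ae (toReal_ofReal_rpow_smul_ae_eq a f)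

lemma integrable_rpowMeasure_iff {f : ℝ → F} :
    Integrable f (rpowMeasure a) ↔
      IntegrableOn (fun t : ℝ => t ^ (a - 1) • f t) (Set.Ioi 0) := by
  rw [rpowMeasure, integrable_withDensity_iff_integrable_smul' (by fun_prop) (by simp)]
  exact integrable_congr (toReal_ofReal_rpow_smul_ae_eq a f)

lemma rpow_neg_smul_eq {t : ℝ} (ht : 0 < t) (f : ℝ → F) :
    t ^ (b - 1) • t ^ (-a) • f t = t ^ (b - a - 1) • f t := by
  rw [smul_smul, ← Real.rpow_add ht]
  ring_nf

lemma integral_rpow_neg_smul_rpowMeasure (a b : ℝ) (f : ℝ → F) :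
    ∫ t, t ^ (-a) • f t ∂rpowMeasure b = ∫ t, f t ∂rpowMeasure (b - a) := by
  simp only [integral_rpowMeasure]
  exact setIntegral_congr_fun measurableSet_Ioi fun t ht => rpow_neg_smul_eq ht f

lemma integrable_rpow_neg_smul_rpowMeasure_iff {f : ℝ → F} :
    Integrable (fun t => t ^ (-a) • f t) (rpowMeasure b) ↔ Integrable f (rpowMeasure (b - a)) := by
  simp only [integrable_rpowMeasure_iff]
  exact integrableOn_congr_fun (fun t ht => rpow_neg_smul_eq ht f) measurableSet_Ioi

lemma integrable_exp_neg_mul_rpowMeasure (ha : 0 < a) (hr : 0 < r) :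
    Integrable (fun t : ℝ => Real.exp (-(r * t))) (rpowMeasure a) := by
  simpa [integrable_rpowMeasure_iff] using
    integrableOn_rpow_mul_exp_neg_mul_rpow (p := 1) (by linarith : -1 < a - 1) one_pos hr

lemma integral_exp_neg_mul_rpowMeasure (ha : 0 < a) (hr : 0 < r) :
    ∫ t, Real.exp (-(r * t)) ∂rpowMeasure a = r ^ (-a) * Real.Gamma a := by
  simp only [integral_rpowMeasure, smul_eq_mul]
  rw [Real.integral_rpow_mul_exp_neg_mul_Ioi ha hr, one_div, Real.inv_rpow hr.le,
    Real.rpow_neg hr.le]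

lemma norm_cexp_neg_mul_ofReal (z : ℂ) (t : ℝ) :
    ‖Complex.exp (-(z * t))‖ = Real.exp (-(z.re * t)) := by
  simp [Complex.norm_exp]

lemma integrable_cexp_neg_mul_rpowMeasure (ha : 0 < a) (hz : 0 < z.re) :
    Integrable (fun t : ℝ => Complex.exp (-(z * t))) (rpowMeasure a) :=
  (integrable_exp_neg_mul_rpowMeasure ha hz).mono' (Measurable.aestronglyMeasurable (by fun_prop))
    (.of_forall fun t => (norm_cexp_neg_mul_ofReal z t).le)

lemma neg_mem_interior_integrableExpSet_rpowMeasure (ha : 0 < a) (hr : 0 < r) :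
    -r ∈ interior (ProbabilityTheory.integrableExpSet id (rpowMeasure a)) := by
  refine mem_interior.2 ⟨Set.Iio 0, fun s (hs : s < 0) => ?_, isOpen_Iio, neg_neg_iff_pos.2 hr⟩
  simpa [ProbabilityTheory.integrableExpSet] using
    integrable_exp_neg_mul_rpowMeasure ha (neg_pos.2 hs)

lemma analyticOnNhd_integral_cexp_neg_mul_rpowMeasure (ha : 0 < a) :
    AnalyticOnNhd ℂ (fun z => ∫ t, Complex.exp (-(z * t)) ∂rpowMeasure a) {z | 0 < z.re} := by
  intro z hz
  have hmgf : AnalyticAt ℂ (ProbabilityTheory.complexMGF id (rpowMeasure a)) (-z) :=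
    ProbabilityTheory.analyticAt_complexMGF
      (by simpa using neg_mem_interior_integrableExpSet_rpowMeasure ha hz)
  simpa [ProbabilityTheory.complexMGF, Function.comp_def] using hmgf.comp analyticAt_id.neg

-- Both sides are holomorphic on the half-plane and agree on the positive reals.
lemma integral_cexp_neg_mul_rpowMeasure (ha : 0 < a) (hz : 0 < z.re) :
    ∫ t, Complex.exp (-(z * t)) ∂rpowMeasure a = z ^ (-(a : ℂ)) * (Real.Gamma a : ℂ) := by
  have hrhs : AnalyticOnNhd ℂ (fun z : ℂ => z ^ (-(a : ℂ)) * (Real.Gamma a : ℂ)) {z | 0 < z.re} :=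
    fun y hy => (analyticAt_id.cpow analyticAt_const (Or.inl hy)).mul analyticAt_const
  have hreal : ∀ᶠ x : ℝ in 𝓝[≠] 1, ∫ t, Complex.exp (-((x : ℂ) * t)) ∂rpowMeasure a
      = (x : ℂ) ^ (-(a : ℂ)) * (Real.Gamma a : ℂ) := by
    filter_upwards [nhdsWithin_le_nhds (eventually_gt_nhds one_pos)] with x hx
    rw [← Complex.ofReal_neg, ← Complex.ofReal_cpow hx.le, ← Complex.ofReal_mul,
      ← integral_exp_neg_mul_rpowMeasure ha hx, ← integral_complex_ofReal]
    simp
  have hcoe : Tendsto (fun x : ℝ => (x : ℂ)) (𝓝[≠] 1) (𝓝[≠] (1 : ℂ)) := by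
    simpa using! Complex.continuous_ofReal.continuousWithinAt.tendsto_nhdsWithin
      (x := (1 : ℝ)) (s := {1}ᶜ) (t := {1}ᶜ) fun x hx => by simpa using hx
  exact (analyticOnNhd_integral_cexp_neg_mul_rpowMeasure ha).eqOn_of_preconnected_of_frequently_eq
    hrhs (convex_halfSpace_re_gt 0).isPreconnected (by simp) (hcoe.frequently hreal.frequently) hz

end Laplace

section Stieltjes
variable {a b r : ℝ} {c d w : ℂ}

lemma mul_ofReal_cpow (hc : c ≠ 0) (s : ℂ) {t : ℝ} (ht : 0 < t) :
    (c * t) ^ s = c ^ s * (t : ℂ) ^ s := by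
  have ht' : (t : ℂ) ≠ 0 := Complex.ofReal_ne_zero.2 ht.ne'
  rw [Complex.cpow_def_of_ne_zero (mul_ne_zero hc ht'), Complex.cpow_def_of_ne_zero hc,
    Complex.cpow_def_of_ne_zero ht', Complex.log_mul_ofReal t ht c hc, Complex.ofReal_log ht.le,
    ← Complex.exp_add]
  ring_nf

lemma cexp_neg_mul_add_mul (c d : ℂ) (r t : ℝ) : Complex.exp (-((c * r + d) * t)) =
    Complex.exp (-(d * t)) * Complex.exp (-(c * t * r)) := by
  rw [← Complex.exp_add]
  ring_nf

lemma integrable_cexp_neg_mul_add_mul (ha : 0 < a) (hab : a < b) (hc : 0 < c.re) (hd : 0 < d.re) :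
    Integrable (fun p : ℝ × ℝ => Complex.exp (-((c * p.1 + d) * p.2)))
      ((rpowMeasure a).prod (rpowMeasure b)) := by
  refine (integrable_prod_iff' (Measurable.aestronglyMeasurable (by fun_prop))).2 ⟨?_, ?_⟩
  · refine ae_rpowMeasure_of_forall_pos fun t ht => ?_
    simp only [cexp_neg_mul_add_mul]
    exact (integrable_cexp_neg_mul_rpowMeasure ha (by simpa using mul_pos hc ht)).const_mul _
  · have hnorm : ∀ t : ℝ, 0 < t →
        c.re ^ (-a) * Real.Gamma a * (t ^ (-a) • Real.exp (-(d.re * t))) =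
          ∫ r, ‖Complex.exp (-((c * r + d) * t))‖ ∂rpowMeasure a := by
      intro t ht
      simp only [cexp_neg_mul_add_mul, norm_mul, integral_const_mul, norm_cexp_neg_mul_ofReal,
        Complex.re_mul_ofReal]
      rw [integral_exp_neg_mul_rpowMeasure ha (mul_pos hc ht), Real.mul_rpow hc.le ht.le,
        smul_eq_mul]
      ring
    refine Integrable.congr ?_ (ae_rpowMeasure_of_forall_pos hnorm)
    exact (integrable_rpow_neg_smul_rpowMeasure_iff.2
      (integrable_exp_neg_mul_rpowMeasure (sub_pos.2 hab) hd)).const_mul _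

lemma integral_integral_cexp_neg_mul_add_mul (ha : 0 < a) (hab : a < b) (hc : 0 < c.re)
    (hd : 0 < d.re) :
    ∫ t, ∫ r, Complex.exp (-((c * r + d) * t)) ∂rpowMeasure a ∂rpowMeasure b =
      c ^ (-(a : ℂ)) * Real.Gamma a * (d ^ ((a : ℂ) - b) * Real.Gamma (b - a)) := by
  have hc0 : c ≠ 0 := by rintro rfl; simp at hc
  have hinner : ∀ t : ℝ, 0 < t → ∫ r, Complex.exp (-((c * r + d) * t)) ∂rpowMeasure a =
      c ^ (-(a : ℂ)) * Real.Gamma a * (t ^ (-a) • Complex.exp (-(d * t))) := by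
    intro t ht
    simp only [cexp_neg_mul_add_mul, integral_const_mul]
    rw [integral_cexp_neg_mul_rpowMeasure ha (by simpa using mul_pos hc ht),
      mul_ofReal_cpow hc0 _ ht, Complex.real_smul, Complex.ofReal_cpow ht.le, Complex.ofReal_neg]
    ring
  rw [integral_congr_ae (ae_rpowMeasure_of_forall_pos hinner), integral_const_mul,
    integral_rpow_neg_smul_rpowMeasure, integral_cexp_neg_mul_rpowMeasure (sub_pos.2 hab) hd,
    Complex.ofReal_sub, neg_sub]

lemma ae_integral_cexp_eq_cpow (hb : 0 < b) (hc : 0 < c.re) (hd : 0 < d.re) :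
    ∀ᵐ r : ℝ ∂rpowMeasure a, ∫ t, Complex.exp (-((c * r + d) * t)) ∂rpowMeasure b =
      (c * r + d) ^ (-(b : ℂ)) * Real.Gamma b :=
  ae_rpowMeasure_of_forall_pos fun r hr => integral_cexp_neg_mul_rpowMeasure hb
    (by simpa using add_pos (mul_pos hc hr) hd)

lemma integrable_mul_add_cpow_neg (ha : 0 < a) (hab : a < b) (hc : 0 < c.re) (hd : 0 < d.re) :
    Integrable (fun r : ℝ => (c * r + d) ^ (-(b : ℂ))) (rpowMeasure a) := by
  have hΓ : (Real.Gamma b : ℂ) ≠ 0 :=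
    Complex.ofReal_ne_zero.2 (Real.Gamma_pos_of_pos (ha.trans hab)).ne'
  refine (integrable_mul_const_iff hΓ.isUnit _).1 ?_
  exact (integrable_cexp_neg_mul_add_mul ha hab hc hd).integral_prod_left.congr
    (ae_integral_cexp_eq_cpow (ha.trans hab) hc hd)

lemma integral_mul_add_cpow_neg (ha : 0 < a) (hab : a < b) (hc : 0 < c.re) (hd : 0 < d.re) :
    (∫ r : ℝ, (c * r + d) ^ (-(b : ℂ)) ∂rpowMeasure a) * Real.Gamma b =
      c ^ (-(a : ℂ)) * Real.Gamma a * (d ^ ((a : ℂ) - b) * Real.Gamma (b - a)) := by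
  rw [← integral_integral_cexp_neg_mul_add_mul ha hab hc hd, ← integral_mul_const,
    ← integral_congr_ae (ae_integral_cexp_eq_cpow (ha.trans hab) hc hd)]
  exact integral_integral_swap (integrable_cexp_neg_mul_add_mul ha hab hc hd)

lemma abs_arg_lt_pi (hw : w ∈ Complex.slitPlane) : |w.arg| < Real.pi :=
  abs_lt.2 ⟨Complex.neg_pi_lt_arg w,
    (Complex.arg_le_pi w).lt_of_ne (Complex.mem_slitPlane_iff_arg.1 hw).1⟩

lemma abs_arg_mul_lt_pi_div_two (hw : w ∈ Complex.slitPlane) (hr : |r| ≤ 1 / 2) :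
    |w.arg * r| < Real.pi / 2 := by
  rw [abs_mul]
  nlinarith [abs_arg_lt_pi hw, abs_nonneg w.arg]

lemma re_cpow_ofReal_pos (hw : w ∈ Complex.slitPlane) (hr : |r| ≤ 1 / 2) :
    0 < (w ^ (r : ℂ)).re := by
  rw [Complex.cpow_ofReal_re]
  have := norm_pos_iff.2 (Complex.slitPlane_ne_zero hw)
  have := Real.cos_pos_of_mem_Ioo (abs_lt.1 (abs_arg_mul_lt_pi_div_two hw hr))
  positivity

lemma cpow_ofReal_mul (hw : w ∈ Complex.slitPlane) (hr : |r| ≤ 1 / 2) (s : ℂ) :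
    w ^ (r * s) = (w ^ (r : ℂ)) ^ s := by
  have him : (Complex.log w * r).im = w.arg * r := by simp [Complex.log_im]
  have hlt := abs_lt.1 (abs_arg_mul_lt_pi_div_two hw hr)
  apply Complex.cpow_mul <;> rw [him] <;> linarith [Real.pi_pos]

-- The two square roots lie in the right half-plane, where `integral_mul_add_cpow_neg` applies.
lemma ofReal_add_inv_eq (hw : w ≠ 0) (u : ℝ) : ((u : ℂ) + w)⁻¹ = w ^ ((-1 / 2 : ℝ) : ℂ) *
    (w ^ ((-1 / 2 : ℝ) : ℂ) * u + w ^ ((1 / 2 : ℝ) : ℂ)) ^ (-((1 : ℝ) : ℂ)) := by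
  have hd : w ^ ((1 / 2 : ℝ) : ℂ) = w ^ ((-1 / 2 : ℝ) : ℂ) * w := by
    nth_rewrite 3 [← Complex.cpow_one w]
    rw [← Complex.cpow_add _ _ hw]
    norm_num
  have hc : w ^ ((-1 / 2 : ℝ) : ℂ) ≠ 0 :=
    (Complex.cpow_ne_zero_iff_of_exponent_ne_zero (by norm_num)).2 hw
  rw [hd, ← mul_add, Complex.ofReal_one, Complex.cpow_neg_one, mul_inv, mul_inv_cancel_left₀ hc]

lemma integrable_ofReal_add_inv (ha : 0 < a) (ha1 : a < 1) (hw : w ∈ Complex.slitPlane) :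
    Integrable (fun u : ℝ => ((u : ℂ) + w)⁻¹) (rpowMeasure a) := by
  simp only [ofReal_add_inv_eq (Complex.slitPlane_ne_zero hw)]
  exact (integrable_mul_add_cpow_neg ha ha1 (re_cpow_ofReal_pos hw (by norm_num [abs_le]))
    (re_cpow_ofReal_pos hw (by norm_num [abs_le]))).const_mul _

lemma integral_ofReal_add_inv (ha : 0 < a) (ha1 : a < 1) (hw : w ∈ Complex.slitPlane) :
    ∫ u : ℝ, ((u : ℂ) + w)⁻¹ ∂rpowMeasure a =
      w ^ ((a : ℂ) - 1) * (Real.pi / Real.sin (Real.pi * a) : ℝ) := by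
  have hw0 := Complex.slitPlane_ne_zero hw
  have hint := integral_mul_add_cpow_neg ha ha1
    (re_cpow_ofReal_pos hw (r := -1 / 2) (by norm_num [abs_le]))
    (re_cpow_ofReal_pos hw (r := 1 / 2) (by norm_num [abs_le]))
  rw [Real.Gamma_one, Complex.ofReal_one, mul_one, ← cpow_ofReal_mul hw (by norm_num [abs_le]),
    ← cpow_ofReal_mul hw (by norm_num [abs_le])] at hint
  simp only [ofReal_add_inv_eq hw0, integral_const_mul, Complex.ofReal_one]
  have hexp : (a : ℂ) - 1 = (-1 / 2 : ℝ) + ((-1 / 2 : ℝ) * -a + (1 / 2 : ℝ) * (a - 1)) := by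
    push_cast
    ring
  rw [hint, mul_mul_mul_comm, ← mul_assoc, ← Complex.cpow_add _ _ hw0, ← Complex.cpow_add _ _ hw0,
    ← hexp, ← Complex.ofReal_mul, Real.Gamma_mul_Gamma_one_sub]

end Stieltjes

section Argument
variable {a r α θ x : ℝ} {w : ℂ}

lemma ofReal_add_mem_slitPlane (hw : w.im ≠ 0) (x : ℝ) : (x : ℂ) + w ∈ Complex.slitPlane :=
  Or.inr (by simpa)

lemma hasDerivAt_arg_ofReal_add (hw : w.im ≠ 0) (x : ℝ) :
    HasDerivAt (fun x : ℝ => Complex.arg (x + w)) ((x + w)⁻¹.im) x := by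
  have hlog := ((Complex.ofRealCLM.hasDerivAt (x := x)).add_const w).clog_real
    (ofReal_add_mem_slitPlane hw x)
  simpa [Function.comp_def, Complex.log_im] using!
    (Complex.imCLM.hasFDerivAt.comp_hasDerivAt x hlog)

lemma im_ofReal_add_inv_neg (hw : 0 < w.im) (x : ℝ) : ((x : ℂ) + w)⁻¹.im < 0 := by
  have := Complex.normSq_pos.2
    (Complex.slitPlane_ne_zero (ofReal_add_mem_slitPlane hw.ne' x))
  simpa [Complex.inv_im] using! div_neg_of_neg_of_pos (neg_neg_of_pos hw) this

lemma tendsto_arg_ofReal_add_atTop (w : ℂ) :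
    Tendsto (fun x : ℝ => Complex.arg (x + w)) atTop (𝓝 0) := by
  have hinv : Tendsto (fun x : ℝ => ((x⁻¹ : ℝ) : ℂ)) atTop (𝓝 ((0 : ℝ) : ℂ)) :=
    (Complex.continuous_ofReal.tendsto 0).comp tendsto_inv_atTop_zero
  have hone : Tendsto (fun x : ℝ => 1 + ((x⁻¹ : ℝ) : ℂ) * w) atTop (𝓝 1) := by
    simpa using (hinv.mul_const w).const_add 1
  rw [← Complex.arg_one]
  refine ((Complex.continuousAt_arg (by simp)).tendsto.comp hone).congr' ?_
  filter_upwards [eventually_gt_atTop 0] with x hx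
  have hx' : (x : ℂ) ≠ 0 := Complex.ofReal_ne_zero.2 hx.ne'
  rw [Function.comp_apply, ← Complex.arg_real_mul _ hx, mul_add, Complex.ofReal_inv, mul_one,
    mul_inv_cancel_left₀ hx']

lemma antitone_arg_ofReal_add (hw : 0 < w.im) : Antitone fun x : ℝ => Complex.arg (x + w) :=
  antitone_of_deriv_nonpos (fun x => (hasDerivAt_arg_ofReal_add hw.ne' x).differentiableAt)
    fun x => (hasDerivAt_arg_ofReal_add hw.ne' x).deriv ▸ (im_ofReal_add_inv_neg hw x).le

lemma lintegral_Ioi_neg_im_ofReal_add_inv (hw : 0 < w.im) (x : ℝ) :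
    ∫⁻ u in Set.Ioi x, ENNReal.ofReal (-((u : ℂ) + w)⁻¹.im) =
      ENNReal.ofReal (Complex.arg (x + w)) := by
  have hderiv : ∀ u ∈ Set.Ici x, HasDerivAt (fun x : ℝ => Complex.arg (x + w)) ((u + w)⁻¹.im) u :=
    fun u _ => hasDerivAt_arg_ofReal_add hw.ne' u
  have hneg : ∀ u ∈ Set.Ioi x, ((u : ℂ) + w)⁻¹.im ≤ 0 := fun u _ => (im_ofReal_add_inv_neg hw u).le
  have hlim := tendsto_arg_ofReal_add_atTop w
  have hint : IntegrableOn (fun u : ℝ => -((u : ℂ) + w)⁻¹.im) (Set.Ioi x) :=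
    (integrableOn_Ioi_deriv_of_nonpos' hderiv hneg hlim).neg
  rw [← ofReal_integral_eq_lintegral_ofReal hint
      (.of_forall fun u => neg_nonneg.2 (im_ofReal_add_inv_neg hw u).le),
    integral_neg, integral_Ioi_of_hasDerivAt_of_nonpos' hderiv hneg hlim, zero_sub, neg_neg]

-- Layer cake: `arg (s ^ α + w)` is the mass of `{u | s < u ^ α⁻¹} = (s ^ α, ∞)`.
lemma lintegral_arg_rpow_add (hα : 0 < α) (hw : 0 < w.im) :
    ∫⁻ s in Set.Ioi (0 : ℝ), ENNReal.ofReal (Complex.arg ((s ^ α : ℝ) + w)) =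
      ∫⁻ u in Set.Ioi (0 : ℝ), ENNReal.ofReal (u ^ α⁻¹ * -((u : ℂ) + w)⁻¹.im) := by
  set μ : Measure ℝ := (volume.restrict (Set.Ioi 0)).withDensity
    fun u => ENNReal.ofReal (-((u : ℂ) + w)⁻¹.im)
  have hμ : ∀ s ∈ Set.Ioi (0 : ℝ), μ {u | s < u ^ α⁻¹} =
      ENNReal.ofReal (Complex.arg ((s ^ α : ℝ) + w)) := by
    intro s (hs : 0 < s)
    have hset : {u | s < u ^ α⁻¹} ∩ Set.Ioi 0 = Set.Ioi (s ^ α) := by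
      ext u
      refine ⟨fun ⟨hu, hu0⟩ => (Real.lt_rpow_inv_iff_of_pos hs.le (le_of_lt hu0) hα).1 hu,
        fun hu => ?_⟩
      have hu0 : 0 < u := (Real.rpow_pos_of_pos hs α).trans hu
      exact ⟨(Real.lt_rpow_inv_iff_of_pos hs.le hu0.le hα).2 hu, hu0⟩
    rw [withDensity_apply _ (measurableSet_lt (by fun_prop) (by fun_prop)),
      Measure.restrict_restrict (measurableSet_lt (by fun_prop) (by fun_prop)), hset,
      lintegral_Ioi_neg_im_ofReal_add_inv hw]
  have hnonneg : 0 ≤ᵐ[μ] fun u => u ^ α⁻¹ :=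
    (withDensity_absolutelyContinuous _ _).ae_le
      (ae_restrict_of_forall_mem measurableSet_Ioi fun u hu => Real.rpow_nonneg (le_of_lt hu) _)
  rw [← setLIntegral_congr_fun measurableSet_Ioi hμ,
    ← lintegral_eq_lintegral_meas_lt μ hnonneg (by fun_prop),
    lintegral_withDensity_eq_lintegral_mul _ (by fun_prop) (by fun_prop)]
  refine setLIntegral_congr_fun measurableSet_Ioi fun u hu => ?_
  simp only [Pi.mul_apply]
  rw [mul_comm, ← ENNReal.ofReal_mul (Real.rpow_nonneg (le_of_lt hu) _)]

lemma rpow_mul_neg_im_ofReal_add_inv (hw : w.im ≠ 0) {u : ℝ} (hu : 0 < u) :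
    u ^ a * -((u : ℂ) + w)⁻¹.im = u ^ (a - 1) • (w * ((u : ℂ) + w)⁻¹).im := by
  have hne := Complex.slitPlane_ne_zero (ofReal_add_mem_slitPlane hw u)
  have hsplit : w * ((u : ℂ) + w)⁻¹ = 1 - u * ((u : ℂ) + w)⁻¹ := by
    field_simp
    ring
  rw [hsplit, Complex.sub_im, Complex.one_im, zero_sub, Complex.im_ofReal_mul, smul_eq_mul,
    Real.rpow_sub_one hu.ne']
  field_simp

lemma integrable_im_mul_ofReal_add_inv (ha : 0 < a) (ha1 : a < 1) (hw : w ∈ Complex.slitPlane) :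
    Integrable (fun u : ℝ => (w * ((u : ℂ) + w)⁻¹).im) (rpowMeasure a) :=
  ((integrable_ofReal_add_inv ha ha1 hw).const_mul w).im

lemma integral_im_mul_ofReal_add_inv (ha : 0 < a) (ha1 : a < 1) (hw : w ∈ Complex.slitPlane) :
    ∫ u : ℝ, (w * ((u : ℂ) + w)⁻¹).im ∂rpowMeasure a =
      ‖w‖ ^ a * Real.sin (w.arg * a) * (Real.pi / Real.sin (Real.pi * a)) := by
  have hcomm := integral_im ((integrable_ofReal_add_inv ha ha1 hw).const_mul w)
  simp only [RCLike.im_to_complex] at hcomm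
  have hpow : w * w ^ ((a : ℂ) - 1) = w ^ (a : ℂ) := by
    have hw0 := Complex.slitPlane_ne_zero hw
    rw [Complex.cpow_sub _ _ hw0, Complex.cpow_one, mul_div_cancel₀ _ hw0]
  rw [hcomm, integral_const_mul, integral_ofReal_add_inv ha ha1 hw, ← mul_assoc, hpow,
    Complex.im_mul_ofReal, Complex.cpow_ofReal_im]

lemma lintegral_arg_rpow_add_eq (hα : 1 < α) (hw : 0 < w.im) :
    ∫⁻ s in Set.Ioi (0 : ℝ), ENNReal.ofReal (Complex.arg ((s ^ α : ℝ) + w)) =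
      ENNReal.ofReal (‖w‖ ^ α⁻¹ * Real.sin (w.arg / α) * (Real.pi / Real.sin (Real.pi / α))) := by
  have hα0 : 0 < α := one_pos.trans hα
  have ha1 : α⁻¹ < 1 := inv_lt_one_of_one_lt₀ hα
  have hslit : w ∈ Complex.slitPlane := Or.inr hw.ne'
  have hnonneg : ∀ᵐ u : ℝ ∂volume.restrict (Set.Ioi 0),
      0 ≤ u ^ (α⁻¹ - 1) • (w * ((u : ℂ) + w)⁻¹).im :=
    ae_restrict_of_forall_mem measurableSet_Ioi fun u hu => by
      rw [← rpow_mul_neg_im_ofReal_add_inv hw.ne' hu]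
      exact mul_nonneg (Real.rpow_nonneg (le_of_lt hu) _)
        (neg_nonneg.2 (im_ofReal_add_inv_neg hw u).le)
  rw [lintegral_arg_rpow_add hα0 hw, setLIntegral_congr_fun measurableSet_Ioi fun u hu => by
      rw [rpow_mul_neg_im_ofReal_add_inv hw.ne' hu],
    ← ofReal_integral_eq_lintegral_ofReal (integrable_rpowMeasure_iff.1
      (integrable_im_mul_ofReal_add_inv (inv_pos.2 hα0) ha1 hslit)) hnonneg,
    ← integral_rpowMeasure, integral_im_mul_ofReal_add_inv (inv_pos.2 hα0) ha1 hslit,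
    div_eq_mul_inv Real.pi α, div_eq_mul_inv w.arg α]

lemma arg_ofReal_add_nonneg (hw : 0 ≤ w.im) (x : ℝ) : 0 ≤ Complex.arg (x + w) :=
  Complex.arg_nonneg_iff.2 (by simpa)

lemma measurable_arg_rpow_add (α : ℝ) (w : ℂ) :
    Measurable fun s : ℝ => Complex.arg ((s ^ α : ℝ) + w) :=
  Complex.measurable_arg.comp (by fun_prop)

lemma integrableOn_arg_rpow_add (hα : 1 < α) (hw : 0 < w.im) :
    IntegrableOn (fun s : ℝ => Complex.arg ((s ^ α : ℝ) + w)) (Set.Ioi 0) := by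
  rw [IntegrableOn, ← lintegral_ofReal_ne_top_iff_integrable
    (measurable_arg_rpow_add α w).aestronglyMeasurable
    (.of_forall fun s => arg_ofReal_add_nonneg hw.le _), lintegral_arg_rpow_add_eq hα hw]
  exact ENNReal.ofReal_ne_top

lemma sin_div_nonneg (hα : 1 ≤ α) (hx : 0 ≤ x) (hxπ : x ≤ Real.pi) :
    0 ≤ Real.sin (x / α) :=
  Real.sin_nonneg_of_nonneg_of_le_pi (by positivity) ((div_le_self hx hα).trans hxπ)

lemma sin_div_pos (hα : 1 < α) (hx : 0 < x) (hxπ : x ≤ Real.pi) :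
    0 < Real.sin (x / α) :=
  Real.sin_pos_of_pos_of_lt_pi (div_pos hx (one_pos.trans hα)) ((div_lt_self hx hα).trans_le hxπ)

lemma integral_arg_rpow_add (hα : 1 < α) (hw : 0 < w.im) :
    ∫ s in Set.Ioi (0 : ℝ), Complex.arg ((s ^ α : ℝ) + w) =
      ‖w‖ ^ α⁻¹ * Real.sin (w.arg / α) * (Real.pi / Real.sin (Real.pi / α)) := by
  have hsin := sin_div_nonneg hα.le Real.pi_pos.le le_rfl
  have hsin' := sin_div_nonneg hα.le (Complex.arg_nonneg_iff.2 hw.le) (Complex.arg_le_pi w)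
  rw [integral_eq_lintegral_of_nonneg_ae (.of_forall fun s => arg_ofReal_add_nonneg hw.le _)
    (measurable_arg_rpow_add α w).aestronglyMeasurable, lintegral_arg_rpow_add_eq hα hw,
    ENNReal.toReal_ofReal (by positivity)]

lemma im_mul_exp_mul_I (r θ : ℝ) :
    ((r : ℂ) * Complex.exp (θ * Complex.I)).im = r * Real.sin θ := by
  rw [Complex.im_ofReal_mul, Complex.exp_ofReal_mul_I_im]

lemma arg_mul_exp_mul_I (hr : 0 < r) (hθ : θ ∈ Set.Ioc (-Real.pi) Real.pi) :
    Complex.arg (r * Complex.exp (θ * Complex.I)) = θ := by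
  rw [Complex.exp_mul_I, Complex.arg_mul_cos_add_sin_mul_I hr hθ]

end Argument

section Comparison
variable {f : ℝ → ℝ}

lemma tsum_ofReal_succ_le_ofReal_integral (hanti : AntitoneOn f (Set.Ici 0))
    (hint : IntegrableOn f (Set.Ioi 0)) (hpos : ∀ t ∈ Set.Ioi 0, 0 ≤ f t) :
    ∑' k : ℕ, ENNReal.ofReal (f (k + 1 : ℕ)) ≤ ENNReal.ofReal (∫ s in Set.Ioi 0, f s) := by
  have hsum := (summable_nat_add_iff 1).2 (hanti.summable_of_integrableOn_Ioi_zero hint hpos)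
  rw [← ENNReal.ofReal_tsum_of_nonneg (fun k => hpos _ (Set.mem_Ioi.2 (by positivity))) hsum]
  exact ENNReal.ofReal_le_ofReal (hanti.tsum_add_one_le_integral hint hpos)

lemma ofReal_integral_le_add_tsum_ofReal_succ (hanti : AntitoneOn f (Set.Ici 0))
    (hint : IntegrableOn f (Set.Ioi 0)) (hpos : ∀ t ∈ Set.Ici 0, 0 ≤ f t) :
    ENNReal.ofReal (∫ s in Set.Ioi 0, f s) ≤
      ENNReal.ofReal (f 0) + ∑' k : ℕ, ENNReal.ofReal (f (k + 1 : ℕ)) := by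
  have hpos' : ∀ t ∈ Set.Ioi 0, 0 ≤ f t := fun t ht => hpos t (Set.Ioi_subset_Ici_self ht)
  have hsum := hanti.summable_of_integrableOn_Ioi_zero hint hpos'
  calc ENNReal.ofReal (∫ s in Set.Ioi 0, f s)
      ≤ ENNReal.ofReal (∑' k : ℕ, f k) :=
        ENNReal.ofReal_le_ofReal (hanti.integral_le_tsum hsum hpos')
    _ = ∑' k : ℕ, ENNReal.ofReal (f k) :=
        ENNReal.ofReal_tsum_of_nonneg (fun k => hpos _ (Set.mem_Ici.2 k.cast_nonneg)) hsum
    _ = _ := by rw [tsum_eq_zero_add' ENNReal.summable, Nat.cast_zero]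

lemma tsum_le_tsum_add_of_le {u v : ℕ → ℝ≥0∞} {c : ℝ≥0∞} {K : ℕ} (huv : ∀ k, K ≤ k → u k ≤ v k)
    (hu : ∀ k, u k ≤ c) : ∑' k, u k ≤ ∑' k, v k + K * c := by
  have hhead : ∑ k ∈ Finset.range K, u k ≤ K * c := by
    simpa using Finset.sum_le_card_nsmul (Finset.range K) u c fun k _ => hu k
  have htail : ∑' k, v (k + K) ≤ ∑' k, v k :=
    ENNReal.tsum_comp_le_tsum_of_injective (add_left_injective K) v
  calc ∑' k, u k = ∑ k ∈ Finset.range K, u k + ∑' k, u (k + K) :=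
        (ENNReal.summable.sum_add_tsum_nat_add').symm
    _ ≤ K * c + ∑' k, v (k + K) := by
        gcongr with k
        exact huv _ (Nat.le_add_left K k)
    _ ≤ ∑' k, v k + K * c := by
        rw [add_comm]
        gcongr

end Comparison

section CountingFunction
variable {θ α b E : ℝ} {X X' Y : ℕ → ℝ} {j K : ℕ}

lemma theta_mul (hb : 0 < b) (θ x E : ℝ) :
    Theta θ (b * x) E = Complex.arg (x + (E / b : ℝ) * Complex.exp (θ * Complex.I)) := by
  rw [← Complex.arg_real_mul _ hb, Theta]
  have : (b : ℂ) ≠ 0 := Complex.ofReal_ne_zero.2 hb.ne'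
  congr 1
  push_cast
  field_simp

lemma theta_nonneg (hθ : 0 ≤ Real.sin θ) (x : ℝ) (hE : 0 ≤ E) : 0 ≤ Theta θ x E :=
  arg_ofReal_add_nonneg (by simpa only [im_mul_exp_mul_I] using mul_nonneg hE hθ) x

lemma antitone_theta (hθ : 0 < Real.sin θ) (hE : 0 < E) : Antitone fun x => Theta θ x E :=
  antitone_arg_ofReal_add (by simpa only [im_mul_exp_mul_I] using mul_pos hE hθ)

lemma theta_le_pi (θ x E : ℝ) : Theta θ x E ≤ Real.pi :=
  Complex.arg_le_pi _

lemma integrableOn_theta_mul_rpow (hθ : 0 < Real.sin θ) (hα : 1 < α) (hb : 0 < b) (hE : 0 < E) :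
    IntegrableOn (fun s => Theta θ (b * s ^ α) E) (Set.Ioi 0) := by
  simp only [theta_mul hb]
  exact integrableOn_arg_rpow_add hα
    (by simpa only [im_mul_exp_mul_I] using mul_pos (div_pos hE hb) hθ)

lemma integral_theta_mul_rpow (hθ : 0 < θ) (hθπ : θ < Real.pi) (hα : 1 < α) (hb : 0 < b)
    (hE : 0 < E) : ∫ s in Set.Ioi 0, Theta θ (b * s ^ α) E =
      (E / b) ^ α⁻¹ * Real.sin (θ / α) * (Real.pi / Real.sin (Real.pi / α)) := by
  have hr : 0 < E / b := div_pos hE hb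
  simp only [theta_mul hb]
  rw [integral_arg_rpow_add hα
    (by simpa only [im_mul_exp_mul_I] using mul_pos hr (Real.sin_pos_of_pos_of_lt_pi hθ hθπ)),
    arg_mul_exp_mul_I hr ⟨by linarith, hθπ.le⟩, norm_mul, Complex.norm_exp_ofReal_mul_I, mul_one,
    Complex.norm_of_nonneg hr.le]

lemma drift_eq_sin_div_sin (hθ : 0 < θ) (hθπ : θ < Real.pi) (hα : 1 < α) :
    Drift θ α = Real.sin (θ / α) / Real.sin (Real.pi / α) := by
  have hint := integral_theta_mul_rpow hθ hθπ hα one_pos one_pos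
  simp only [one_mul, div_one, Real.one_rpow] at hint
  rw [Drift, hint]
  field_simp

lemma drift_pos (hθ : 0 < θ) (hθπ : θ < Real.pi) (hα : 1 < α) : 0 < Drift θ α := by
  rw [drift_eq_sin_div_sin hθ hθπ hα]
  exact div_pos (sin_div_pos hα hθ hθπ.le) (sin_div_pos hα Real.pi_pos le_rfl)

-- `θ / α` and `π / α` are supplementary for this `α`.
lemma drift_one_add_div_pi (hθ : 0 < θ) (hθπ : θ < Real.pi) : Drift θ (1 + θ / Real.pi) = 1 := by
  have hα : 1 < 1 + θ / Real.pi := lt_add_of_pos_right 1 (div_pos hθ Real.pi_pos)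
  have hsupp : θ / (1 + θ / Real.pi) = Real.pi - Real.pi / (1 + θ / Real.pi) := by
    have := Real.pi_pos
    field_simp
    ring
  rw [drift_eq_sin_div_sin hθ hθπ hα, hsupp, Real.sin_pi_sub,
    div_self (sin_div_pos hα Real.pi_pos le_rfl).ne']

lemma integral_theta_mul_rpow_eq_drift (hθ : 0 < θ) (hθπ : θ < Real.pi) (hα : 1 < α) (hb : 0 < b)
    (hE : 0 < E) :
    ∫ s in Set.Ioi 0, Theta θ (b * s ^ α) E = Real.pi * (Drift θ α * (E / b) ^ α⁻¹) := by
  rw [integral_theta_mul_rpow hθ hθπ hα hb hE, drift_eq_sin_div_sin hθ hθπ hα]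
  ring

lemma antitoneOn_theta_mul_rpow (hθ : 0 < Real.sin θ) (hα : 0 ≤ α) (hb : 0 ≤ b) (hE : 0 < E) :
    AntitoneOn (fun s => Theta θ (b * s ^ α) E) (Set.Ici 0) := fun _ hs _ _ hst =>
  antitone_theta hθ hE (mul_le_mul_of_nonneg_left (Real.rpow_le_rpow hs hst hα) hb)

lemma ofReal_one_div_pi_mul_cancel (x : ℝ≥0∞) :
    ENNReal.ofReal (1 / Real.pi) * (ENNReal.ofReal Real.pi * x) = x := by
  rw [← mul_assoc, ← ENNReal.ofReal_mul (by positivity), one_div_mul_cancel Real.pi_ne_zero,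
    ENNReal.ofReal_one, one_mul]

lemma phi_mul_rpow_le (hθ : 0 < θ) (hθπ : θ < Real.pi) (hα : 1 < α) (hb : 0 < b) (hY : 0 < Y j) :
    phi θ (fun k => b * (k : ℝ) ^ α) Y j ≤ ENNReal.ofReal (Drift θ α * (Y j / b) ^ α⁻¹) := by
  have hsin := Real.sin_pos_of_pos_of_lt_pi hθ hθπ
  have hsum := tsum_ofReal_succ_le_ofReal_integral
    (antitoneOn_theta_mul_rpow hsin (one_pos.trans hα).le hb.le hY)
    (integrableOn_theta_mul_rpow hsin hα hb hY) fun t _ => theta_nonneg hsin.le _ hY.le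
  rw [integral_theta_mul_rpow_eq_drift hθ hθπ hα hb hY, ENNReal.ofReal_mul Real.pi_pos.le] at hsum
  rw [← ofReal_one_div_pi_mul_cancel (ENNReal.ofReal (Drift θ α * (Y j / b) ^ α⁻¹))]
  exact mul_le_mul_right hsum _

lemma le_phi_mul_rpow_add_one (hθ : 0 < θ) (hθπ : θ < Real.pi) (hα : 1 < α) (hb : 0 < b)
    (hY : 0 < Y j) : ENNReal.ofReal (Drift θ α * (Y j / b) ^ α⁻¹) ≤
      phi θ (fun k => b * (k : ℝ) ^ α) Y j + 1 := by
  have hsin := Real.sin_pos_of_pos_of_lt_pi hθ hθπ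
  have hsum := ofReal_integral_le_add_tsum_ofReal_succ
    (antitoneOn_theta_mul_rpow hsin (one_pos.trans hα).le hb.le hY)
    (integrableOn_theta_mul_rpow hsin hα hb hY) fun t _ => theta_nonneg hsin.le _ hY.le
  rw [integral_theta_mul_rpow_eq_drift hθ hθπ hα hb hY, ENNReal.ofReal_mul Real.pi_pos.le] at hsum
  calc ENNReal.ofReal (Drift θ α * (Y j / b) ^ α⁻¹)
      ≤ ENNReal.ofReal (1 / Real.pi) * (ENNReal.ofReal Real.pi * 1 +
          ∑' k : ℕ, ENNReal.ofReal (Theta θ (b * ((k + 1 : ℕ) : ℝ) ^ α) (Y j))) := by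
        rw [← ofReal_one_div_pi_mul_cancel (ENNReal.ofReal (Drift θ α * (Y j / b) ^ α⁻¹)), mul_one]
        gcongr
        exact hsum.trans (by gcongr; exact theta_le_pi ..)
    _ = phi θ (fun k => b * (k : ℝ) ^ α) Y j + 1 := by
        rw [mul_add, ofReal_one_div_pi_mul_cancel, add_comm, phi]

lemma phi_le_phi_add (hθ : 0 < Real.sin θ) (hY : 0 < Y j) (hX : ∀ k, K < k → X' k ≤ X k) :
    phi θ X Y j ≤ phi θ X' Y j + K := by
  have hsum := tsum_le_tsum_add_of_le
    (fun k hk => ENNReal.ofReal_le_ofReal (antitone_theta hθ hY (hX _ (Nat.lt_succ_of_le hk))))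
    fun k => ENNReal.ofReal_le_ofReal (theta_le_pi θ (X (k + 1)) (Y j))
  calc phi θ X Y j
      ≤ ENNReal.ofReal (1 / Real.pi) * (∑' k, ENNReal.ofReal (Theta θ (X' (k + 1)) (Y j)) +
          K * ENNReal.ofReal Real.pi) := mul_le_mul_right hsum _
    _ = phi θ X' Y j + K := by
        rw [mul_add, mul_comm (K : ℝ≥0∞), ofReal_one_div_pi_mul_cancel, phi]

end CountingFunction

section Inversion
variable {θ α b c q D : ℝ} {Q X Y : ℕ → ℝ} {j K : ℕ}

lemma drift_mul_rpow_le_of_phi_eq (hθ : 0 < θ) (hθπ : θ < Real.pi) (hα : 1 < α) (hb : 0 < b)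
    (hY : 0 < Y j) (hX : ∀ k, K < k → X k ≤ b * (k : ℝ) ^ α) (hq : 0 ≤ q)
    (hphi : phi θ X Y j = ENNReal.ofReal q) :
    Drift θ α * (Y j / b) ^ α⁻¹ ≤ q + (K + 1) := by
  rw [← ENNReal.ofReal_le_ofReal_iff (by positivity)]
  calc ENNReal.ofReal (Drift θ α * (Y j / b) ^ α⁻¹)
      ≤ phi θ (fun k => b * (k : ℝ) ^ α) Y j + 1 := le_phi_mul_rpow_add_one hθ hθπ hα hb hY
    _ ≤ phi θ X Y j + K + 1 := by
        gcongr
        exact phi_le_phi_add (Real.sin_pos_of_pos_of_lt_pi hθ hθπ) hY hX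
    _ = ENNReal.ofReal (q + (K + 1)) := by
        rw [hphi, ENNReal.ofReal_add hq (by positivity),
          ENNReal.ofReal_add (by positivity) one_pos.le, ENNReal.ofReal_natCast,
          ENNReal.ofReal_one, add_assoc]

lemma le_drift_mul_rpow_of_phi_eq (hθ : 0 < θ) (hθπ : θ < Real.pi) (hα : 1 < α) (hb : 0 < b)
    (hY : 0 < Y j) (hX : ∀ k, K < k → b * (k : ℝ) ^ α ≤ X k)
    (hphi : phi θ X Y j = ENNReal.ofReal q) :
    q - K ≤ Drift θ α * (Y j / b) ^ α⁻¹ := by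
  have hD := drift_pos hθ hθπ hα
  rw [sub_le_iff_le_add, ← ENNReal.ofReal_le_ofReal_iff (by positivity), ← hphi,
    ENNReal.ofReal_add (by positivity) (by positivity), ENNReal.ofReal_natCast]
  calc phi θ X Y j ≤ phi θ (fun k => b * (k : ℝ) ^ α) Y j + K :=
        phi_le_phi_add (Real.sin_pos_of_pos_of_lt_pi hθ hθπ) hY hX
    _ ≤ _ := by
        gcongr
        exact phi_mul_rpow_le hθ hθπ hα hb hY

lemma tendsto_div_one_of_sub_isBigO_one
    (hQ : (fun k : ℕ => Q k - (k : ℝ)) =O[atTop] fun _ : ℕ => (1 : ℝ)) :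
    Tendsto (fun k : ℕ => Q k / k) atTop (𝓝 1) := by
  have hlittle : (fun _ : ℕ => (1 : ℝ)) =o[atTop] fun k : ℕ => (k : ℝ) :=
    isLittleO_const_left.2 (.inr (tendsto_norm_atTop_atTop.comp tendsto_natCast_atTop_atTop))
  have hlim := (hQ.trans_isLittleO hlittle).tendsto_div_nhds_zero.const_add 1
  rw [add_zero] at hlim
  refine hlim.congr' ?_
  filter_upwards [eventually_ne_atTop 0] with k hk
  rw [sub_div, div_self (Nat.cast_ne_zero.2 hk), add_sub_cancel]

lemma tendsto_add_const_div (hQ : Tendsto (fun k : ℕ => Q k / k) atTop (𝓝 D)) (C : ℝ) :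
    Tendsto (fun k : ℕ => (Q k + C) / k) atTop (𝓝 D) := by
  simpa [add_div] using hQ.add (tendsto_const_div_atTop_nhds_zero_nat C)

lemma eventually_pos_of_tendsto_div (hD : 0 < D)
    (hQ : Tendsto (fun k : ℕ => Q k / k) atTop (𝓝 D)) : ∀ᶠ k in atTop, 0 < Q k := by
  filter_upwards [hQ.eventually_const_lt hD, eventually_gt_atTop 0] with k hk hk0
  exact (div_pos_iff_of_pos_right (Nat.cast_pos.2 hk0)).1 hk

lemma tendsto_log_sub_log (hD : 0 < D) (hQ : Tendsto (fun k : ℕ => Q k / k) atTop (𝓝 D)) :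
    Tendsto (fun k : ℕ => Real.log (Q k) - Real.log k) atTop (𝓝 (Real.log D)) := by
  refine (hQ.log hD.ne').congr' ?_
  filter_upwards [eventually_pos_of_tendsto_div hD hQ, eventually_gt_atTop 0] with k hk hk0
  exact Real.log_div hk.ne' (Nat.cast_ne_zero.2 hk0.ne')

lemma tendsto_mul_log_sub_log_add (hD : 0 < D) (hQ : Tendsto (fun k : ℕ => Q k / k) atTop (𝓝 D))
    (α b C : ℝ) : Tendsto (fun k : ℕ => α * (Real.log (Q k + C) - Real.log k - Real.log D) + b)
      atTop (𝓝 b) := by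
  have hlog := tendsto_log_sub_log hD (tendsto_add_const_div hQ C)
  simpa using ((hlog.sub_const (Real.log D)).const_mul α).add_const b

lemma mul_log_mul_rpow_inv (hα : α ≠ 0) (hD : 0 < D) (hb : 0 < b) {y : ℝ} (hy : 0 < y) :
    α * Real.log (D * (y / b) ^ α⁻¹) = α * Real.log D + (Real.log y - Real.log b) := by
  rw [Real.log_mul hD.ne' (by positivity), Real.log_rpow (by positivity),
    Real.log_div hy.ne' hb.ne', mul_add, mul_inv_cancel_left₀ hα]

lemma eventually_log_sub_lt (hθ : 0 < θ) (hθπ : θ < Real.pi) (hα : 1 < α)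
    (hQ : Tendsto (fun k : ℕ => Q k / k) atTop (𝓝 (Drift θ α))) (hY : ∀ᶠ j in atTop, 0 < Y j)
    (hphi : ∀ᶠ j in atTop, phi θ X Y j = ENNReal.ofReal (Q j)) (hb : 0 < b)
    (hX : ∀ᶠ k : ℕ in atTop, X k ≤ b * (k : ℝ) ^ α) (hbc : Real.log b < c) :
    ∀ᶠ j : ℕ in atTop, Real.log (Y j) - α * Real.log j < c := by
  have hD := drift_pos hθ hθπ hα
  obtain ⟨K, hK⟩ := eventually_atTop.1 hX
  filter_upwards [hY, hphi, eventually_pos_of_tendsto_div hD hQ,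
    (tendsto_mul_log_sub_log_add hD hQ α _ (K + 1)).eventually_lt_const hbc] with j hYj hj hQj hc
  have hle := drift_mul_rpow_le_of_phi_eq hθ hθπ hα hb hYj (fun k hk => hK k hk.le) hQj.le hj
  have hlog := mul_le_mul_of_nonneg_left (Real.log_le_log (by positivity) hle)
    (one_pos.trans hα).le
  rw [mul_log_mul_rpow_inv (one_pos.trans hα).ne' hD hb hYj] at hlog
  linarith

lemma eventually_lt_log_sub (hθ : 0 < θ) (hθπ : θ < Real.pi) (hα : 1 < α)
    (hQ : Tendsto (fun k : ℕ => Q k / k) atTop (𝓝 (Drift θ α))) (hY : ∀ᶠ j in atTop, 0 < Y j)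
    (hphi : ∀ᶠ j in atTop, phi θ X Y j = ENNReal.ofReal (Q j)) (hb : 0 < b)
    (hX : ∀ᶠ k : ℕ in atTop, b * (k : ℝ) ^ α ≤ X k) (hcb : c < Real.log b) :
    ∀ᶠ j : ℕ in atTop, c < Real.log (Y j) - α * Real.log j := by
  have hD := drift_pos hθ hθπ hα
  obtain ⟨K, hK⟩ := eventually_atTop.1 hX
  filter_upwards [hY, hphi,
    eventually_pos_of_tendsto_div hD (tendsto_add_const_div hQ (-K)),
    (tendsto_mul_log_sub_log_add hD hQ α _ (-K)).eventually_const_lt hcb] with j hYj hj hQj hc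
  have hle := le_drift_mul_rpow_of_phi_eq hθ hθπ hα hb hYj (fun k hk => hK k hk.le) hj
  have hlog := mul_le_mul_of_nonneg_left (Real.log_le_log hQj hle) (one_pos.trans hα).le
  rw [mul_log_mul_rpow_inv (one_pos.trans hα).ne' hD hb hYj] at hlog
  linarith

lemma log_sub_mul_log_le_iff {x k : ℝ} (hx : 0 < x) (hk : 0 < k) :
    Real.log x - α * Real.log k ≤ c ↔ x ≤ Real.exp c * k ^ α := by
  rw [Real.rpow_def_of_pos hk, ← Real.exp_add, ← Real.log_le_iff_le_exp hx, sub_le_iff_le_add,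
    mul_comm α]

lemma le_log_sub_mul_log_iff {x k : ℝ} (hx : 0 < x) (hk : 0 < k) :
    c ≤ Real.log x - α * Real.log k ↔ Real.exp c * k ^ α ≤ x := by
  rw [Real.rpow_def_of_pos hk, ← Real.exp_add, ← Real.le_log_iff_exp_le hx, le_sub_iff_add_le,
    mul_comm α]

end Inversion

theorem stmt_5_general {θ α : ℝ} (hθ : 0 < θ) (hθπ : θ < Real.pi) (hα : 1 < α) {Q X Y : ℕ → ℝ}
    (hQ : Tendsto (fun k : ℕ => Q k / k) atTop (𝓝 (Drift θ α)))
    (hXpos : ∀ᶠ k in atTop, 0 < X k) (hYpos : ∀ᶠ j in atTop, 0 < Y j)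
    (hX : (fun k : ℕ => Real.log (X k) - α * Real.log k) =o[atTop] fun _ : ℕ => (1 : ℝ))
    (hfix : ∀ᶠ j in atTop, phi θ X Y j = ENNReal.ofReal (Q j)) :
    (fun j : ℕ => Real.log (Y j) - α * Real.log j) =o[atTop] fun _ : ℕ => (1 : ℝ) := by
  rw [isLittleO_one_iff] at hX ⊢
  refine tendsto_order.2 ⟨fun c hc => ?_, fun c hc => ?_⟩
  · refine eventually_lt_log_sub hθ hθπ hα hQ hYpos hfix (Real.exp_pos (c / 2)) ?_
      (by rw [Real.log_exp]; linarith)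
    filter_upwards [hXpos, eventually_gt_atTop 0, hX.eventually_const_le (by linarith : c / 2 < 0)]
      with k hXk hk hle
    exact (le_log_sub_mul_log_iff hXk (Nat.cast_pos.2 hk)).1 hle
  · refine eventually_log_sub_lt hθ hθπ hα hQ hYpos hfix (Real.exp_pos (c / 2)) ?_
      (by rw [Real.log_exp]; linarith)
    filter_upwards [hXpos, eventually_gt_atTop 0, hX.eventually_le_const (by linarith : 0 < c / 2)]
      with k hXk hk hle
    exact (log_sub_mul_log_le_iff hXk (Nat.cast_pos.2 hk)).1 hle

theorem stmt_5 (θ : ℝ) (hθ : 0 < θ) (hθπ : θ < Real.pi)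
    (Q : ℕ → ℝ) (hQpos : ∀ k, 1 ≤ k → 0 < Q k)
    (hQ : (fun k : ℕ => Q k - (k : ℝ)) =O[atTop] fun _ : ℕ => (1 : ℝ))
    (X Y : ℕ → ℝ) (hXpos : ∀ k, 1 ≤ k → 0 < X k) (hYpos : ∀ j, 1 ≤ j → 0 < Y j)
    (hX : (fun k : ℕ => Real.log (X k) - (1 + θ / Real.pi) * Real.log k)
      =o[atTop] fun _ : ℕ => (1 : ℝ))
    (hfix : ∀ j, 1 ≤ j → phi θ X Y j = ENNReal.ofReal (Q j)) :
    (fun j : ℕ => Real.log (Y j) - (1 + θ / Real.pi) * Real.log j)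
      =o[atTop] fun _ : ℕ => (1 : ℝ) := by
  have hα : 1 < 1 + θ / Real.pi := lt_add_of_pos_right 1 (div_pos hθ Real.pi_pos)
  have hQdrift := drift_one_add_div_pi hθ hθπ ▸ tendsto_div_one_of_sub_isBigO_one hQ
  exact stmt_5_general hθ hθπ hα hQdrift (eventually_atTop.2 ⟨1, hXpos⟩)
    (eventually_atTop.2 ⟨1, hYpos⟩) hX (eventually_atTop.2 ⟨1, hfix⟩)
end

section
/- Suppose X, X', Y, Y' are sequences of positive reals with φ_j(X,Y) = Q_j = φ_j(X',Y') < ∞ for all j ≥ 1. If ln X'_k − ln X_k → 0 as k → ∞ and X' ≠ X, then sup_{j≥1} |ln Y'_j − ln Y_j| < sup_{k≥1} |ln X'_k − ln X_k|. -/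
open Filter Asymptotics MeasureTheory
open scoped ENNReal Topology

/-!
In the logarithmic coordinates `x = log X`, `y = log Y` the angle `Theta θ X Y` becomes `g (y - x)`
for an increasing function `g` whose derivative `sin θ / (2 (cosh t + cos θ))` satisfies a Harnack
inequality: its values at points a bounded distance apart are comparable. Let `M` be the supremum
of the shifts `|x' k - x k|`. Only finitely many shifts are close to `M`. If `y` increased by at
least `M - δ`, each of these finitely many terms would lose at most `O(δ)` times the gain of any
one other term, uniformly in `y` by the Harnack inequality, while no other term would lose anything;
so for small `δ` the sum would strictly increase, whereas it is prescribed.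
-/

theorem exists_forall_le_of_eventually_cofinite_le {ι : Type*} {f : ι → ℝ}
    {i₀ : ι} (h : ∀ᶠ i in cofinite, f i ≤ f i₀) : ∃ i, ∀ j, f j ≤ f i := by
  let : TopologicalSpace ι := ⊥
  have : DiscreteTopology ι := ⟨rfl⟩
  exact continuous_of_discreteTopology.exists_forall_ge' i₀ (by rwa [cocompact_eq_cofinite])

theorem tsum_pos_of_forall_neg_mul_le {ι : Type*} {d : ι → ℝ} {F : Finset ι} {n : ι} {η G : ℝ}
    (hd : Summable d) (hG : 0 < G) (hFη : F.card * η < 1) (hnF : n ∉ F) (hn : G ≤ d n)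
    (hF : ∀ k ∈ F, -(η * G) ≤ d k) (hFc : ∀ k ∉ F, 0 ≤ d k) : 0 < ∑' k, d k := by
  have hsum_F : -(F.card * (η * G)) ≤ ∑ k ∈ F, d k := by
    simpa using Finset.card_nsmul_le_sum F _ _ hF
  have hsum_pos : 0 < ∑ k ∈ F.cons n hnF, d k := by
    rw [Finset.sum_cons]
    have : F.card * η * G < G := mul_lt_of_lt_one_left hG hFη
    linarith
  exact hsum_pos.trans_le <|
    hd.sum_le_tsum _ fun k hk => hFc k fun h => hk (Finset.mem_cons_of_mem h)

/-- The Harnack inequality for a function on the line: values at points a bounded distance apart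
are comparable, with a constant depending only on the distance. It is meant for positive
functions, and positivity is not part of the definition. -/
def HarnackInequality (p : ℝ → ℝ) : Prop :=
  ∀ R, ∃ C, ∀ u v, |u - v| ≤ R → p u ≤ C * p v

section Harnack

variable {ι : Type*} {g p : ℝ → ℝ}

theorem HarnackInequality.const_div (hp : HarnackInequality p) (hpos : ∀ t, 0 < p t) {a : ℝ}
    (ha : 0 ≤ a) : HarnackInequality fun t => a / p t := by
  intro R
  obtain ⟨C, hC⟩ := hp R
  refine ⟨C, fun u v huv => ?_⟩
  rw [← mul_div_assoc, div_le_div_iff₀ (hpos u) (hpos v)]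
  calc a * p v ≤ a * (C * p u) := by gcongr; exact hC v u (by rwa [abs_sub_comm])
    _ = C * a * p u := by ring

theorem exists_sub_eq_mul_of_hasDerivAt (hg : ∀ t, HasDerivAt g (p t) t) (t : ℝ) {ε : ℝ}
    (hε : 0 < ε) : ∃ c ∈ Set.Ioo t (t + ε), g (t + ε) - g t = ε * p c := by
  obtain ⟨c, hc, hslope⟩ := exists_hasDerivAt_eq_slope g p (lt_add_of_pos_right t hε)
    (HasDerivAt.continuousOn fun x _ => hg x) fun x _ => hg x
  refine ⟨c, hc, ?_⟩
  rw [hslope, add_sub_cancel_left, mul_div_cancel₀ _ hε.ne']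

theorem HarnackInequality.exists_sub_le_mul_sub (hp : HarnackInequality p) (hpos : ∀ t, 0 < p t)
    (hg : ∀ t, HasDerivAt g (p t) t) (R : ℝ) {ε η : ℝ} (hε : 0 < ε) (hη : 0 < η) :
    ∃ δ, 0 < δ ∧ δ ≤ ε ∧ ∀ u v, |u - v| ≤ R → g u - g (u - δ) ≤ η * (g (v + ε) - g v) := by
  obtain ⟨C, hC⟩ := hp (R + 2 * ε)
  obtain ⟨δ₀, hδ₀, hCδ₀⟩ := exists_pos_mul_lt (mul_pos hη hε) |C|
  obtain ⟨δ, hδ, hδ_lt⟩ := exists_between (lt_min hδ₀ hε)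
  have hδδ₀ : δ ≤ δ₀ := hδ_lt.le.trans (min_le_left _ _)
  have hδε : δ ≤ ε := hδ_lt.le.trans (min_le_right _ _)
  refine ⟨δ, hδ, hδε, fun u v huv => ?_⟩
  obtain ⟨a, ⟨hua, hau⟩, hloss⟩ := exists_sub_eq_mul_of_hasDerivAt hg (u - δ) hδ
  obtain ⟨b, ⟨hvb, hbv⟩, hgain⟩ := exists_sub_eq_mul_of_hasDerivAt hg v hε
  rw [sub_add_cancel] at hau hloss
  have hab : |a - b| ≤ R + 2 * ε := by
    rw [abs_le] at huv ⊢
    constructor <;> linarith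
  have hpb := (hpos b).le
  calc g u - g (u - δ) = δ * p a := hloss
    _ ≤ δ * (C * p b) := by gcongr; exact hC a b hab
    _ ≤ δ * (|C| * p b) := by gcongr; exact le_abs_self C
    _ ≤ δ₀ * (|C| * p b) := by gcongr
    _ = |C| * δ₀ * p b := by ring
    _ ≤ η * ε * p b := by gcongr
    _ = η * (g (v + ε) - g v) := by rw [hgain, mul_assoc]

theorem HarnackInequality.exists_tsum_lt_tsum [Infinite ι] (hp : HarnackInequality p)
    (hpos : ∀ t, 0 < p t) (hg : ∀ t, HasDerivAt g (p t) t) {x x' : ι → ℝ} {r M : ℝ} (hrM : r < M)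
    (hM : ∀ k, x' k - x k ≤ M) (hr : ∀ᶠ k in cofinite, x' k - x k ≤ r) :
    ∃ s < M, ∀ y y', y + s ≤ y' → Summable (fun k => g (y - x k)) →
      Summable (fun k => g (y' - x' k)) → ∑' k, g (y - x k) < ∑' k, g (y' - x' k) := by
  have hmono : StrictMono g := strictMono_of_hasDerivAt_pos hg hpos
  obtain ⟨n, hn⟩ := hr.exists
  set F : Finset ι := hr.toFinset with hF
  have hr_of_notMem : ∀ k ∉ F, x' k - x k ≤ r := fun k hk => by simpa [hF] using hk
  have hnF : n ∉ F := by simpa [hF] using hn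
  obtain ⟨R, hR⟩ := (F.image fun k => |x n - x k|).exists_le
  rw [Finset.forall_mem_image] at hR
  obtain ⟨η, hη, hFη⟩ := exists_pos_mul_lt one_pos (F.card : ℝ)
  set ε := (M - r) / 2 with hε_def
  have hε : 0 < ε := half_pos (sub_pos.2 hrM)
  obtain ⟨δ, hδ, hδε, hloss⟩ := hp.exists_sub_le_mul_sub hpos hg R hε hη
  refine ⟨M - δ, sub_lt_self M hδ, fun y y' hy hs hs' => ?_⟩
  set gain := g (y - x n + ε) - g (y - x n)
  have hgain : 0 < gain := sub_pos.2 (hmono (lt_add_of_pos_right _ hε))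
  have hgood : ∀ k ∉ F, g (y - x k + ε) ≤ g (y' - x' k) := fun k hk =>
    hmono.monotone (by linarith [hr_of_notMem k hk])
  have hbad : ∀ k ∈ F, -(η * gain) ≤ g (y' - x' k) - g (y - x k) := fun k hk => by
    have hshift : g (y - x k - δ) ≤ g (y' - x' k) := hmono.monotone (by linarith [hM k])
    have hloss_k := hloss (y - x k) (y - x n) (by simpa using hR hk)
    linarith
  rw [← sub_pos, ← hs'.tsum_sub hs]
  exact tsum_pos_of_forall_neg_mul_le (hs'.sub hs) hgain hFη hnF
    (sub_le_sub_right (hgood n hnF) _) hbad fun k hk =>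
      sub_nonneg.2 ((hmono.monotone (le_add_of_nonneg_right hε.le)).trans (hgood k hk))

theorem HarnackInequality.exists_abs_sub_le_of_tsum_eq [Infinite ι] (hp : HarnackInequality p)
    (hpos : ∀ t, 0 < p t) (hg : ∀ t, HasDerivAt g (p t) t) {x x' : ι → ℝ} {r : ℝ}
    (hr : ∀ᶠ k in cofinite, |x' k - x k| ≤ r) (hlt : ∃ k, r < |x' k - x k|) :
    ∃ s, (∃ k, s < |x' k - x k|) ∧ ∀ y y', Summable (fun k => g (y - x k)) →
      Summable (fun k => g (y' - x' k)) → ∑' k, g (y - x k) = ∑' k, g (y' - x' k) →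
      |y' - y| ≤ s := by
  obtain ⟨k₀, hk₀⟩ := hlt
  obtain ⟨m, hm⟩ := exists_forall_le_of_eventually_cofinite_le
    (hr.mono fun k hk => hk.trans hk₀.le)
  have hrm : r < |x' m - x m| := hk₀.trans_le (hm k₀)
  obtain ⟨s₁, hs₁, hup⟩ := hp.exists_tsum_lt_tsum hpos hg hrm
    (fun k => (le_abs_self _).trans (hm k)) (hr.mono fun k hk => (le_abs_self _).trans hk)
  simp only [abs_sub_comm (x' _)] at hr hm hrm
  obtain ⟨s₂, hs₂, hdown⟩ := hp.exists_tsum_lt_tsum hpos hg hrm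
    (fun k => (le_abs_self _).trans (hm k)) (hr.mono fun k hk => (le_abs_self _).trans hk)
  rw [abs_sub_comm] at hs₂
  refine ⟨max s₁ s₂, ⟨m, max_lt hs₁ hs₂⟩, fun y y' hs hs' heq => abs_sub_le_iff.2 ⟨?_, ?_⟩⟩
  · by_contra! h
    exact (hup y y' (by linarith [le_max_left s₁ s₂]) hs hs').ne heq
  · by_contra! h
    exact (hdown y' y (by linarith [le_max_right s₁ s₂]) hs' hs).ne' heq

end Harnack

section Cosh

variable {c : ℝ}

theorem cosh_le_exp_mul_cosh {R u v : ℝ} (h : |u - v| ≤ R) :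
    Real.cosh u ≤ Real.exp R * Real.cosh v := by
  obtain ⟨hl, hr⟩ := abs_le.1 h
  rw [Real.cosh_eq, Real.cosh_eq, mul_div_assoc', mul_add, ← Real.exp_add, ← Real.exp_add]
  gcongr <;> linarith

theorem cosh_add_pos (hc : -1 < c) (t : ℝ) : 0 < Real.cosh t + c := by
  linarith [Real.one_le_cosh t]

theorem harnackInequality_cosh_add (hc : -1 < c) (hc1 : c ≤ 1) :
    HarnackInequality fun t => Real.cosh t + c := by
  intro R
  refine ⟨4 * Real.exp R / (1 + c), fun u v huv => ?_⟩
  have hc_pos : 0 < 1 + c := by linarith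
  have hlower : (1 + c) * Real.cosh v ≤ 2 * (Real.cosh v + c) := by
    nlinarith [Real.one_le_cosh v]
  calc Real.cosh u + c ≤ 2 * Real.cosh u := by linarith [Real.one_le_cosh u]
    _ ≤ 2 * (Real.exp R * Real.cosh v) := by gcongr; exact cosh_le_exp_mul_cosh huv
    _ = 2 * Real.exp R / (1 + c) * ((1 + c) * Real.cosh v) := by field_simp
    _ ≤ 2 * Real.exp R / (1 + c) * (2 * (Real.cosh v + c)) := by gcongr
    _ = 4 * Real.exp R / (1 + c) * (Real.cosh v + c) := by ring

end Cosh

theorem neg_one_lt_cos_of_sin_pos {θ : ℝ} (hθ : 0 < Real.sin θ) : -1 < Real.cos θ := by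
  nlinarith [Real.sin_sq_add_cos_sq θ, Real.neg_one_le_cos θ]

section Theta

variable {θ : ℝ}

theorem Theta_nonneg (hθ : 0 ≤ Real.sin θ) (A : ℝ) {B : ℝ} (hB : 0 ≤ B) : 0 ≤ Theta θ A B := by
  rw [Theta, Complex.arg_nonneg_iff, Complex.add_im, Complex.ofReal_im, Complex.im_ofReal_mul,
    Complex.exp_ofReal_mul_I_im, zero_add]
  exact mul_nonneg hB hθ

theorem Theta_mul_mul_left {a : ℝ} (ha : 0 < a) (A B : ℝ) :
    Theta θ (a * A) (a * B) = Theta θ A B := by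
  rw [Theta, Theta, ← Complex.arg_real_mul (A + _) ha, mul_add, Complex.ofReal_mul,
    Complex.ofReal_mul, mul_assoc]

/-- The angle `Theta θ A B` as a function of `t = log B - log A`, on which alone it depends. -/
noncomputable def logTheta (θ t : ℝ) : ℝ :=
  Theta θ 1 (Real.exp t)

theorem Theta_eq_logTheta {A B : ℝ} (hA : 0 < A) (hB : 0 < B) :
    Theta θ A B = logTheta θ (Real.log B - Real.log A) := by
  rw [logTheta, ← Theta_mul_mul_left hA 1, mul_one, Real.exp_sub, Real.exp_log hA, Real.exp_log hB,
    mul_div_cancel₀ _ hA.ne']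

theorem normSq_one_add_exp_mul_exp (θ t : ℝ) :
    Complex.normSq (1 + Real.exp t * Complex.exp (θ * Complex.I)) =
      2 * Real.exp t * (Real.cosh t + Real.cos θ) := by
  rw [Complex.normSq_apply, Real.cosh_eq, Real.exp_neg]
  simp only [Complex.add_im, Complex.add_re, Complex.one_im, Complex.one_re,
    Complex.im_ofReal_mul, Complex.re_ofReal_mul, Complex.exp_ofReal_mul_I_im,
    Complex.exp_ofReal_mul_I_re]
  field_simp
  linear_combination Real.exp t ^ 2 * Real.sin_sq_add_cos_sq θ

theorem hasDerivAt_logTheta (hθ : 0 < Real.sin θ) (t : ℝ) :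
    HasDerivAt (logTheta θ) (Real.sin θ / 2 / (Real.cosh t + Real.cos θ)) t := by
  set w : ℝ → ℂ := fun t => Real.exp t * Complex.exp (θ * Complex.I)
  have hw_im : (w t).im = Real.exp t * Real.sin θ := by
    rw [Complex.im_ofReal_mul, Complex.exp_ofReal_mul_I_im]
  have hw : HasDerivAt (fun t => 1 + w t) (w t) t :=
    ((Real.hasDerivAt_exp t).ofReal_comp.mul_const _).const_add 1
  have hslit : 1 + w t ∈ Complex.slitPlane := by
    refine Complex.mem_slitPlane_iff.2 (Or.inr ?_)
    rw [Complex.add_im, Complex.one_im, zero_add, hw_im]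
    positivity
  have hlog : HasDerivAt (fun t => (Complex.log (1 + w t)).im) (w t / (1 + w t)).im t :=
    Complex.imCLM.hasFDerivAt.comp_hasDerivAt t (hw.clog_real hslit)
  have hlogTheta : logTheta θ = fun t => (Complex.log (1 + w t)).im := by
    funext t
    rw [Complex.log_im, logTheta, Theta, Complex.ofReal_one]
  have hne := (cosh_add_pos (neg_one_lt_cos_of_sin_pos hθ) t).ne'
  rw [hlogTheta]
  refine hlog.congr_deriv ?_
  calc (w t / (1 + w t)).im = (w t).im / Complex.normSq (1 + w t) := by
        rw [Complex.div_im, ← sub_div]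
        congr 1
        simp only [Complex.add_re, Complex.one_re, Complex.add_im, Complex.one_im]
        ring
    _ = Real.sin θ / 2 / (Real.cosh t + Real.cos θ) := by
        rw [hw_im, normSq_one_add_exp_mul_exp]
        field_simp

theorem exists_abs_sub_le_of_tsum_logTheta_eq {ι : Type*} [Infinite ι] (hθ : 0 < Real.sin θ)
    {x x' : ι → ℝ} {r : ℝ} (hr : ∀ᶠ k in cofinite, |x' k - x k| ≤ r)
    (hlt : ∃ k, r < |x' k - x k|) :
    ∃ s, (∃ k, s < |x' k - x k|) ∧ ∀ y y', Summable (fun k => logTheta θ (y - x k)) →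
      Summable (fun k => logTheta θ (y' - x' k)) →
      ∑' k, logTheta θ (y - x k) = ∑' k, logTheta θ (y' - x' k) → |y' - y| ≤ s := by
  have hpos := cosh_add_pos (neg_one_lt_cos_of_sin_pos hθ)
  have hharnack := harnackInequality_cosh_add (neg_one_lt_cos_of_sin_pos hθ) (Real.cos_le_one θ)
  exact (hharnack.const_div hpos (half_pos hθ).le).exists_abs_sub_le_of_tsum_eq
    (fun t => div_pos (half_pos hθ) (hpos t)) (hasDerivAt_logTheta hθ) hr hlt

end Theta

section phi

variable {θ : ℝ} {X Y : ℕ → ℝ} {j : ℕ}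

theorem toReal_phi (hθ : 0 ≤ Real.sin θ) (hY : 0 ≤ Y j) :
    (phi θ X Y j).toReal = 1 / Real.pi * ∑' k, Theta θ (X (k + 1)) (Y j) := by
  rw [phi, ENNReal.toReal_mul, ENNReal.toReal_ofReal (by positivity),
    ENNReal.tsum_toReal_eq fun _ => ENNReal.ofReal_ne_top]
  simp only [ENNReal.toReal_ofReal (Theta_nonneg hθ _ hY)]

theorem summable_Theta_of_phi_ne_top (hθ : 0 ≤ Real.sin θ) (hY : 0 ≤ Y j)
    (h : phi θ X Y j ≠ ∞) : Summable fun k => Theta θ (X (k + 1)) (Y j) := by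
  have hpi : ENNReal.ofReal (1 / Real.pi) ≠ 0 := by
    simpa using Real.pi_pos
  have hsum := ENNReal.summable_toReal fun htop => h (by rw [phi, htop, ENNReal.mul_top hpi])
  simpa only [ENNReal.toReal_ofReal (Theta_nonneg hθ _ hY)] using hsum

theorem Theta_seq_eq_logTheta (hX : ∀ k, 1 ≤ k → 0 < X k) (hY : 0 < Y j) :
    (fun k => Theta θ (X (k + 1)) (Y j)) =
      fun k => logTheta θ (Real.log (Y j) - Real.log (X (k + 1))) :=
  funext fun k => Theta_eq_logTheta (hX (k + 1) k.succ_pos) hY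

end phi

theorem stmt_7_general {θ : ℝ} (hθ : 0 < Real.sin θ) {X X' Y Y' : ℕ → ℝ}
    (hX : ∀ k, 1 ≤ k → 0 < X k) (hX' : ∀ k, 1 ≤ k → 0 < X' k)
    (hY : ∀ j, 1 ≤ j → 0 < Y j) (hY' : ∀ j, 1 ≤ j → 0 < Y' j)
    (hfin : ∀ j, 1 ≤ j → phi θ X Y j ≠ ∞)
    (heq : ∀ j, 1 ≤ j → phi θ X Y j = phi θ X' Y' j) {r : ℝ}
    (hr : ∀ᶠ k in atTop, |Real.log (X' k) - Real.log (X k)| ≤ r)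
    (hlt : ∃ k, 1 ≤ k ∧ r < |Real.log (X' k) - Real.log (X k)|) :
    ∃ s : ℝ, (∀ j, 1 ≤ j → |Real.log (Y' j) - Real.log (Y j)| ≤ s) ∧
      ∃ k, 1 ≤ k ∧ s < |Real.log (X' k) - Real.log (X k)| := by
  obtain ⟨k₀ | k₀, hk₀, hlt⟩ := hlt
  · omega
  have hr_succ := (tendsto_add_atTop_nat 1).eventually hr
  rw [← Nat.cofinite_eq_atTop] at hr_succ
  obtain ⟨s, ⟨m, hm⟩, hs⟩ := exists_abs_sub_le_of_tsum_logTheta_eq hθ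
    (x := fun k => Real.log (X (k + 1))) (x' := fun k => Real.log (X' (k + 1))) hr_succ ⟨k₀, hlt⟩
  refine ⟨s, fun j hj => hs _ _ ?_ ?_ ?_, m + 1, m.succ_pos, hm⟩
  · rw [← Theta_seq_eq_logTheta hX (hY j hj)]
    exact summable_Theta_of_phi_ne_top hθ.le (hY j hj).le (hfin j hj)
  · rw [← Theta_seq_eq_logTheta hX' (hY' j hj)]
    exact summable_Theta_of_phi_ne_top hθ.le (hY' j hj).le (heq j hj ▸ hfin j hj)
  · rw [← Theta_seq_eq_logTheta hX (hY j hj), ← Theta_seq_eq_logTheta hX' (hY' j hj)]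
    have htoReal := congrArg ENNReal.toReal (heq j hj)
    rw [toReal_phi hθ.le (hY j hj).le, toReal_phi hθ.le (hY' j hj).le] at htoReal
    exact mul_left_cancel₀ (one_div_ne_zero Real.pi_ne_zero) htoReal

theorem stmt_7 (θ : ℝ) (hθ : 0 < θ) (hθπ : θ < Real.pi)
    (Q : ℕ → ℝ) (hQpos : ∀ k, 1 ≤ k → 0 < Q k)
    (X X' Y Y' : ℕ → ℝ)
    (hXpos : ∀ k, 1 ≤ k → 0 < X k) (hX'pos : ∀ k, 1 ≤ k → 0 < X' k)
    (hYpos : ∀ j, 1 ≤ j → 0 < Y j) (hY'pos : ∀ j, 1 ≤ j → 0 < Y' j)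
    (hfix : ∀ j, 1 ≤ j → phi θ X Y j = ENNReal.ofReal (Q j))
    (hfix' : ∀ j, 1 ≤ j → phi θ X' Y' j = ENNReal.ofReal (Q j))
    (hlim : Tendsto (fun k : ℕ => Real.log (X' k) - Real.log (X k)) atTop (nhds 0))
    (hne : ∃ k, 1 ≤ k ∧ X' k ≠ X k) :
    ∃ s : ℝ, (∀ j, 1 ≤ j → |Real.log (Y' j) - Real.log (Y j)| ≤ s) ∧
      ∃ k, 1 ≤ k ∧ s < |Real.log (X' k) - Real.log (X k)| := by
  obtain ⟨k, hk, hXk⟩ := hne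
  have hpos : 0 < |Real.log (X' k) - Real.log (X k)| :=
    abs_pos.2 (sub_ne_zero.2 fun h => hXk (Real.log_injOn_pos (hX'pos k hk) (hXpos k hk) h))
  have hlim_abs : Tendsto (fun k => |Real.log (X' k) - Real.log (X k)|) atTop (𝓝 0) := by
    simpa only [abs_zero] using hlim.abs
  exact stmt_7_general (Real.sin_pos_of_pos_of_lt_pi hθ hθπ) hXpos hX'pos hYpos hY'pos
    (fun j hj => hfix j hj ▸ ENNReal.ofReal_ne_top)
    (fun j hj => (hfix j hj).trans (hfix' j hj).symm)
    (hlim_abs.eventually_le_const (half_pos hpos)) ⟨k, hk, half_lt_self hpos⟩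
end

section
/- Assume Q_k = k + O(1). (i) If α > 1 and X is a sequence of positive reals with ln X_k = α·ln k + O(1), then there exists a sequence Y of positive reals with φ_j(X,Y) = Q_j for all j, and any such Y satisfies ln Y_j = α·ln j + O(1). (ii) If 0 < α ≤ 1 and X is a sequence of positive reals with ln X_k = α·ln k + O(1), then φ_j(X,Y) = ∞ for every sequence Y of positive reals and every j; in particular there is no Y with φ_j(X,Y) = Q_j for all j. -/
open Filter Asymptotics MeasureTheory
open scoped ENNReal Topology

/-!
For `y > 0` the angle `Theta θ x y` is comparable to `y / (x + y)`, with constants depending only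
on `θ`. Hence `∑ k, Theta θ (x k) y` is finite if and only if `∑ k, (x k)⁻¹` is, which for
`x k ≍ k ^ α` means `1 < α`. When finite, the sum is continuous in `y`, vanishes at `0` and is
unbounded, so it takes every positive value `q`. If moreover `x k ≍ k ^ α`, the sum has the order of
the number of `k` with `x k ≤ y`, that is of `y ^ (1 / α)`, which gives `y ≍ q ^ α`; only the order
of growth of the prescribed values matters.
-/

section RealSequences

lemma isTheta_iff_isBigO_log_sub_log {ι : Type*} {l : Filter ι} {f g : ι → ℝ}
    (hf : ∀ᶠ i in l, 0 < f i) (hg : ∀ᶠ i in l, 0 < g i) :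
    f =Θ[l] g ↔ (fun i => Real.log (f i) - Real.log (g i)) =O[l] fun _ => (1 : ℝ) := by
  have hf' : (fun i => Real.exp (Real.log (f i))) =ᶠ[l] f := hf.mono fun _ => Real.exp_log
  have hg' : (fun i => Real.exp (Real.log (g i))) =ᶠ[l] g := hg.mono fun _ => Real.exp_log
  calc f =Θ[l] g
      ↔ (fun i => Real.exp (Real.log (f i))) =Θ[l] fun i => Real.exp (Real.log (g i)) :=
        (and_congr (isBigO_congr hf' hg') (isBigO_congr hg' hf')).symm
    _ ↔ IsBoundedUnder (· ≤ ·) l fun i => |Real.log (f i) - Real.log (g i)| :=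
        Real.isTheta_exp_comp_exp_comp
    _ ↔ (fun i => Real.log (f i) - Real.log (g i)) =O[l] fun _ => (1 : ℝ) :=
        by simp only [isBigO_one_iff, Real.norm_eq_abs]

lemma isTheta_rpow_iff_isBigO_log_sub_mul_log {ι : Type*} {l : Filter ι} {f g : ι → ℝ} {α : ℝ}
    (hf : ∀ᶠ i in l, 0 < f i) (hg : ∀ᶠ i in l, 0 < g i) :
    f =Θ[l] (fun i => g i ^ α) ↔
      (fun i => Real.log (f i) - α * Real.log (g i)) =O[l] fun _ => (1 : ℝ) := by
  rw [isTheta_iff_isBigO_log_sub_log hf (hg.mono fun i hi => Real.rpow_pos_of_pos hi α)]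
  exact isBigO_congr (hg.mono fun i hi => by simp only [Real.log_rpow hi]) .rfl

lemma isTheta_natCast_of_isBigO_sub {f : ℕ → ℝ}
    (hf : (fun k : ℕ => f k - (k : ℝ)) =O[atTop] fun _ : ℕ => (1 : ℝ)) :
    f =Θ[atTop] fun k : ℕ => (k : ℝ) :=
  IsEquivalent.isTheta <| hf.trans_isLittleO <|
    (isLittleO_const_id_atTop (1 : ℝ)).comp_tendsto tendsto_natCast_atTop_atTop

lemma summable_inv_iff_one_lt_of_isTheta_rpow {f : ℕ → ℝ} {α : ℝ}
    (hf : f =Θ[atTop] fun k : ℕ => (k : ℝ) ^ α) :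
    Summable (fun k => (f k)⁻¹) ↔ 1 < α :=
  ⟨fun h => Real.summable_nat_rpow_inv.1 (summable_of_isBigO_nat h hf.inv.isBigO_symm),
    fun h => summable_of_isBigO_nat (Real.summable_nat_rpow_inv.2 h) hf.inv.isBigO⟩

lemma summable_inv_rpow_add_one {α : ℝ} (hα : 1 < α) :
    Summable fun m : ℕ => ((m : ℝ) ^ α + 1)⁻¹ := by
  refine Summable.of_norm_bounded_eventually_nat (Real.summable_nat_rpow_inv.2 hα) ?_
  filter_upwards [eventually_gt_atTop 0] with m hm
  have : (0 : ℝ) < m := Nat.cast_pos.2 hm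
  rw [Real.norm_of_nonneg (by positivity)]
  gcongr
  exact le_add_of_nonneg_right zero_le_one

lemma tsum_le_mul_tsum_of_le_comp_div {f g : ℕ → ℝ} (hf : Summable f) (hg : Summable g) (n : ℕ)
    [NeZero n] (hfg : ∀ k, f k ≤ g (k / n)) : ∑' k, f k ≤ n * ∑' m, g m := by
  have class_le (r : ZMod n) : ∑' m, f (r.val + n * m) ≤ ∑' m, g m := by
    have hinj : Function.Injective fun m => r.val + n * m := fun m m' h => by
      simpa [NeZero.ne n] using h
    refine (hf.comp_injective hinj).tsum_le_tsum (fun m => (hfg _).trans_eq ?_) hg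
    rw [Nat.add_mul_div_left _ _ (NeZero.pos n), Nat.div_eq_of_lt r.val_lt, zero_add]
  calc ∑' k, f k = ∑ r : ZMod n, ∑' m, f (r.val + n * m) := Nat.sumByResidueClasses hf n
    _ ≤ ∑ _r : ZMod n, ∑' m, g m := Finset.sum_le_sum fun r _ => class_le r
    _ = n * ∑' m, g m := by simp [ZMod.card]

lemma summable_inv_add_const_iff {ι : Type*} {x : ι → ℝ} (hx : ∀ k, 0 < x k) {y : ℝ}
    (hy : 0 < y) : Summable (fun k => (x k + y)⁻¹) ↔ Summable fun k => (x k)⁻¹ := by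
  refine ⟨fun h => ?_, fun h => .of_nonneg_of_le (fun k => ?_) (fun k => ?_) h⟩
  · refine (h.mul_left 2).of_norm_bounded_eventually ?_
    filter_upwards [h.tendsto_cofinite_zero.eventually_le_const (inv_pos.2 (add_pos hy hy))]
      with k hk
    have hxk := hx k
    have hyx : y ≤ x k := by
      linarith [(inv_le_inv₀ (add_pos hxk hy) (add_pos hy hy)).1 hk]
    rw [Real.norm_of_nonneg (by positivity), ← div_eq_mul_inv, inv_eq_one_div,
      div_le_div_iff₀ (by positivity) (by positivity)]
    linarith
  · have := hx k
    positivity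
  · have := hx k
    gcongr
    linarith

end RealSequences

section Theta

variable {θ x y : ℝ}

lemma re_add_mul_exp (θ x y : ℝ) :
    ((x : ℂ) + (y : ℂ) * Complex.exp (θ * Complex.I)).re = x + y * Real.cos θ := by
  simp [Complex.exp_ofReal_mul_I_re]

lemma im_add_mul_exp (θ x y : ℝ) :
    ((x : ℂ) + (y : ℂ) * Complex.exp (θ * Complex.I)).im = y * Real.sin θ := by
  simp [Complex.exp_ofReal_mul_I_im]

lemma norm_add_mul_exp_le (θ : ℝ) (hx : 0 ≤ x) (hy : 0 ≤ y) :
    ‖(x : ℂ) + (y : ℂ) * Complex.exp (θ * Complex.I)‖ ≤ x + y := by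
  refine (norm_add_le _ _).trans_eq ?_
  rw [norm_mul, Complex.norm_exp_ofReal_mul_I, mul_one, Complex.norm_of_nonneg hx,
    Complex.norm_of_nonneg hy]

lemma abs_mul_sin_le_norm_add_mul_exp (θ x y : ℝ) :
    |x * Real.sin θ| ≤ ‖(x : ℂ) + (y : ℂ) * Complex.exp (θ * Complex.I)‖ := by
  refine abs_le_of_sq_le_sq ?_ (norm_nonneg _)
  rw [Complex.sq_norm, Complex.normSq_apply, re_add_mul_exp, im_add_mul_exp]
  have sq_eq : (x + y * Real.cos θ) * (x + y * Real.cos θ) +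
      y * Real.sin θ * (y * Real.sin θ) = (x * Real.sin θ) ^ 2 + (x * Real.cos θ + y) ^ 2 := by
    linear_combination (y ^ 2 - x ^ 2) * Real.sin_sq_add_cos_sq θ
  exact sq_eq ▸ le_add_of_nonneg_right (sq_nonneg _)

lemma Theta_nonneg_s10 (hθ : 0 < θ) (hθπ : θ < Real.pi) (hy : 0 ≤ y) : 0 ≤ Theta θ x y := by
  rw [Theta, Complex.arg_nonneg_iff, im_add_mul_exp]
  exact mul_nonneg hy (Real.sin_pos_of_pos_of_lt_pi hθ hθπ).le

lemma sin_Theta (θ x y : ℝ) : Real.sin (Theta θ x y) =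
    y * Real.sin θ / ‖(x : ℂ) + (y : ℂ) * Complex.exp (θ * Complex.I)‖ := by
  rw [Theta, Complex.sin_arg, im_add_mul_exp]

-- The law of sines in the triangle with vertices `0`, `x` and `x + y * exp (θ * I)`.
lemma abs_sin_Theta_le (θ : ℝ) (hx : 0 < x) (hy : 0 ≤ y) : |Real.sin (Theta θ x y)| ≤ y / x := by
  have h := abs_mul_sin_le_norm_add_mul_exp θ x y
  rw [abs_mul, abs_of_pos hx] at h
  rw [sin_Theta, abs_div, abs_norm, abs_mul, abs_of_nonneg hy]
  refine div_le_of_le_mul₀ (norm_nonneg _) (by positivity) ?_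
  calc y * |Real.sin θ| = y / x * (x * |Real.sin θ|) := by field_simp
    _ ≤ _ := by gcongr

lemma abs_Theta_le_pi_mul_div (θ : ℝ) (hx : 0 < x) (hy : 0 ≤ y) :
    |Theta θ x y| ≤ Real.pi * (y / x) := by
  rcases le_total x y with hxy | hyx
  · exact (Complex.abs_arg_le_pi _).trans
      (le_mul_of_one_le_right Real.pi_pos.le ((one_le_div hx).2 hxy))
  · have hre : 0 ≤ ((x : ℂ) + (y : ℂ) * Complex.exp (θ * Complex.I)).re := by
      rw [re_add_mul_exp]
      nlinarith [Real.neg_one_le_cos θ]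
    have jordan : 2 / Real.pi * |Theta θ x y| ≤ y / x :=
      (Real.mul_abs_le_abs_sin (Complex.abs_arg_le_pi_div_two_iff.2 hre)).trans
        (abs_sin_Theta_le θ hx hy)
    rw [div_mul_eq_mul_div, div_le_iff₀ Real.pi_pos] at jordan
    linarith [abs_nonneg (Theta θ x y)]

lemma abs_Theta_le_two_pi_mul_div_add (θ : ℝ) (hx : 0 < x) (hy : 0 ≤ y) :
    |Theta θ x y| ≤ 2 * Real.pi * (y / (x + y)) := by
  have hy_mul : |Theta θ x y| * y ≤ Real.pi * y := by
    gcongr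
    exact Complex.abs_arg_le_pi _
  have hx_mul : |Theta θ x y| * x ≤ Real.pi * y := by
    rw [← le_div_iff₀ hx, mul_div_assoc]
    exact abs_Theta_le_pi_mul_div θ hx hy
  rw [mul_div_assoc', le_div_iff₀ (by positivity)]
  linarith

lemma sin_mul_div_add_le_Theta (hθ : 0 < θ) (hθπ : θ < Real.pi) (hx : 0 < x) (hy : 0 < y) :
    Real.sin θ * (y / (x + y)) ≤ Theta θ x y := by
  have hsin : 0 < Real.sin θ := Real.sin_pos_of_pos_of_lt_pi hθ hθπ
  have hnorm : 0 < ‖(x : ℂ) + (y : ℂ) * Complex.exp (θ * Complex.I)‖ :=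
    (abs_pos.2 (by positivity)).trans_le (abs_mul_sin_le_norm_add_mul_exp θ x y)
  calc Real.sin θ * (y / (x + y)) = y * Real.sin θ / (x + y) := by ring
    _ ≤ y * Real.sin θ / ‖(x : ℂ) + (y : ℂ) * Complex.exp (θ * Complex.I)‖ := by
      gcongr
      exact norm_add_mul_exp_le θ hx.le hy.le
    _ = Real.sin (Theta θ x y) := (sin_Theta θ x y).symm
    _ ≤ Theta θ x y := Real.sin_le (Theta_nonneg_s10 hθ hθπ hy.le)

lemma continuousOn_Theta_right (hθ : 0 < θ) (hθπ : θ < Real.pi) (hx : 0 < x) :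
    ContinuousOn (Theta θ x) (Set.Ici 0) := by
  intro y hy
  have hslit : (x : ℂ) + (y : ℂ) * Complex.exp (θ * Complex.I) ∈ Complex.slitPlane := by
    rw [Complex.mem_slitPlane_iff, re_add_mul_exp, im_add_mul_exp]
    rcases (Set.mem_Ici.1 hy).eq_or_lt with rfl | hy
    · simp [hx]
    · exact .inr (mul_pos hy (Real.sin_pos_of_pos_of_lt_pi hθ hθπ)).ne'
  exact ContinuousAt.continuousWithinAt <|
    (Complex.continuousAt_arg hslit).comp
      (f := fun y : ℝ => (x : ℂ) + (y : ℂ) * Complex.exp (θ * Complex.I)) (by fun_prop)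

end Theta

section ThetaSum

variable {ι : Type*} {θ : ℝ}

lemma summable_Theta_of_summable_inv (θ : ℝ) {x : ι → ℝ} (hx : ∀ k, 0 < x k) {y : ℝ} (hy : 0 ≤ y)
    (h : Summable fun k => (x k)⁻¹) : Summable fun k => Theta θ (x k) y :=
  .of_norm_bounded ((h.mul_left y).mul_left Real.pi) fun k =>
    abs_Theta_le_pi_mul_div θ (hx k) hy

lemma summable_Theta_iff (hθ : 0 < θ) (hθπ : θ < Real.pi) {x : ι → ℝ} (hx : ∀ k, 0 < x k) {y : ℝ}
    (hy : 0 < y) : Summable (fun k => Theta θ (x k) y) ↔ Summable fun k => (x k)⁻¹ := by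
  refine ⟨fun h => ?_, summable_Theta_of_summable_inv θ hx hy.le⟩
  have hsin : 0 < Real.sin θ := Real.sin_pos_of_pos_of_lt_pi hθ hθπ
  have hbound : Summable fun k => Real.sin θ * (y / (x k + y)) :=
    h.of_nonneg_of_le (fun k => by have := hx k; positivity)
      fun k => sin_mul_div_add_le_Theta hθ hθπ (hx k) hy
  simp only [div_eq_mul_inv] at hbound
  rwa [summable_mul_left_iff hsin.ne', summable_mul_left_iff hy.ne',
    summable_inv_add_const_iff hx hy] at hbound

lemma card_mul_sin_div_two_le_of_hasSum_Theta (hθ : 0 < θ) (hθπ : θ < Real.pi) {x : ι → ℝ}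
    (hx : ∀ k, 0 < x k) {y q : ℝ} (hy : 0 < y) (h : HasSum (fun k => Theta θ (x k) y) q)
    (s : Finset ι) (hs : ∀ k ∈ s, x k ≤ y) : s.card * (Real.sin θ / 2) ≤ q := by
  have hsin : 0 < Real.sin θ := Real.sin_pos_of_pos_of_lt_pi hθ hθπ
  have half_sin_le (k : ι) (hk : k ∈ s) : Real.sin θ / 2 ≤ Theta θ (x k) y := by
    have hxk := hx k
    have hhalf : 1 / 2 ≤ y / (x k + y) := by
      rw [div_le_div_iff₀ (by norm_num) (by positivity)]
      linarith [hs k hk]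
    calc Real.sin θ / 2 = Real.sin θ * (1 / 2) := by ring
      _ ≤ Real.sin θ * (y / (x k + y)) := by gcongr
      _ ≤ Theta θ (x k) y := sin_mul_div_add_le_Theta hθ hθπ hxk hy
  calc s.card * (Real.sin θ / 2) = ∑ _k ∈ s, Real.sin θ / 2 := by simp
    _ ≤ ∑ k ∈ s, Theta θ (x k) y := Finset.sum_le_sum half_sin_le
    _ ≤ q := sum_le_hasSum s (fun _ _ => Theta_nonneg_s10 hθ hθπ hy.le) h

lemma exists_pos_hasSum_Theta [Infinite ι] (hθ : 0 < θ) (hθπ : θ < Real.pi) {x : ι → ℝ}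
    (hx : ∀ k, 0 < x k) (hsum : Summable fun k => (x k)⁻¹) {q : ℝ} (hq : 0 < q) :
    ∃ y, 0 < y ∧ HasSum (fun k => Theta θ (x k) y) q := by
  have hsin : 0 < Real.sin θ := Real.sin_pos_of_pos_of_lt_pi hθ hθπ
  have hasSum (y : ℝ) (hy : 0 ≤ y) :
      HasSum (fun k => Theta θ (x k) y) (∑' k, Theta θ (x k) y) :=
    (summable_Theta_of_summable_inv θ hx hy hsum).hasSum
  obtain ⟨N, hN⟩ := exists_nat_ge (q / (Real.sin θ / 2))
  obtain ⟨s, rfl⟩ := Infinite.exists_subset_card_eq ι N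
  obtain ⟨R, hR⟩ : ∃ R, 0 < R ∧ ∀ k ∈ s, x k ≤ R :=
    ⟨1 + ∑ k ∈ s, x k, add_pos_of_pos_of_nonneg one_pos (Finset.sum_nonneg fun k _ => (hx k).le),
      fun k hk => by linarith [Finset.single_le_sum (fun i _ => (hx i).le) hk]⟩
  have tsum_zero_right : ∑' k, Theta θ (x k) 0 = 0 := by
    simp [Theta, Complex.arg_ofReal_of_nonneg, (hx _).le]
  have le_tsum_R : q ≤ ∑' k, Theta θ (x k) R :=
    ((div_le_iff₀ (by positivity)).1 hN).trans <|
      card_mul_sin_div_two_le_of_hasSum_Theta hθ hθπ hx hR.1 (hasSum R hR.1.le) s hR.2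
  have hcont : ContinuousOn (fun y => ∑' k, Theta θ (x k) y) (Set.Icc 0 R) := by
    refine continuousOn_tsum
      (fun k => (continuousOn_Theta_right hθ hθπ (hx k)).mono Set.Icc_subset_Ici_self)
      ((hsum.mul_left R).mul_left Real.pi) fun k y hy => ?_
    refine (abs_Theta_le_pi_mul_div θ (hx k) hy.1).trans ?_
    rw [div_eq_mul_inv]
    have := hx k
    gcongr
    exact hy.2
  obtain ⟨y, hy, rfl⟩ :=
    intermediate_value_Icc hR.1.le hcont ⟨tsum_zero_right.trans_le hq.le, le_tsum_R⟩
  refine ⟨y, hy.1.lt_of_ne' ?_, hasSum y hy.1⟩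
  rintro rfl
  exact hq.ne' tsum_zero_right

end ThetaSum

section Growth

variable {θ α : ℝ}

lemma lt_mul_rpow_of_hasSum_Theta (hθ : 0 < θ) (hθπ : θ < Real.pi) (hα : 0 ≤ α) {x : ℕ → ℝ}
    (hx : ∀ k, 0 < x k) {b : ℝ} (hb : 0 ≤ b) (hxb : ∀ k, x k ≤ b * ((k + 1 : ℕ) : ℝ) ^ α) {y q : ℝ}
    (hy : 0 < y) (h : HasSum (fun k => Theta θ (x k) y) q) {n : ℕ}
    (hn : q < n * (Real.sin θ / 2)) : y < b * (n : ℝ) ^ α := by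
  contrapose! hn
  refine (Finset.card_range n).symm ▸
    card_mul_sin_div_two_le_of_hasSum_Theta hθ hθπ hx hy h (Finset.range n) fun k hk => ?_
  refine (hxb k).trans (le_trans ?_ hn)
  gcongr
  exact Finset.mem_range.1 hk

/-- The factor in the bound `∑ k, Theta θ (x k) y ≤ n * thetaSumConst α`, valid when
`x k ≥ a * k ^ α` and `y ≤ a * n ^ α` with `α > 1`. -/
noncomputable def thetaSumConst (α : ℝ) : ℝ :=
  ∑' m : ℕ, 2 * Real.pi * ((m : ℝ) ^ α + 1)⁻¹

lemma thetaSumConst_pos (hα : 1 < α) : 0 < thetaSumConst α :=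
  have := Real.pi_pos
  ((summable_inv_rpow_add_one hα).mul_left _).tsum_pos (fun m => by positivity) 0 (by positivity)

-- If `k / n = m`, then `x k ≥ y * m ^ α`, so each residue class mod `n` contributes at most
-- `thetaSumConst α`.
lemma le_mul_thetaSumConst_of_hasSum_Theta (hα : 1 < α) (θ : ℝ) {x : ℕ → ℝ} (hx : ∀ k, 0 < x k)
    {a : ℝ} (ha : 0 < a) (hxa : ∀ k : ℕ, a * (k : ℝ) ^ α ≤ x k) {y q : ℝ} (hy : 0 < y)
    (h : HasSum (fun k => Theta θ (x k) y) q) (n : ℕ) [NeZero n] (hyn : y ≤ a * (n : ℝ) ^ α) :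
    q ≤ n * thetaSumConst α := by
  have := Real.pi_pos
  rw [← h.tsum_eq]
  refine tsum_le_mul_tsum_of_le_comp_div h.summable
    ((summable_inv_rpow_add_one hα).mul_left _) n fun k => ?_
  have hxk : y * ((k / n : ℕ) : ℝ) ^ α ≤ x k :=
    calc y * ((k / n : ℕ) : ℝ) ^ α ≤ a * (n : ℝ) ^ α * ((k / n : ℕ) : ℝ) ^ α := by gcongr
      _ = a * (n * (k / n : ℕ) : ℝ) ^ α := by
        rw [mul_assoc, Real.mul_rpow (by positivity) (by positivity)]
      _ ≤ a * (k : ℝ) ^ α := by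
        gcongr
        exact_mod_cast Nat.mul_div_le k n
      _ ≤ x k := hxa k
  calc Theta θ (x k) y ≤ 2 * Real.pi * (y / (x k + y)) :=
        (le_abs_self _).trans (abs_Theta_le_two_pi_mul_div_add θ (hx k) hy.le)
    _ ≤ 2 * Real.pi * (y / (y * ((k / n : ℕ) : ℝ) ^ α + y)) := by gcongr
    _ = 2 * Real.pi * (((k / n : ℕ) : ℝ) ^ α + 1)⁻¹ := by field_simp

lemma mul_rpow_lt_of_hasSum_Theta (hα : 1 < α) (θ : ℝ) {x : ℕ → ℝ} (hx : ∀ k, 0 < x k) {a : ℝ}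
    (ha : 0 < a) (hxa : ∀ k : ℕ, a * (k : ℝ) ^ α ≤ x k) {y q : ℝ} (hy : 0 < y)
    (h : HasSum (fun k => Theta θ (x k) y) q) {n : ℕ} (hn : n * thetaSumConst α < q) :
    a * (n : ℝ) ^ α < y := by
  rcases eq_or_ne n 0 with rfl | hn0
  · simpa [Real.zero_rpow (zero_lt_one.trans hα).ne'] using hy
  · have : NeZero n := ⟨hn0⟩
    contrapose! hn
    exact le_mul_thetaSumConst_of_hasSum_Theta hα θ hx ha hxa hy h n hn

variable {ι : Type*} {l : Filter ι} {X : ℕ → ℝ} {y q : ι → ℝ}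

lemma isBigO_rpow_of_hasSum_Theta (hθ : 0 < θ) (hθπ : θ < Real.pi) (hα : 0 ≤ α)
    (hX : ∀ k, 1 ≤ k → 0 < X k) (hXO : X =O[atTop] fun k : ℕ => (k : ℝ) ^ α)
    (hq : Tendsto q l atTop) (hy : ∀ᶠ j in l, 0 < y j)
    (h : ∀ᶠ j in l, HasSum (fun k => Theta θ (X (k + 1)) (y j)) (q j)) :
    y =O[l] fun j => q j ^ α := by
  obtain ⟨b, hb, hXb⟩ := bound_of_isBigO_nat_atTop hXO
  have hX' (k : ℕ) : 0 < X (k + 1) := hX _ k.succ_pos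
  have hXb' (k : ℕ) : X (k + 1) ≤ b * ((k + 1 : ℕ) : ℝ) ^ α := by
    have hk : 0 < ((k + 1 : ℕ) : ℝ) ^ α := by positivity
    simpa only [Real.norm_of_nonneg (hX' k).le, Real.norm_of_nonneg hk.le] using hXb hk.ne'
  set s := Real.sin θ / 2
  have hs : 0 < s := half_pos (Real.sin_pos_of_pos_of_lt_pi hθ hθπ)
  refine .of_bound (b * (2 / s) ^ α) ?_
  filter_upwards [hq.eventually_ge_atTop s, hy, h] with j hqj hyj hj
  have hqpos : 0 < q j := hs.trans_le hqj
  have hq_lt : q j < (⌊q j / s⌋₊ + 1 : ℕ) * s := by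
    rw [← div_lt_iff₀ hs]
    exact_mod_cast Nat.lt_floor_add_one (q j / s)
  have hn_le : ((⌊q j / s⌋₊ + 1 : ℕ) : ℝ) ≤ 2 / s * q j := by
    have h1 : 1 ≤ q j / s := (one_le_div hs).2 hqj
    have h2 : (⌊q j / s⌋₊ : ℝ) ≤ q j / s := Nat.floor_le (by positivity)
    push_cast
    linarith [show 2 / s * q j = 2 * (q j / s) by ring]
  rw [Real.norm_of_nonneg hyj.le, Real.norm_of_nonneg (by positivity)]
  calc y j ≤ b * ((⌊q j / s⌋₊ + 1 : ℕ) : ℝ) ^ α :=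
        (lt_mul_rpow_of_hasSum_Theta hθ hθπ hα hX' hb.le hXb' hyj hj hq_lt).le
    _ ≤ b * (2 / s * q j) ^ α := by gcongr
    _ = b * (2 / s) ^ α * q j ^ α := by rw [Real.mul_rpow (by positivity) hqpos.le, mul_assoc]

lemma rpow_isBigO_of_hasSum_Theta (hα : 1 < α) (θ : ℝ) (hX : ∀ k, 1 ≤ k → 0 < X k)
    (hXO : (fun k : ℕ => (k : ℝ) ^ α) =O[atTop] X) (hq : Tendsto q l atTop)
    (hy : ∀ᶠ j in l, 0 < y j)
    (h : ∀ᶠ j in l, HasSum (fun k => Theta θ (X (k + 1)) (y j)) (q j)) :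
    (fun j => q j ^ α) =O[l] y := by
  obtain ⟨C, hC, hXC⟩ := bound_of_isBigO_nat_atTop hXO
  have hX' (k : ℕ) : 0 < X (k + 1) := hX _ k.succ_pos
  have hXC' (k : ℕ) : C⁻¹ * (k : ℝ) ^ α ≤ X (k + 1) := by
    rw [inv_mul_le_iff₀ hC]
    calc (k : ℝ) ^ α ≤ ((k + 1 : ℕ) : ℝ) ^ α := by gcongr; exact k.le_succ
      _ ≤ ‖((k + 1 : ℕ) : ℝ) ^ α‖ := Real.le_norm_self _
      _ ≤ C * X (k + 1) := by
        simpa only [Real.norm_of_nonneg (hX' k).le] using hXC (hX' k).ne'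
  set H := thetaSumConst α
  have hH : 0 < H := thetaSumConst_pos hα
  refine .of_bound ((4 * H) ^ α * C) ?_
  filter_upwards [hq.eventually_ge_atTop (4 * H), hy, h] with j hqj hyj hj
  have hqpos : 0 < q j := by linarith
  set n := ⌊q j / (2 * H)⌋₊
  have hn_lt : n * H < q j := by
    have := (le_div_iff₀ (by positivity)).1 (Nat.floor_le (a := q j / (2 * H)) (by positivity))
    linarith
  have hq_le : q j ≤ 4 * H * n := by
    have := (div_lt_iff₀ (by positivity)).1 (Nat.lt_floor_add_one (q j / (2 * H)))
    linarith
  rw [Real.norm_of_nonneg (by positivity), Real.norm_of_nonneg hyj.le]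
  calc q j ^ α ≤ (4 * H * n) ^ α := by gcongr
    _ = (4 * H) ^ α * C * (C⁻¹ * (n : ℝ) ^ α) := by
      rw [Real.mul_rpow (by positivity) (by positivity)]
      field_simp
    _ ≤ (4 * H) ^ α * C * y j := by
      gcongr
      exact (mul_rpow_lt_of_hasSum_Theta hα θ hX' (inv_pos.2 hC) hXC' hyj hj hn_lt).le

theorem isTheta_rpow_of_hasSum_Theta (hθ : 0 < θ) (hθπ : θ < Real.pi) (hα : 1 < α)
    (hX : ∀ k, 1 ≤ k → 0 < X k) (hXΘ : X =Θ[atTop] fun k : ℕ => (k : ℝ) ^ α)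
    (hq : Tendsto q l atTop) (hy : ∀ᶠ j in l, 0 < y j)
    (h : ∀ᶠ j in l, HasSum (fun k => Theta θ (X (k + 1)) (y j)) (q j)) :
    y =Θ[l] fun j => q j ^ α :=
  ⟨isBigO_rpow_of_hasSum_Theta hθ hθπ (zero_le_one.trans hα.le) hX hXΘ.isBigO hq hy h,
    rpow_isBigO_of_hasSum_Theta hα θ hX hXΘ.isBigO_symm hq hy h⟩

end Growth

section Phi

lemma tsum_ofReal_eq_top_iff_not_summable {ι : Type*} {f : ι → ℝ} (hf : ∀ i, 0 ≤ f i) :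
    ∑' i, ENNReal.ofReal (f i) = ⊤ ↔ ¬ Summable f := by
  refine ⟨fun htop h => h.tsum_ofReal_ne_top htop, fun h => by_contra fun htop => h ?_⟩
  simpa only [ENNReal.toReal_ofReal (hf _)] using ENNReal.summable_toReal htop

variable {θ : ℝ} {X Y : ℕ → ℝ} {j : ℕ}

lemma phi_eq_top_iff_not_summable (hθ : 0 < θ) (hθπ : θ < Real.pi) (hYj : 0 ≤ Y j) :
    phi θ X Y j = ⊤ ↔ ¬ Summable fun k => Theta θ (X (k + 1)) (Y j) := by
  rw [← tsum_ofReal_eq_top_iff_not_summable fun _ => Theta_nonneg_s10 hθ hθπ hYj, phi,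
    ENNReal.mul_eq_top]
  simp [Real.pi_pos]

lemma phi_eq_ofReal_iff_hasSum (hθ : 0 < θ) (hθπ : θ < Real.pi) (hYj : 0 ≤ Y j) {q : ℝ}
    (hq : 0 ≤ q) : phi θ X Y j = ENNReal.ofReal q ↔
      HasSum (fun k => Theta θ (X (k + 1)) (Y j)) (Real.pi * q) := by
  have hpi := Real.pi_pos
  have hnonneg (k : ℕ) : 0 ≤ Theta θ (X (k + 1)) (Y j) := Theta_nonneg_s10 hθ hθπ hYj
  by_cases hsum : Summable fun k => Theta θ (X (k + 1)) (Y j)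
  · rw [hsum.hasSum_iff, phi, ← ENNReal.ofReal_tsum_of_nonneg hnonneg hsum,
      ← ENNReal.ofReal_mul (by positivity),
      ENNReal.ofReal_eq_ofReal_iff (mul_nonneg (by positivity) (tsum_nonneg hnonneg)) hq,
      one_div, inv_mul_eq_iff_eq_mul₀ hpi.ne']
  · rw [(phi_eq_top_iff_not_summable hθ hθπ hYj).2 hsum]
    exact ⟨fun h => (ENNReal.ofReal_ne_top h.symm).elim, fun h => (hsum h.summable).elim⟩

lemma phi_eq_top_iff_not_summable_inv (hθ : 0 < θ) (hθπ : θ < Real.pi)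
    (hX : ∀ k, 1 ≤ k → 0 < X k) (hYj : 0 < Y j) :
    phi θ X Y j = ⊤ ↔ ¬ Summable fun k => (X k)⁻¹ := by
  rw [phi_eq_top_iff_not_summable hθ hθπ hYj.le,
    summable_Theta_iff hθ hθπ (fun k => hX (k + 1) k.succ_pos) hYj,
    summable_nat_add_iff 1 (f := fun k => (X k)⁻¹)]

theorem exists_pos_phi_eq_ofReal (hθ : 0 < θ) (hθπ : θ < Real.pi) (hX : ∀ k, 1 ≤ k → 0 < X k)
    (hsum : Summable fun k => (X k)⁻¹) {Q : ℕ → ℝ} (hQ : ∀ j, 1 ≤ j → 0 < Q j) :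
    ∃ Y : ℕ → ℝ, (∀ j, 1 ≤ j → 0 < Y j) ∧
      ∀ j, 1 ≤ j → phi θ X Y j = ENNReal.ofReal (Q j) := by
  have exists_value (j : ℕ) (hj : 1 ≤ j) :=
    exists_pos_hasSum_Theta hθ hθπ (fun k => hX (k + 1) k.succ_pos)
      ((summable_nat_add_iff 1).2 hsum) (mul_pos Real.pi_pos (hQ j hj))
  choose! Y hY hYsum using exists_value
  exact ⟨Y, hY, fun j hj =>
    (phi_eq_ofReal_iff_hasSum hθ hθπ (hY j hj).le (hQ j hj).le).2 (hYsum j hj)⟩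

theorem isTheta_rpow_of_phi_eq_ofReal {α : ℝ} (hθ : 0 < θ) (hθπ : θ < Real.pi) (hα : 1 < α)
    (hX : ∀ k, 1 ≤ k → 0 < X k) (hXΘ : X =Θ[atTop] fun k : ℕ => (k : ℝ) ^ α) {Q : ℕ → ℝ}
    (hQ : Tendsto Q atTop atTop) (hY : ∀ j, 1 ≤ j → 0 < Y j)
    (hφ : ∀ j, 1 ≤ j → phi θ X Y j = ENNReal.ofReal (Q j)) :
    Y =Θ[atTop] fun j => Q j ^ α := by
  have hQ0 : ∀ᶠ j in atTop, 0 ≤ Q j := hQ.eventually_ge_atTop 0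
  have hYΘ : Y =Θ[atTop] fun j => (Real.pi * Q j) ^ α := by
    refine isTheta_rpow_of_hasSum_Theta hθ hθπ hα hX hXΘ (hQ.const_mul_atTop Real.pi_pos)
      ((eventually_ge_atTop 1).mono hY) ?_
    filter_upwards [eventually_ge_atTop 1, hQ0] with j hj hQj
    exact (phi_eq_ofReal_iff_hasSum hθ hθπ (hY j hj).le hQj).1 (hφ j hj)
  exact hYΘ.trans <| IsTheta.rpow (hQ0.mono fun _ => mul_nonneg Real.pi_pos.le) hQ0 <|
    (isTheta_refl Q atTop).const_mul_left Real.pi_pos.ne'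

end Phi

theorem stmt_10_general (θ : ℝ) (hθ : 0 < θ) (hθπ : θ < Real.pi)
    (Q R : ℕ → ℝ) (hQpos : ∀ k, 1 ≤ k → 0 < Q k) (hQR : Q =Θ[atTop] R)
    (hR : Tendsto R atTop atTop) :
    (∀ α : ℝ, 1 < α → ∀ X : ℕ → ℝ, (∀ k, 1 ≤ k → 0 < X k) →
      ((fun k : ℕ => Real.log (X k) - α * Real.log k) =O[atTop] fun _ : ℕ => (1 : ℝ)) →
      (∃ Y : ℕ → ℝ, (∀ j, 1 ≤ j → 0 < Y j) ∧
        ∀ j, 1 ≤ j → phi θ X Y j = ENNReal.ofReal (Q j)) ∧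
      (∀ Y : ℕ → ℝ, (∀ j, 1 ≤ j → 0 < Y j) →
        (∀ j, 1 ≤ j → phi θ X Y j = ENNReal.ofReal (Q j)) →
        (fun j : ℕ => Real.log (Y j) - α * Real.log (R j)) =O[atTop] fun _ : ℕ => (1 : ℝ))) ∧
    (∀ α : ℝ, α ≤ 1 → ∀ X : ℕ → ℝ, (∀ k, 1 ≤ k → 0 < X k) →
      ((fun k : ℕ => Real.log (X k) - α * Real.log k) =O[atTop] fun _ : ℕ => (1 : ℝ)) →
      (∀ Y : ℕ → ℝ, (∀ j, 1 ≤ j → 0 < Y j) → ∀ j, 1 ≤ j → phi θ X Y j = ⊤) ∧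
      ¬ ∃ Y : ℕ → ℝ, (∀ j, 1 ≤ j → 0 < Y j) ∧
        ∀ j, 1 ≤ j → phi θ X Y j = ENNReal.ofReal (Q j)) := by
  have eventually_pos {Z : ℕ → ℝ} (hZ : ∀ k, 1 ≤ k → 0 < Z k) : ∀ᶠ k in atTop, 0 < Z k :=
    (eventually_ge_atTop 1).mono hZ
  have hcast : ∀ᶠ k : ℕ in atTop, (0 : ℝ) < k := eventually_pos fun k hk => Nat.cast_pos.2 hk
  have hRpos : ∀ᶠ j in atTop, 0 < R j := hR.eventually_gt_atTop 0
  have hQ : Tendsto Q atTop atTop :=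
    (hQR.tendsto_norm_atTop_iff.2 (tendsto_norm_atTop_atTop.comp hR)).congr' <|
      (eventually_pos hQpos).mono fun _ h => Real.norm_of_nonneg h.le
  refine ⟨fun α hα X hX hXlog => ?_, fun α hα X hX hXlog => ?_⟩ <;>
    have hXΘ := (isTheta_rpow_iff_isBigO_log_sub_mul_log (eventually_pos hX) hcast).2 hXlog
  · have hsum := (summable_inv_iff_one_lt_of_isTheta_rpow hXΘ).2 hα
    refine ⟨exists_pos_phi_eq_ofReal hθ hθπ hX hsum hQpos, fun Y hY hφ => ?_⟩
    exact (isTheta_rpow_iff_isBigO_log_sub_mul_log (eventually_pos hY) hRpos).1 <|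
      (isTheta_rpow_of_phi_eq_ofReal hθ hθπ hα hX hXΘ hQ hY hφ).trans <|
        hQR.rpow ((eventually_pos hQpos).mono fun _ => le_of_lt) (hRpos.mono fun _ => le_of_lt)
  · have hsum := (summable_inv_iff_one_lt_of_isTheta_rpow hXΘ).not.2 hα.not_gt
    have hphi (Y : ℕ → ℝ) (hY : ∀ j, 1 ≤ j → 0 < Y j) (j : ℕ) (hj : 1 ≤ j) : phi θ X Y j = ⊤ :=
      (phi_eq_top_iff_not_summable_inv hθ hθπ hX (hY j hj)).2 hsum
    refine ⟨hphi, fun ⟨Y, hY, hφ⟩ => ENNReal.ofReal_ne_top (r := Q 1) ?_⟩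
    rw [← hφ 1 le_rfl, hphi Y hY 1 le_rfl]

theorem stmt_10 (θ : ℝ) (hθ : 0 < θ) (hθπ : θ < Real.pi)
    (Q : ℕ → ℝ) (hQpos : ∀ k, 1 ≤ k → 0 < Q k)
    (hQ : (fun k : ℕ => Q k - (k : ℝ)) =O[atTop] fun _ : ℕ => (1 : ℝ)) :
    (∀ α : ℝ, 1 < α → ∀ X : ℕ → ℝ, (∀ k, 1 ≤ k → 0 < X k) →
      ((fun k : ℕ => Real.log (X k) - α * Real.log k) =O[atTop] fun _ : ℕ => (1 : ℝ)) →
      (∃ Y : ℕ → ℝ, (∀ j, 1 ≤ j → 0 < Y j) ∧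
        ∀ j, 1 ≤ j → phi θ X Y j = ENNReal.ofReal (Q j)) ∧
      (∀ Y : ℕ → ℝ, (∀ j, 1 ≤ j → 0 < Y j) →
        (∀ j, 1 ≤ j → phi θ X Y j = ENNReal.ofReal (Q j)) →
        (fun j : ℕ => Real.log (Y j) - α * Real.log j) =O[atTop] fun _ : ℕ => (1 : ℝ))) ∧
    (∀ α : ℝ, 0 < α → α ≤ 1 → ∀ X : ℕ → ℝ, (∀ k, 1 ≤ k → 0 < X k) →
      ((fun k : ℕ => Real.log (X k) - α * Real.log k) =O[atTop] fun _ : ℕ => (1 : ℝ)) →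
      (∀ Y : ℕ → ℝ, (∀ j, 1 ≤ j → 0 < Y j) → ∀ j, 1 ≤ j → phi θ X Y j = ⊤) ∧
      ¬ ∃ Y : ℕ → ℝ, (∀ j, 1 ≤ j → 0 < Y j) ∧
        ∀ j, 1 ≤ j → phi θ X Y j = ENNReal.ofReal (Q j)) := by
  have h := stmt_10_general θ hθ hθπ Q (fun k => k) hQpos (isTheta_natCast_of_isBigO_sub hQ)
    tendsto_natCast_atTop_atTop
  exact ⟨h.1, fun α _ => h.2 α⟩
end
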